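/- arXiv:2503.22094 — 5 statements merged into one kernel-verified Lean document; each statement's English description precedes it below -/
import Mathlib

section
/- (Alon–Boppana) Let d ≥ 2 be a fixed integer. For every ε > 0 there exists n₀ such that every d-regular graph G on n ≥ n₀ vertices satisfies λ(G) ≥ 2√(d−1) − ε, where λ(G) = max{|λ₂|,|λₙ|} for the adjacency eigenvalues λ₁ ≥ λ₂ ≥ ⋯ ≥ λₙ of G. -/
/-!
The proof is the trace method. Since `adjM G ^ k` counts walks of length `k`, its diagonal entries
are at least the number of closed walks of length `k` at the root of a rooted tree in which every
vertex has `q = d - 1` children (a subtree of the universal cover of `G`). The count for the tree is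
`treeWalks q k 0`, and the comparison `treeWalks_le_adjM_pow` is a one-step induction: a vertex
joined to `r` by a walk of length `m + 1` has a neighbour joined to `r` by one of length `m`, and all
its other `q` neighbours are joined to `r` by one of length `m + 2`.

For `k = 2 * j` the tree count is `q ^ j` times the `j`-th Catalan number, so it is at least
`(4 * q) ^ j / (2 * j * (j + 1))` (`four_mul_pow_le_treeWalks`). On the other side the trace of
`adjM G ^ (2 * j)` is the sum of the `2 * j`-th powers of the eigenvalues, at most
`d ^ (2 * j) + n * λ ^ (2 * j)`. If `λ < a := 2 √q - ε`, where `a > 0` because `λ ≥ 0`,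
choose `j`, depending only on `d` and `ε`, such that `a ^ (2 * j)` is at most half of
`(4 * q) ^ j / (2 * j * (j + 1))`; then `n` is bounded.
-/

open Classical in
/-- The real adjacency matrix of a graph on `Fin n`. -/
noncomputable def adjM {n : ℕ} (G : SimpleGraph (Fin n)) : Matrix (Fin n) (Fin n) ℝ :=
  Matrix.of fun i j => if G.Adj i j then 1 else 0

lemma adjM_isHermitian {n : ℕ} (G : SimpleGraph (Fin n)) : (adjM G).IsHermitian := by
  show (adjM G).conjTranspose = adjM G
  ext i j
  simp only [adjM, Matrix.conjTranspose_apply, Matrix.of_apply, apply_ite, star_one, star_zero]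
  rw [G.adj_comm j i]
  split <;> simp_all

/-- The eigenvalues (with multiplicity, unordered) of the adjacency matrix of `G`. -/
noncomputable def eigs {n : ℕ} (G : SimpleGraph (Fin n)) : Fin n → ℝ :=
  (adjM_isHermitian G).eigenvalues

/-- `μ` lists the adjacency eigenvalues of `G` in nonincreasing order
`λ₁ ≥ λ₂ ≥ ⋯ ≥ λₙ`. -/
def IsDescSpectrum {n : ℕ} (G : SimpleGraph (Fin n)) (μ : Fin n → ℝ) : Prop :=
  Antitone μ ∧ ∃ σ : Equiv.Perm (Fin n), μ = eigs G ∘ σ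

/-- Given the nonincreasing eigenvalue list `μ = (λ₁, λ₂, …, λₙ)`, this is
`λ = max {|λ_i| : 2 ≤ i ≤ n} = max {|λ₂|, |λₙ|}`. -/
noncomputable def lamOf {n : ℕ} (μ : Fin n → ℝ) : ℝ :=
  sSup {x : ℝ | ∃ i : Fin n, i.val ≠ 0 ∧ x = |μ i|}

/-- `G` is `d`-regular: every vertex has exactly `d` neighbours. -/
def IsReg {n : ℕ} (G : SimpleGraph (Fin n)) (d : ℕ) : Prop :=
  ∀ v : Fin n, {u : Fin n | G.Adj v u}.ncard = d

/-- `G` is an `(n,d,λ)`-graph: an `n`-vertex `d`-regular graph whose adjacency eigenvalues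
`λ₁ ≥ λ₂ ≥ ⋯ ≥ λₙ` satisfy `max {|λ₂|, |λₙ|} = lam`. -/
def IsNDL {n : ℕ} (G : SimpleGraph (Fin n)) (d : ℕ) (lam : ℝ) : Prop :=
  IsReg G d ∧ ∀ μ : Fin n → ℝ, IsDescSpectrum G μ → lamOf μ = lam

/-! ### Walks in the tree -/

/-- The number of walks of length `k` from a vertex at depth `m` to the root, in the infinite rooted
tree where every vertex has `q` children. -/
def treeWalks (q : ℕ) : ℕ → ℕ → ℕ
  | 0, 0 => 1
  | 0, _ + 1 => 0
  | k + 1, 0 => q * treeWalks q k 1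
  | k + 1, m + 1 => treeWalks q k m + q * treeWalks q k (m + 2)

lemma one_le_treeWalks_self (q m : ℕ) : 1 ≤ treeWalks q m m := by
  induction m with
  | zero => simp [treeWalks]
  | succ m ih => rw [treeWalks]; omega

/-- The ballot numbers: a walk of length `m + 2 * (j + 1)` from depth `m` to the root makes `j + 1`
steps away from the root, each with `q` choices. The inequality is in fact an equality. -/
lemma ballot_le_treeWalks (q k : ℕ) : ∀ m j : ℕ, k = m + 2 * j + 2 →
    q ^ (j + 1) * k.choose (j + 1) ≤ treeWalks q k m + q ^ (j + 1) * k.choose j := by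
  induction k with
  | zero => intro m j h; omega
  | succ k ih =>
    intro m j h
    -- The walks whose first step goes to a child.
    have child : ∀ m' : ℕ, k = m' + 2 * j →
        q ^ (j + 1) * k.choose j + q ^ (j + 1) * k.choose j ≤
          q * treeWalks q k m' + q ^ (j + 1) * (k + 1).choose j := by
      intro m' h'
      cases j with
      | zero =>
        obtain rfl : k = m' := by omega
        have := Nat.mul_le_mul_left q (one_le_treeWalks_self q k)
        simp
        omega
      | succ i =>
        have h1 := Nat.mul_le_mul_left q (ih m' i (by omega))
        have h2 : (k + 1).choose (i + 1) = k.choose i + k.choose (i + 1) :=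
          Nat.choose_succ_succ k i
        rw [h2]
        ring_nf at h1 ⊢
        omega
    have hp : (k + 1).choose (j + 1) = k.choose j + k.choose (j + 1) :=
      Nat.choose_succ_succ k j
    rw [hp, Nat.mul_add]
    cases m with
    | zero =>
      rw [treeWalks]
      have h1 := child 1 (by omega)
      have hs : k.choose (j + 1) = k.choose j :=
        Nat.choose_symm_of_eq_add (by omega)
      rw [hs]
      exact h1
    | succ m =>
      rw [treeWalks]
      have h1 := ih m j (by omega)
      have h2 := child (m + 2) (by omega)
      omega

lemma four_mul_pow_le_treeWalks (q j : ℕ) (hj : 1 ≤ j) :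
    (4 * q) ^ j ≤ 2 * j * (j + 1) * treeWalks q (2 * j) 0 := by
  obtain ⟨i, rfl⟩ : ∃ i, j = i + 1 := ⟨j - 1, by omega⟩
  have h1 := ballot_le_treeWalks q (2 * (i + 1)) 0 i (by ring)
  have h2 := Nat.choose_succ_right_eq (2 * (i + 1)) i
  have h3 := Nat.four_pow_le_two_mul_self_mul_centralBinom (i + 1) (by omega)
  rw [Nat.centralBinom] at h3
  rw [show 2 * (i + 1) - i = i + 2 by omega] at h2
  set B := (2 * (i + 1)).choose (i + 1)
  set C := (2 * (i + 1)).choose i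
  set T := treeWalks q (2 * (i + 1)) 0
  set P := q ^ (i + 1)
  -- `(i + 2) * (B - C) = B`, so `T` is at least `P` times a Catalan number.
  have h4 : P * B ≤ (i + 2) * T := by
    have := Nat.mul_le_mul_left (i + 2) h1
    have h5 : (i + 2) * (P * C) = P * (B * (i + 1)) := by rw [h2]; ring
    nlinarith
  calc (4 * q) ^ (i + 1) = 4 ^ (i + 1) * P := mul_pow _ _ _
    _ ≤ 2 * (i + 1) * B * P := Nat.mul_le_mul_right _ h3
    _ = 2 * (i + 1) * (P * B) := by ring
    _ ≤ 2 * (i + 1) * ((i + 2) * T) := Nat.mul_le_mul_left _ h4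
    _ = _ := by ring

/-! ### Comparing a regular graph with the tree -/

lemma adjM_nonneg {n : ℕ} (G : SimpleGraph (Fin n)) (i j : Fin n) : 0 ≤ adjM G i j := by
  simp only [adjM, Matrix.of_apply]
  split <;> simp

open Classical in
lemma card_filter_adj {n d : ℕ} {G : SimpleGraph (Fin n)} (hG : IsReg G d) (x : Fin n) :
    (Finset.univ.filter fun z => G.Adj x z).card = d := by
  rw [← hG x, ← Set.ncard_coe_finset]
  simp

open Classical in
lemma adjM_pow_succ_apply {n : ℕ} (G : SimpleGraph (Fin n)) (k : ℕ) (x r : Fin n) :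
    (adjM G ^ (k + 1)) x r = ∑ z ∈ Finset.univ.filter (fun z => G.Adj x z), (adjM G ^ k) z r := by
  rw [pow_succ', Matrix.mul_apply, Finset.sum_filter]
  simp [adjM]

/-- The walks of length `k` from `x` to `r` are at least as many as in the tree, when the depth of
`x` is taken to be the length of any walk to `r`, not necessarily a shortest one. -/
lemma treeWalks_le_adjM_pow {n q : ℕ} {G : SimpleGraph (Fin n)} (hG : IsReg G (q + 1))
    (r : Fin n) (k : ℕ) : ∀ (m : ℕ) (x : Fin n), (∃ p : G.Walk x r, p.length = m) →
      (treeWalks q k m : ℝ) ≤ (adjM G ^ k) x r := by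
  classical
  induction k with
  | zero =>
    rintro m x ⟨p, hp⟩
    cases m with
    | zero =>
      obtain rfl := p.eq_of_length_eq_zero hp
      simp [treeWalks]
    | succ m =>
      simp only [treeWalks, pow_zero, Matrix.one_apply]
      split <;> simp
  | succ k ih =>
    rintro m x ⟨p, hp⟩
    rw [adjM_pow_succ_apply]
    have hcard := card_filter_adj hG x
    set N := Finset.univ.filter fun z => G.Adj x z with hN
    -- Any neighbour of `x` reaches `r` through `x`.
    have hout : ∀ z ∈ N, (treeWalks q k (m + 1) : ℝ) ≤ (adjM G ^ k) z r := by
      intro z hz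
      have hxz : G.Adj x z := by simpa [hN] using hz
      exact ih (m + 1) z ⟨SimpleGraph.Walk.cons hxz.symm p, by simp [hp]⟩
    cases m with
    | zero =>
      have h1 := Finset.card_nsmul_le_sum N _ _ hout
      rw [hcard, nsmul_eq_mul] at h1
      refine le_trans ?_ h1
      rw [treeWalks]
      push_cast
      gcongr
      linarith
    | succ m =>
      cases p with
      | nil => simp at hp
      | @cons _ y _ hxy p =>
        have hy : y ∈ N := by simpa [hN] using hxy
        have hyr := ih m y ⟨p, by simpa using hp⟩
        have h1 := Finset.card_nsmul_le_sum (N.erase y) _ _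
          fun z hz => hout z (Finset.mem_of_mem_erase hz)
        rw [Finset.card_erase_of_mem hy, hcard, nsmul_eq_mul, Nat.add_sub_cancel] at h1
        rw [← Finset.add_sum_erase N _ hy, treeWalks]
        push_cast
        linarith

/-! ### The trace and the spectrum -/

lemma trace_adjM_pow {n : ℕ} (G : SimpleGraph (Fin n)) (k : ℕ) :
    (adjM G ^ k).trace = ∑ i, eigs G i ^ k := by
  have hA := adjM_isHermitian G
  conv_lhs => rw [hA.spectral_theorem, ← map_pow, Unitary.conjStarAlgAut_apply,
    Matrix.trace_mul_cycle, Unitary.coe_star_mul_self, one_mul, Matrix.diagonal_pow,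
    Matrix.trace_diagonal]
  rfl

/-- By Gershgorin's theorem, as the rows of `adjM G` have zero diagonal and sum to `d`. -/
lemma abs_eigs_le {n d : ℕ} {G : SimpleGraph (Fin n)} (hG : IsReg G d) (i : Fin n) :
    |eigs G i| ≤ d := by
  classical
  have hA := adjM_isHermitian G
  have hev : Module.End.HasEigenvalue (Matrix.toLin' (adjM G)) (eigs G i) := by
    refine Module.End.hasEigenvalue_of_hasEigenvector
      (x := ⇑(hA.eigenvectorBasis i)) ⟨?_, ?_⟩
    · rw [Module.End.mem_eigenspace_iff, Matrix.toLin'_apply]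
      exact hA.mulVec_eigenvectorBasis i
    · intro h
      apply hA.eigenvectorBasis.orthonormal.ne_zero i
      ext t
      exact congrFun h t
  obtain ⟨x, hx⟩ := eigenvalue_mem_ball hev
  have h0 : adjM G x x = 0 := by simp [adjM]
  rw [h0, mem_closedBall_zero_iff, Real.norm_eq_abs] at hx
  refine hx.trans ?_
  have h1 : ∑ j, ‖adjM G x j‖ = d := by
    have := card_filter_adj hG x
    have h2 : ∀ j, ‖adjM G x j‖ = if G.Adj x j then (1 : ℝ) else 0 := by
      intro j
      rw [Real.norm_of_nonneg (adjM_nonneg G x j)]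
      simp [adjM]
    simp only [h2, Finset.sum_boole, this]
  rw [← h1]
  exact Finset.sum_le_sum_of_subset_of_nonneg (Finset.erase_subset _ _) fun _ _ _ => norm_nonneg _

lemma abs_le_lamOf {n : ℕ} (μ : Fin n → ℝ) (i : Fin n) (hi : i.val ≠ 0) : |μ i| ≤ lamOf μ := by
  refine le_csSup (Set.Finite.bddAbove ?_) ⟨i, hi, rfl⟩
  refine (Set.finite_range fun i => |μ i|).subset ?_
  rintro _ ⟨j, -, rfl⟩
  exact ⟨j, rfl⟩

lemma lamOf_nonneg {n : ℕ} (μ : Fin n → ℝ) : 0 ≤ lamOf μ := by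
  apply Real.sSup_nonneg
  rintro _ ⟨j, -, rfl⟩
  exact abs_nonneg _

lemma trace_adjM_pow_le {n d : ℕ} {G : SimpleGraph (Fin n)} (hG : IsReg G d)
    {μ : Fin n → ℝ} (hμ : IsDescSpectrum G μ) (j : ℕ) :
    (adjM G ^ (2 * j)).trace ≤ (d : ℝ) ^ (2 * j) + n * lamOf μ ^ (2 * j) := by
  obtain ⟨-, σ, hσ⟩ := hμ
  have hsum : (adjM G ^ (2 * j)).trace = ∑ i, μ i ^ (2 * j) := by
    rw [trace_adjM_pow, hσ]
    exact (Equiv.sum_comp σ fun i => eigs G i ^ (2 * j)).symm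
  have hl := pow_nonneg (lamOf_nonneg μ) (2 * j)
  rw [hsum]
  cases n with
  | zero => simp
  | succ n =>
    rw [Fin.sum_univ_succ]
    have habs : ∀ i, μ i ^ (2 * j) = |μ i| ^ (2 * j) := fun i =>
      ((even_two_mul j).pow_abs _).symm
    have h0 : μ 0 ^ (2 * j) ≤ (d : ℝ) ^ (2 * j) := by
      rw [habs]
      gcongr
      rw [hσ]
      exact abs_eigs_le hG _
    have h1 : ∑ i : Fin n, μ i.succ ^ (2 * j) ≤ n * lamOf μ ^ (2 * j) := by
      have := Finset.sum_le_card_nsmul Finset.univ (fun i : Fin n => μ i.succ ^ (2 * j))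
        (lamOf μ ^ (2 * j)) (by
          intro i _
          rw [habs]
          gcongr
          exact abs_le_lamOf μ _ (by simp))
      simpa using this
    push_cast
    linarith

lemma mul_treeWalks_le_trace {n q : ℕ} {G : SimpleGraph (Fin n)} (hG : IsReg G (q + 1)) (k : ℕ) :
    n * (treeWalks q k 0 : ℝ) ≤ (adjM G ^ k).trace := by
  have := Finset.card_nsmul_le_sum Finset.univ (fun i => (adjM G ^ k) i i)
    (treeWalks q k 0 : ℝ) fun i _ => treeWalks_le_adjM_pow hG i k 0 i ⟨.nil, rfl⟩
  simpa [Matrix.trace] using this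

/-! ### Choice of the walk length -/

/-- Exponential growth at the rate `b` beats growth at the rate `a < b`, even after division by
`2 * j * (j + 1)`. -/
lemma exists_pow_le_half {a b : ℝ} (ha : 0 ≤ a) (hab : a < b) :
    ∃ j : ℕ, 1 ≤ j ∧ 2 * j * (j + 1) * a ^ j ≤ b ^ j / 2 := by
  have hb : 0 < b := ha.trans_lt hab
  have ht := tendsto_pow_const_mul_const_pow_of_lt_one 2 (div_nonneg ha hb.le)
    ((div_lt_one hb).2 hab)
  obtain ⟨j, hj, hj1⟩ := ((ht.eventually_lt_const (show (0 : ℝ) < 1 / 8 by norm_num)).and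
    (Filter.eventually_ge_atTop 1)).exists
  refine ⟨j, hj1, ?_⟩
  have hbj : 0 < b ^ j := pow_pos hb j
  have haj : 0 ≤ a ^ j := pow_nonneg ha j
  rw [div_pow, ← mul_div_assoc, div_lt_iff₀ hbj] at hj
  have hj' : (1 : ℝ) ≤ j := by exact_mod_cast hj1
  have : 2 * (j : ℝ) * (j + 1) ≤ 4 * j ^ 2 := by nlinarith
  nlinarith [mul_le_mul_of_nonneg_right this haj]

/-- Alon–Boppana: for fixed `d ≥ 2` and every `ε > 0` there is `n₀` such that every
`d`-regular graph on `n ≥ n₀` vertices satisfies `λ(G) ≥ 2√(d−1) − ε`, where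
`λ(G) = max {|λ₂|, |λₙ|}` for the adjacency eigenvalues `λ₁ ≥ λ₂ ≥ ⋯ ≥ λₙ`. -/
theorem alon_boppana (d : ℕ) (hd : 2 ≤ d) :
    ∀ ε : ℝ, 0 < ε → ∃ n₀ : ℕ, ∀ n : ℕ, n₀ ≤ n →
      ∀ G : SimpleGraph (Fin n), IsReg G d →
        ∀ μ : Fin n → ℝ, IsDescSpectrum G μ →
          2 * Real.sqrt ((d : ℝ) - 1) - ε ≤ lamOf μ := by
  intro ε hε
  obtain ⟨q, rfl⟩ : ∃ q, d = q + 1 := ⟨d - 1, by omega⟩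
  have hq : (1 : ℝ) ≤ q := by exact_mod_cast (by omega : 1 ≤ q)
  set a : ℝ := 2 * Real.sqrt (((q + 1 : ℕ) : ℝ) - 1) - ε with ha_def
  rcases le_or_gt a 0 with ha | ha
  · exact ⟨0, fun n _ G _ μ _ => ha.trans (lamOf_nonneg μ)⟩
  have hab : a ^ 2 < 4 * q := by
    have hs : Real.sqrt q ^ 2 = q := Real.sq_sqrt (by linarith)
    have : a < 2 * Real.sqrt q := by
      rw [ha_def]; push_cast; rw [add_sub_cancel_right]; linarith
    nlinarith [Real.sqrt_nonneg (q : ℝ)]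
  obtain ⟨j, hj1, hj⟩ := exists_pow_le_half (sq_nonneg a) hab
  set K : ℝ := 2 * j * (j + 1)
  have hK : 0 ≤ K := by positivity
  set D : ℝ := ((q + 1 : ℕ) : ℝ) ^ (2 * j)
  have hb : (0 : ℝ) < (4 * q) ^ j := by positivity
  obtain ⟨n₀, hn₀⟩ := exists_nat_gt (K * D / ((4 * q) ^ j / 2))
  refine ⟨n₀, fun n hn G hG μ hμ => ?_⟩
  by_contra! hlt
  have hlo := mul_treeWalks_le_trace hG (2 * j)
  have hup := trace_adjM_pow_le hG hμ j
  have hT : ((4 * q : ℝ)) ^ j ≤ K * treeWalks q (2 * j) 0 := by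
    have := four_mul_pow_le_treeWalks q j hj1
    rw [← Nat.cast_le (α := ℝ)] at this
    push_cast at this
    exact this
  have hlam : lamOf μ ^ (2 * j) ≤ (a ^ 2) ^ j := by
    rw [← pow_mul]
    exact pow_le_pow_left₀ (lamOf_nonneg μ) hlt.le _
  have hn' : K * D / ((4 * q) ^ j / 2) < n := hn₀.trans_le (by exact_mod_cast hn)
  rw [div_lt_iff₀ (by positivity)] at hn'
  have hn0 : (0 : ℝ) ≤ n := Nat.cast_nonneg n
  have : (n : ℝ) * (4 * q) ^ j ≤ K * D + n * ((4 * q) ^ j / 2) :=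
    calc (n : ℝ) * (4 * q) ^ j ≤ n * (K * treeWalks q (2 * j) 0) := by gcongr
      _ = K * (n * treeWalks q (2 * j) 0) := by ring
      _ ≤ K * (D + n * lamOf μ ^ (2 * j)) := by gcongr; exact hlo.trans hup
      _ ≤ K * (D + n * (a ^ 2) ^ j) := by gcongr
      _ = K * D + n * (K * (a ^ 2) ^ j) := by ring
      _ ≤ K * D + n * ((4 * q) ^ j / 2) := by gcongr
  linarith
end

section
/- (Expander mixing lemma) Let G be an (n,d,λ)-graph with adjacency eigenvalues λ₁ ≥ λ₂ ≥ ⋯ ≥ λₙ, and let X be a subset of the vertices. Then λₙ·|X| ≤ 2e(X) − (d/n)·|X|² ≤ λ·|X|, where e(X) denotes the number of edges of G with both endpoints in X. -/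
/-- `e(X)`: the number of edges of `G` with both endpoints in `X`. -/
noncomputable def edgesIn {V : Type*} (G : SimpleGraph V) (X : Finset V) : ℕ :=
  {e ∈ G.edgeSet | ∀ v ∈ e, v ∈ X}.ncard

/-- `G` is `(α,m)`-pseudorandom: every vertex subset `X` with `|X| ≥ m` spans at least
`α·C(|X|,2)` edges. -/
def IsPseudorandom {V : Type*} (G : SimpleGraph V) (α : ℝ) (m : ℕ) : Prop :=
  ∀ X : Finset V, m ≤ X.card → α * (X.card.choose 2 : ℝ) ≤ (edgesIn G X : ℝ)

open Matrix in
/-- The vectors of the orthonormal eigenbasis of `adjM G`, as plain functions. -/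
noncomputable def eigVec {n : ℕ} (G : SimpleGraph (Fin n)) (j : Fin n) : Fin n → ℝ :=
  ⇑((adjM_isHermitian G).eigenvectorBasis j)

open Matrix in
/-- Parseval's identity in the eigenbasis. -/
lemma sum_eigVec_dot_mul {n : ℕ} (G : SimpleGraph (Fin n)) (x y : Fin n → ℝ) :
    ∑ j, (eigVec G j ⬝ᵥ x) * (eigVec G j ⬝ᵥ y) = x ⬝ᵥ y := by
  have h := (adjM_isHermitian G).eigenvectorBasis.sum_inner_mul_inner
    (WithLp.toLp 2 x) (WithLp.toLp 2 y)
  simp only [EuclideanSpace.inner_eq_star_dotProduct, star_trivial] at h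
  rw [dotProduct_comm x y, ← h]
  refine Finset.sum_congr rfl fun j _ => ?_
  rw [dotProduct_comm y]
  rfl

lemma adjM_symm {n : ℕ} (G : SimpleGraph (Fin n)) (i j : Fin n) : adjM G i j = adjM G j i := by
  by_cases h : G.Adj i j
  · simp [adjM, h, h.symm]
  · simp [adjM, h, mt SimpleGraph.Adj.symm h]

open Matrix in
lemma dot_adjM_mulVec_comm {n : ℕ} (G : SimpleGraph (Fin n)) (x y : Fin n → ℝ) :
    x ⬝ᵥ (adjM G *ᵥ y) = (adjM G *ᵥ x) ⬝ᵥ y := by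
  have hT : (adjM G)ᵀ = adjM G := by
    ext i j
    exact adjM_symm G j i
  rw [dotProduct_mulVec, ← mulVec_transpose, hT]

open Matrix in
lemma adjM_mulVec_eigVec {n : ℕ} (G : SimpleGraph (Fin n)) (j : Fin n) :
    adjM G *ᵥ eigVec G j = eigs G j • eigVec G j :=
  (adjM_isHermitian G).mulVec_eigenvectorBasis j

open Matrix in
lemma eigVec_dot_mulVec {n : ℕ} (G : SimpleGraph (Fin n)) (j : Fin n) (x : Fin n → ℝ) :
    eigVec G j ⬝ᵥ (adjM G *ᵥ x) = eigs G j * (eigVec G j ⬝ᵥ x) := by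
  rw [dot_adjM_mulVec_comm, adjM_mulVec_eigVec, smul_dotProduct, smul_eq_mul]

open Matrix in
lemma dot_mulVec_eq_sum {n : ℕ} (G : SimpleGraph (Fin n)) (x : Fin n → ℝ) :
    x ⬝ᵥ (adjM G *ᵥ x) = ∑ j, eigs G j * (eigVec G j ⬝ᵥ x) ^ 2 := by
  rw [← sum_eigVec_dot_mul G]
  refine Finset.sum_congr rfl fun j _ => ?_
  rw [eigVec_dot_mulVec]
  ring

open Matrix in
lemma eigVec_dot_self {n : ℕ} (G : SimpleGraph (Fin n)) (j : Fin n) :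
    eigVec G j ⬝ᵥ eigVec G j = 1 := by
  have h := (adjM_isHermitian G).eigenvectorBasis.inner_eq_one j
  simp only [EuclideanSpace.inner_eq_star_dotProduct, star_trivial] at h
  exact h

lemma row_sum {n d : ℕ} {G : SimpleGraph (Fin n)} (hG : IsReg G d) (i : Fin n) :
    ∑ j, adjM G i j = d := by
  classical
  rw [← hG i, Set.ncard_eq_toFinset_card']
  simp [adjM]

open Matrix in
lemma adjM_mulVec_one {n d : ℕ} {G : SimpleGraph (Fin n)} (hG : IsReg G d) :
    adjM G *ᵥ 1 = (d : ℝ) • (1 : Fin n → ℝ) := by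
  ext i
  simp [mulVec, dotProduct, row_sum hG]

open Matrix in
/-- The Laplacian `d I - A` is positive semidefinite: its quadratic form is half of
`∑ Aᵢⱼ (xᵢ - xⱼ)²`. -/
lemma quadForm_le_degree {n d : ℕ} {G : SimpleGraph (Fin n)} (hG : IsReg G d) (x : Fin n → ℝ) :
    x ⬝ᵥ (adjM G *ᵥ x) ≤ d * (x ⬝ᵥ x) := by
  have h0 : 0 ≤ ∑ i, ∑ j, adjM G i j * (x i - x j) ^ 2 :=
    Finset.sum_nonneg fun i _ => Finset.sum_nonneg fun j _ =>
      mul_nonneg (adjM_nonneg G i j) (sq_nonneg _)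
  have h1 : ∑ i, ∑ j, adjM G i j * x i ^ 2 = d * (x ⬝ᵥ x) := by
    simp only [← Finset.sum_mul, row_sum hG, dotProduct, Finset.mul_sum]
    exact Finset.sum_congr rfl fun i _ => by ring
  have h2 : ∑ i, ∑ j, adjM G i j * x j ^ 2 = d * (x ⬝ᵥ x) := by
    rw [← h1, Finset.sum_comm]
    exact Finset.sum_congr rfl fun i _ => Finset.sum_congr rfl fun j _ => by rw [adjM_symm]
  have h3 : ∑ i, ∑ j, adjM G i j * (x i * x j) = x ⬝ᵥ (adjM G *ᵥ x) := by
    simp only [dotProduct, mulVec, Finset.mul_sum]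
    exact Finset.sum_congr rfl fun i _ => Finset.sum_congr rfl fun j _ => by ring
  have h4 : ∑ i, ∑ j, adjM G i j * (x i - x j) ^ 2
      = ∑ i, ∑ j, adjM G i j * x i ^ 2 + ∑ i, ∑ j, adjM G i j * x j ^ 2
        - 2 * ∑ i, ∑ j, adjM G i j * (x i * x j) := by
    simp only [Finset.mul_sum, ← Finset.sum_add_distrib, ← Finset.sum_sub_distrib]
    exact Finset.sum_congr rfl fun i _ => Finset.sum_congr rfl fun j _ => by ring
  linarith

lemma eigs_le_degree {n d : ℕ} {G : SimpleGraph (Fin n)} (hG : IsReg G d) (j : Fin n) :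
    eigs G j ≤ d := by
  have h := quadForm_le_degree hG (eigVec G j)
  rwa [eigVec_dot_mulVec, eigVec_dot_self, mul_one, mul_one] at h

lemma sum_eigs {n : ℕ} (G : SimpleGraph (Fin n)) : ∑ j, eigs G j = 0 := by
  have h := (adjM_isHermitian G).trace_eq_sum_eigenvalues
  simpa [Matrix.trace, adjM, eigs] using h.symm

open Matrix in
/-- On the orthogonal complement of the constants, the quadratic form of a regular graph is bounded
by any number bounding all eigenvalues except possibly one. -/
lemma quadForm_le_of_orth {n d : ℕ} {G : SimpleGraph (Fin n)} (hG : IsReg G d) {lam : ℝ}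
    (k : Fin n) (hk : ∀ j, j ≠ k → eigs G j ≤ lam) (z : Fin n → ℝ)
    (hz : (1 : Fin n → ℝ) ⬝ᵥ z = 0) :
    z ⬝ᵥ (adjM G *ᵥ z) ≤ lam * (z ⬝ᵥ z) := by
  rw [dot_mulVec_eq_sum, ← sum_eigVec_dot_mul G z z, Finset.mul_sum]
  refine Finset.sum_le_sum fun j _ => ?_
  rw [← sq]
  by_cases hle : eigs G j ≤ lam
  · exact mul_le_mul_of_nonneg_right hle (sq_nonneg _)
  obtain rfl : j = k := by
    by_contra hne
    exact hle (hk j hne)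
  have hone : ∀ i, i ≠ j → eigVec G i ⬝ᵥ 1 = 0 := by
    intro i hi
    have h := eigVec_dot_mulVec G i 1
    rw [adjM_mulVec_one hG, dotProduct_smul, smul_eq_mul] at h
    have h1 := hk i hi
    have h2 := eigs_le_degree hG j
    have h3 : ((d : ℝ) - eigs G i) * (eigVec G i ⬝ᵥ 1) = 0 := by linarith
    rcases mul_eq_zero.mp h3 with h4 | h4
    · linarith
    · exact h4
  have hexp : ∀ y : Fin n → ℝ, (eigVec G j ⬝ᵥ 1) * (eigVec G j ⬝ᵥ y) = 1 ⬝ᵥ y := by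
    intro y
    rw [← sum_eigVec_dot_mul G 1 y]
    symm
    refine Finset.sum_eq_single j (fun i _ hi => ?_) (by simp)
    rw [hone i hi, zero_mul]
  have hne : eigVec G j ⬝ᵥ 1 ≠ 0 := by
    intro h0
    have h := hexp 1
    rw [h0, zero_mul] at h
    have hn : (n : ℝ) = 0 := by simpa using h.symm
    have hpos : (0 : ℝ) < n := by exact_mod_cast j.pos
    linarith
  have hzero : eigVec G j ⬝ᵥ z = 0 := by
    have h := hexp z
    rw [hz] at h
    exact (mul_eq_zero.mp h).resolve_left hne
  simp [hzero]

/-- Twice `e(X)` counts ordered adjacent pairs in `X`: the handshake lemma for the graph of edges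
lying inside `X`. -/
lemma two_mul_edgesIn {n : ℕ} (G : SimpleGraph (Fin n)) (X : Finset (Fin n)) :
    2 * (edgesIn G X : ℝ) = ∑ i ∈ X, ∑ j ∈ X, adjM G i j := by
  classical
  let H : SimpleGraph (Fin n) :=
    { Adj := fun u v => G.Adj u v ∧ u ∈ X ∧ v ∈ X
      symm := ⟨fun u v h => ⟨h.1.symm, h.2.2, h.2.1⟩⟩
      loopless := ⟨fun u h => G.loopless.irrefl u h.1⟩ }
  have hset : {e ∈ G.edgeSet | ∀ v ∈ e, v ∈ X} = (H.edgeFinset : Set (Sym2 (Fin n))) := by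
    ext e
    induction e with
    | _ u v => simp [H]
  have hcard : edgesIn G X = H.edgeFinset.card := by
    rw [edgesIn, hset, Set.ncard_coe_finset]
  have hs := H.sum_degrees_eq_twice_card_edges
  rw [← hcard] at hs
  have hs' : 2 * (edgesIn G X : ℝ) = ∑ v, (H.degree v : ℝ) := by exact_mod_cast hs.symm
  rw [hs', ← Finset.sum_subset (Finset.subset_univ X)]
  · refine Finset.sum_congr rfl fun i hi => ?_
    have : H.neighborFinset i = X.filter (fun j => G.Adj i j) := by
      ext j
      simp [H, hi, and_comm]
    rw [← SimpleGraph.card_neighborFinset_eq_degree, this]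
    simp [adjM]
  · intro i _ hi
    have : H.neighborFinset i = ∅ := by
      ext j
      simp [H, hi]
    rw [← SimpleGraph.card_neighborFinset_eq_degree, this]
    simp

open Matrix in
/-- The projection `z` of the indicator of `X` onto the complement of the constants, with its norm
and its value under the quadratic form. -/
lemma exists_projection {n d : ℕ} {G : SimpleGraph (Fin n)} (hn : 0 < n) (hG : IsReg G d)
    (X : Finset (Fin n)) :
    ∃ z : Fin n → ℝ, (1 : Fin n → ℝ) ⬝ᵥ z = 0 ∧
      z ⬝ᵥ z = X.card - (X.card : ℝ) ^ 2 / n ∧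
      z ⬝ᵥ (adjM G *ᵥ z) = 2 * (edgesIn G X : ℝ) - ((d : ℝ) / n) * (X.card : ℝ) ^ 2 := by
  classical
  have hn' : (n : ℝ) ≠ 0 := by exact_mod_cast hn.ne'
  let x : Fin n → ℝ := fun i => if i ∈ X then 1 else 0
  have hx1 : (1 : Fin n → ℝ) ⬝ᵥ x = X.card := by simp [x, dotProduct]
  have hxx : x ⬝ᵥ x = X.card := by simp [x, dotProduct]
  have h11 : (1 : Fin n → ℝ) ⬝ᵥ 1 = n := by simp
  have hxA : x ⬝ᵥ (adjM G *ᵥ x) = 2 * (edgesIn G X : ℝ) := by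
    rw [two_mul_edgesIn]
    simp [x, dotProduct, mulVec]
  have h1A : (1 : Fin n → ℝ) ⬝ᵥ (adjM G *ᵥ x) = d * X.card := by
    rw [dot_adjM_mulVec_comm, adjM_mulVec_one hG, smul_dotProduct, hx1, smul_eq_mul]
  have hx1' : x ⬝ᵥ (1 : Fin n → ℝ) = X.card := by rw [dotProduct_comm, hx1]
  refine ⟨x - ((X.card : ℝ) / n) • (1 : Fin n → ℝ), ?_, ?_, ?_⟩
  · rw [dotProduct_sub, dotProduct_smul, hx1, h11, smul_eq_mul]
    field_simp
    ring
  · simp only [dotProduct_sub, sub_dotProduct, dotProduct_smul, smul_dotProduct, hx1, hx1', hxx,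
      h11, smul_eq_mul]
    field_simp
    ring
  · simp only [mulVec_sub, mulVec_smul, adjM_mulVec_one hG, dotProduct_sub, sub_dotProduct,
      dotProduct_smul, smul_dotProduct, hx1', hxA, h1A, h11, smul_eq_mul]
    field_simp
    ring


/-- Expander mixing lemma: if `G` is an `(n,d,λ)`-graph with adjacency eigenvalues
`λ₁ ≥ λ₂ ≥ ⋯ ≥ λₙ` (listed by `μ`, so that `λₙ = sInf (Set.range μ)`) and
`X` is a set of vertices, then `λₙ·|X| ≤ 2e(X) − (d/n)·|X|² ≤ λ·|X|`. -/
theorem expander_mixing {n d : ℕ} {lam : ℝ} (G : SimpleGraph (Fin n)) (hG : IsNDL G d lam)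
    (μ : Fin n → ℝ) (hμ : IsDescSpectrum G μ) (X : Finset (Fin n)) :
    sInf (Set.range μ) * (X.card : ℝ)
        ≤ 2 * (edgesIn G X : ℝ) - ((d : ℝ) / n) * (X.card : ℝ) ^ 2 ∧
      2 * (edgesIn G X : ℝ) - ((d : ℝ) / n) * (X.card : ℝ) ^ 2 ≤ lam * (X.card : ℝ) := by
  obtain ⟨hreg, hlam⟩ := hG
  obtain ⟨-, σ, hσ⟩ := id hμ
  rcases Nat.eq_zero_or_pos n with rfl | hn
  · -- On the empty vertex set everything in sight is zero.
    obtain rfl : X = ∅ := Subsingleton.elim _ _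
    simp [edgesIn]
  obtain ⟨z, hz1, hzz, hzA⟩ := exists_projection (G := G) hn hreg X
  have hn' : (0 : ℝ) < n := by exact_mod_cast hn
  have hzX : dotProduct z z ≤ X.card := by
    rw [hzz]
    have : 0 ≤ (X.card : ℝ) ^ 2 / n := by positivity
    linarith
  have hmin : ∀ j, sInf (Set.range μ) ≤ eigs G j := by
    intro j
    refine csInf_le (Set.finite_range μ).bddBelow ⟨σ.symm j, ?_⟩
    simp [hσ]
  rw [← hzA]
  constructor
  · have hneg : sInf (Set.range μ) ≤ 0 := by
      by_contra! hpos
      have : Nonempty (Fin n) := ⟨⟨0, hn⟩⟩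
      have h : 0 < ∑ j, eigs G j :=
        Finset.sum_pos (fun j _ => hpos.trans_le (hmin j)) Finset.univ_nonempty
      exact h.ne' (sum_eigs G)
    calc sInf (Set.range μ) * (X.card : ℝ) ≤ sInf (Set.range μ) * (dotProduct z z) :=
          mul_le_mul_of_nonpos_left hzX hneg
      _ ≤ dotProduct z (Matrix.mulVec (adjM G) z) := by
          rw [dot_mulVec_eq_sum, ← sum_eigVec_dot_mul G z z, Finset.mul_sum]
          refine Finset.sum_le_sum fun j _ => ?_
          rw [← sq]
          exact mul_le_mul_of_nonneg_right (hmin j) (sq_nonneg _)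
  · have hL := hlam μ hμ
    have hlam0 : 0 ≤ lam := by
      rw [← hL]
      refine Real.sSup_nonneg ?_
      rintro _ ⟨i, -, rfl⟩
      exact abs_nonneg _
    have hbdd : BddAbove {x : ℝ | ∃ i : Fin n, i.val ≠ 0 ∧ x = |μ i|} := by
      refine ((Set.finite_range fun i => |μ i|).subset ?_).bddAbove
      rintro _ ⟨i, -, rfl⟩
      exact ⟨i, rfl⟩
    have hk : ∀ j, j ≠ σ ⟨0, hn⟩ → eigs G j ≤ lam := by
      intro j hj
      have h0 : (σ.symm j).val ≠ 0 := by
        intro h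
        apply hj
        rw [← Equiv.symm_apply_eq]
        exact Fin.ext h
      have h1 : |μ (σ.symm j)| ≤ lam := by
        rw [← hL]
        exact le_csSup hbdd ⟨_, h0, rfl⟩
      have h2 : μ (σ.symm j) = eigs G j := by simp [hσ]
      rw [← h2]
      exact (le_abs_self _).trans h1
    exact (quadForm_le_of_orth hreg _ hk z hz1).trans (mul_le_mul_of_nonneg_left hzX hlam0)
end

section
/- There exists a constant c > 0 such that for every N there exist n ≥ N, an integer d, a real λ, and a triangle-free (n,d,λ)-graph with d ≥ c·n^{2/3} and λ ≤ c^{-1}·n^{1/3}. -/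
/-! ### Character sums and the connection set -/

section ConeGraph

variable {F : Type*} [Field F]

/-- The standard bilinear form on `F³`. -/
def dot3 (a v : F × F × F) : F := a.1 * v.1 + a.2.1 * v.2.1 + a.2.2 * v.2.2

lemma dot3_add_right (a u v : F × F × F) : dot3 a (u + v) = dot3 a u + dot3 a v := by
  simp only [dot3, Prod.fst_add, Prod.snd_add]; ring

lemma dot3_add_left (a b v : F × F × F) : dot3 (a + b) v = dot3 a v + dot3 b v := by
  simp only [dot3, Prod.fst_add, Prod.snd_add]; ring

lemma addChar_sq [CharP F 2] (ψ : AddChar F ℝ) (x : F) : ψ x = 1 ∨ ψ x = -1 := by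
  have h : ψ x * ψ x = 1 := by rw [← AddChar.map_add_eq_mul, CharTwo.add_self_eq_zero]; simp
  exact mul_self_eq_one_iff.mp h

variable [Fintype F] [DecidableEq F]

lemma sum_addChar_dot3 (ψ : AddChar F ℝ) (hψ : ψ ≠ 1) (z : F × F × F) (hz : z ≠ 0) :
    ∑ a : F × F × F, ψ (dot3 a z) = 0 := by
  obtain ⟨x, hx⟩ := AddChar.ne_one_iff.mp hψ
  let g : (F × F × F) →+ F := AddMonoidHom.mk' (fun a => dot3 a z) (fun a b => dot3_add_left a b z)
  have hne : ψ.compAddMonoidHom g ≠ 0 := by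
    rw [AddChar.ne_zero_iff]
    have : ∃ a, dot3 a z = x := by
      by_cases h1 : z.1 = 0
      · by_cases h2 : z.2.1 = 0
        · have h3 : z.2.2 ≠ 0 := fun h3 => hz (by ext <;> simp [h1, h2, h3])
          exact ⟨(0, 0, x / z.2.2), by simp [dot3, h3]⟩
        · exact ⟨(0, x / z.2.1, 0), by simp [dot3, h2]⟩
      · exact ⟨(x / z.1, 0, 0), by simp [dot3, h1]⟩
    obtain ⟨a, ha⟩ := this
    refine ⟨a, ?_⟩
    show ψ (dot3 a z) ≠ 1
    rwa [ha]
  exact AddChar.sum_eq_zero_of_ne_one hne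

/-- Fourier inversion on `F³`, in the only case needed: a function whose Fourier transform
vanishes away from the trivial character is constant. -/
lemma const_of_fourier_supported [CharP F 2] (ψ : AddChar F ℝ) (hψ : ψ ≠ 1)
    (f : F × F × F → ℝ) (h : ∀ a, a ≠ 0 → ∑ v, ψ (dot3 a v) * f v = 0) (u : F × F × F) :
    (Fintype.card (F × F × F) : ℝ) * f u = ∑ v, f v := by
  have h1 : ∑ a, ψ (dot3 a u) * ∑ v, ψ (dot3 a v) * f v = ∑ v, f v := by
    rw [Finset.sum_eq_single 0]
    · simp [dot3]
    · intro a _ ha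
      rw [h a ha, mul_zero]
    · simp
  have h2 : ∑ a, ψ (dot3 a u) * ∑ v, ψ (dot3 a v) * f v
      = ∑ v, (∑ a, ψ (dot3 a (u + v))) * f v := by
    simp_rw [Finset.mul_sum, Finset.sum_mul]
    rw [Finset.sum_comm]
    refine Finset.sum_congr rfl fun v _ => Finset.sum_congr rfl fun a _ => ?_
    rw [dot3_add_right, AddChar.map_add_eq_mul]; ring
  rw [← h1, h2, Finset.sum_eq_single u]
  · have hu : u + u = 0 := by ext <;> exact CharTwo.add_self_eq_zero _
    simp [hu, dot3]
  · intro v _ hv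
    rw [sum_addChar_dot3 ψ hψ, zero_mul]
    intro h0
    apply hv
    ext
    · exact (CharTwo.add_eq_zero.mp (congrArg Prod.fst h0)).symm
    · exact (CharTwo.add_eq_zero.mp (congrArg (fun p => p.2.1) h0)).symm
    · exact (CharTwo.add_eq_zero.mp (congrArg (fun p => p.2.2) h0)).symm
  · simp

/-- The elements on which `ψ` is `-1`: the complement of an index-two subgroup, so no three of
them sum to zero. -/
noncomputable def oddSet (ψ : AddChar F ℝ) : Finset F := Finset.univ.filter fun x => ψ x = -1

/-- Pairs `(x, y)` with `x` odd and `y` nonzero, parametrizing the connection set. -/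
noncomputable def params (ψ : AddChar F ℝ) : Finset (F × F) :=
  oddSet ψ ×ˢ Finset.univ.erase 0

/-- The point `x • (y, y², y³)` of the cone over the twisted cubic. -/
def conePt (p : F × F) : F × F × F := (p.1 * p.2, p.1 * p.2 ^ 2, p.1 * p.2 ^ 3)

/-- The connection set of the Cayley graph. -/
noncomputable def connSet (ψ : AddChar F ℝ) : Finset (F × F × F) := (params ψ).image conePt

lemma mem_params {ψ : AddChar F ℝ} {p : F × F} :
    p ∈ params ψ ↔ ψ p.1 = -1 ∧ p.2 ≠ 0 := by
  simp [params, oddSet]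

omit [Fintype F] [DecidableEq F] in
lemma ne_zero_of_odd {ψ : AddChar F ℝ} {x : F} (h : ψ x = -1) : x ≠ 0 := by
  rintro rfl
  rw [AddChar.map_zero_eq_one] at h
  norm_num at h

lemma conePt_injOn (ψ : AddChar F ℝ) : Set.InjOn conePt (params ψ : Set (F × F)) := by
  rintro ⟨x, y⟩ h ⟨x', y'⟩ h' he
  obtain ⟨hx, hy⟩ := mem_params.mp (Finset.mem_coe.mp h)
  obtain ⟨hx', hy'⟩ := mem_params.mp (Finset.mem_coe.mp h')
  have hx0 := ne_zero_of_odd hx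
  simp only [conePt, Prod.mk.injEq] at he hy hy' hx0 ⊢
  obtain ⟨e1, e2, -⟩ := he
  have hyy : y = y' := by
    have : x * y * (y - y') = 0 := by linear_combination e2 - y' * e1
    simpa [hx0, hy, sub_eq_zero] using this
  subst hyy
  exact ⟨mul_right_cancel₀ hy e1, rfl⟩

lemma zero_notMem_connSet (ψ : AddChar F ℝ) : (0 : F × F × F) ∉ connSet ψ := by
  intro h
  obtain ⟨⟨x, y⟩, hp, h0⟩ := Finset.mem_image.mp h
  obtain ⟨hx, hy⟩ := mem_params.mp hp
  have h1 : x * y = 0 := congrArg Prod.fst h0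
  exact (mul_ne_zero (ne_zero_of_odd hx) hy) h1

/-- No three points of the connection set sum to zero: by the Vandermonde determinant up
to three distinct lines of the cone are independent, so the points lie on a single line, and
there oddness of `x` is an obstruction. -/
lemma connSet_sum_ne_zero (ψ : AddChar F ℝ) {s t r : F × F × F}
    (hs : s ∈ connSet ψ) (ht : t ∈ connSet ψ) (hr : r ∈ connSet ψ) : s + t + r ≠ 0 := by
  intro h
  obtain ⟨⟨x, a⟩, hs', rfl⟩ := Finset.mem_image.mp hs
  obtain ⟨⟨y, b⟩, ht', rfl⟩ := Finset.mem_image.mp ht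
  obtain ⟨⟨z, c⟩, hr', rfl⟩ := Finset.mem_image.mp hr
  obtain ⟨hx, ha⟩ := mem_params.mp hs'
  obtain ⟨hy, hb⟩ := mem_params.mp ht'
  obtain ⟨hz, hc⟩ := mem_params.mp hr'
  have hx0 := ne_zero_of_odd hx
  have hy0 := ne_zero_of_odd hy
  have hz0 := ne_zero_of_odd hz
  dsimp only at *
  have e1 : x * a + y * b + z * c = 0 := congrArg Prod.fst h
  have e2 : x * a ^ 2 + y * b ^ 2 + z * c ^ 2 = 0 := congrArg (fun p => p.2.1) h
  have e3 : x * a ^ 3 + y * b ^ 3 + z * c ^ 3 = 0 := congrArg (fun p => p.2.2) h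
  have k1 : x * a * ((a - b) * (a - c)) = 0 := by
    linear_combination e3 - (b + c) * e2 + b * c * e1
  have k2 : y * b * ((b - a) * (b - c)) = 0 := by
    linear_combination e3 - (a + c) * e2 + a * c * e1
  have k3 : z * c * ((c - a) * (c - b)) = 0 := by
    linear_combination e3 - (a + b) * e2 + a * b * e1
  simp only [mul_eq_zero, hx0, hy0, hz0, ha, hb, hc, false_or, sub_eq_zero] at k1 k2 k3
  have hall : a = b ∧ a = c := by
    rcases k1 with h1 | h1 <;> rcases k2 with h2 | h2 <;> rcases k3 with h3 | h3 <;> grind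
  obtain ⟨rfl, rfl⟩ := hall
  have hsum : x + y + z = 0 := by
    have : (x + y + z) * a = 0 := by linear_combination e1
    simpa [ha] using this
  have := congrArg ψ hsum
  rw [AddChar.map_add_eq_mul, AddChar.map_add_eq_mul, hx, hy, hz, AddChar.map_zero_eq_one] at this
  norm_num at this

/-- The Fourier transform of the indicator of the odd set is supported on `{0, 1}`. -/
lemma sum_oddSet [CharP F 2] (ψ : AddChar F ℝ) (hψ : ψ ≠ 1) (t : F) :
    ∑ x ∈ oddSet ψ, ψ (x * t)
      = (Fintype.card F : ℝ) / 2 * ((if t = 0 then 1 else 0) - (if t = 1 then 1 else 0)) := by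
  have hp := AddChar.IsPrimitive.of_ne_one hψ
  have h1 : ∑ x ∈ oddSet ψ, ψ (x * t) = ∑ x, (ψ (x * t) - ψ (x * (t - 1))) / 2 := by
    rw [oddSet, Finset.sum_filter]
    refine Finset.sum_congr rfl fun x _ => ?_
    have : x * (t - 1) = x * t + x := by rw [mul_sub, mul_one, CharTwo.sub_eq_add]
    rw [this, AddChar.map_add_eq_mul]
    rcases addChar_sq ψ x with h | h <;> rw [h] <;> norm_num
  rw [h1, ← Finset.sum_div, Finset.sum_sub_distrib, AddChar.sum_mulShift t hp,
    AddChar.sum_mulShift (t - 1) hp]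
  simp only [sub_eq_zero]
  split_ifs <;> push_cast <;> ring

lemma card_oddSet [CharP F 2] (ψ : AddChar F ℝ) (hψ : ψ ≠ 1) :
    ((oddSet ψ).card : ℝ) = (Fintype.card F : ℝ) / 2 := by
  simpa using sum_oddSet ψ hψ 0

lemma card_connSet [CharP F 2] (ψ : AddChar F ℝ) (hψ : ψ ≠ 1) :
    (Fintype.card F : ℝ) ^ 2 / 4 ≤ ((connSet ψ).card : ℝ) := by
  have hq : (2 : ℝ) ≤ Fintype.card F := by exact_mod_cast Fintype.one_lt_card (α := F)
  rw [connSet, Finset.card_image_of_injOn (conePt_injOn ψ), params, Finset.card_product,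
    Finset.card_erase_of_mem (Finset.mem_univ _), Finset.card_univ, Nat.cast_mul,
    card_oddSet ψ hψ, Nat.cast_sub Fintype.card_pos]
  push_cast
  nlinarith

/-- A nonzero cubic without constant term takes each value at most three times. -/
lemma card_cubic_le (a : F × F × F) (ha : a ≠ 0) (t : F) :
    (Finset.univ.filter fun y : F => dot3 a (y, y ^ 2, y ^ 3) = t).card ≤ 3 := by
  classical
  open Polynomial in
  let P : F[X] := C a.2.2 * X ^ 3 + C a.2.1 * X ^ 2 + C a.1 * X + C (-t)
  have hP : P ≠ 0 := by
    intro h0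
    apply ha
    have c1 := congrArg (fun Q => Polynomial.coeff Q 1) h0
    have c2 := congrArg (fun Q => Polynomial.coeff Q 2) h0
    have c3 := congrArg (fun Q => Polynomial.coeff Q 3) h0
    simp [P, Polynomial.coeff_C, Polynomial.coeff_X_pow] at c1 c2 c3
    ext <;> simp [c1, c2, c3]
  have hdeg : P.natDegree ≤ 3 := Polynomial.natDegree_cubic_le
  refine le_trans ?_ (le_trans (Multiset.toFinset_card_le P.roots) ((P.card_roots').trans hdeg))
  refine Finset.card_le_card fun y hy => ?_
  have hy' := (Finset.mem_filter.mp hy).2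
  rw [Multiset.mem_toFinset, Polynomial.mem_roots hP]
  simp only [P, Polynomial.IsRoot.def, Polynomial.eval_add, Polynomial.eval_mul,
    Polynomial.eval_C, Polynomial.eval_pow, Polynomial.eval_X]
  simp only [dot3] at hy'
  linear_combination hy'

/-- The nontrivial character sums over the connection set, that is the nontrivial eigenvalues of
the Cayley graph, are `O(q)`. -/
lemma abs_sum_connSet_le [CharP F 2] (ψ : AddChar F ℝ) (hψ : ψ ≠ 1) (a : F × F × F)
    (ha : a ≠ 0) : |∑ s ∈ connSet ψ, ψ (dot3 a s)| ≤ 3 * Fintype.card F := by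
  have hq : (0 : ℝ) ≤ Fintype.card F := Nat.cast_nonneg _
  rw [connSet, Finset.sum_image (conePt_injOn ψ), params, Finset.sum_product_right]
  have key : ∀ y : F, |∑ x ∈ oddSet ψ, ψ (dot3 a (conePt (x, y)))| ≤ (Fintype.card F : ℝ) / 2 *
      ((if dot3 a (y, y ^ 2, y ^ 3) = 0 then 1 else 0) +
        (if dot3 a (y, y ^ 2, y ^ 3) = 1 then 1 else 0)) := by
    intro y
    have : ∀ x, dot3 a (conePt (x, y)) = x * dot3 a (y, y ^ 2, y ^ 3) := by
      intro x; simp only [dot3, conePt]; ring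
    simp_rw [this]
    rw [sum_oddSet ψ hψ, abs_mul, abs_of_nonneg (by positivity : (0 : ℝ) ≤ Fintype.card F / 2)]
    gcongr
    split_ifs <;> simp
  have c0 : ((Finset.univ.filter fun y : F => dot3 a (y, y ^ 2, y ^ 3) = 0).card : ℝ) ≤ 3 := by
    exact_mod_cast card_cubic_le a ha 0
  have c1 : ((Finset.univ.filter fun y : F => dot3 a (y, y ^ 2, y ^ 3) = 1).card : ℝ) ≤ 3 := by
    exact_mod_cast card_cubic_le a ha 1
  calc _ ≤ ∑ y ∈ Finset.univ.erase 0, |∑ x ∈ oddSet ψ, ψ (dot3 a (conePt (x, y)))| :=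
        Finset.abs_sum_le_sum_abs _ _
    _ ≤ ∑ y, |∑ x ∈ oddSet ψ, ψ (dot3 a (conePt (x, y)))| :=
        Finset.sum_le_sum_of_subset_of_nonneg (Finset.subset_univ _) fun _ _ _ => abs_nonneg _
    _ ≤ ∑ y : F, (Fintype.card F : ℝ) / 2 *
      ((if dot3 a (y, y ^ 2, y ^ 3) = 0 then 1 else 0) +
        (if dot3 a (y, y ^ 2, y ^ 3) = 1 then 1 else 0)) := Finset.sum_le_sum fun y _ => key y
    _ ≤ _ := by
      rw [← Finset.mul_sum, Finset.sum_add_distrib, Finset.sum_boole, Finset.sum_boole]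
      nlinarith

/-! ### The Cayley graph and its spectrum -/

/-- The Cayley graph of `F³` on the connection set, with vertices labelled by `e`. In
characteristic two every set is symmetric, so `+` may be used for the difference. -/
def coneGraph {n : ℕ} [CharP F 2] (ψ : AddChar F ℝ) (e : Fin n ≃ F × F × F) :
    SimpleGraph (Fin n) where
  Adj i j := e i + e j ∈ connSet ψ
  symm := ⟨fun i j h => by rwa [add_comm]⟩
  loopless := ⟨fun i h => by
    have h0 : e i + e i = 0 := by ext <;> exact CharTwo.add_self_eq_zero _
    exact zero_notMem_connSet ψ (h0 ▸ h)⟩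

omit [Fintype F] [DecidableEq F] in
lemma add_add_cancel_two [CharP F 2] (u v : F × F × F) : u + (u + v) = v := by
  ext <;> simp [← add_assoc, CharTwo.add_self_eq_zero]

lemma coneGraph_cliqueFree {n : ℕ} [CharP F 2] (ψ : AddChar F ℝ) (e : Fin n ≃ F × F × F) :
    (coneGraph ψ e).CliqueFree 3 := by
  intro s hs
  obtain ⟨i, j, k, hij, hik, hjk, -⟩ := SimpleGraph.is3Clique_iff.mp hs
  refine connSet_sum_ne_zero ψ hij hik hjk ?_
  have : e i + e j + (e i + e k) + (e j + e k) = (e i + (e i + (e j + (e j + (e k + e k))))) := by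
    abel
  rw [this, add_add_cancel_two, add_add_cancel_two]
  ext <;> exact CharTwo.add_self_eq_zero _

lemma coneGraph_isReg {n : ℕ} [CharP F 2] (ψ : AddChar F ℝ) (e : Fin n ≃ F × F × F) :
    IsReg (coneGraph ψ e) (connSet ψ).card := by
  intro v
  rw [← Set.ncard_coe_finset]
  refine Set.ncard_congr (fun u _ => e v + e u) (fun u hu => hu) ?_ ?_
  · intro u w _ _ h
    exact e.injective (add_left_cancel h)
  · intro s hs
    refine ⟨e.symm (e v + s), ?_, ?_⟩
    · show e v + e (e.symm (e v + s)) ∈ connSet ψ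
      rw [e.apply_symm_apply, add_add_cancel_two]
      exact hs
    · simp only [e.apply_symm_apply, add_add_cancel_two]

/-- The Fourier transform turns the adjacency operator into multiplication by character sums. -/
lemma fourier_adjM {n : ℕ} [CharP F 2] (ψ : AddChar F ℝ) (e : Fin n ≃ F × F × F)
    (f : Fin n → ℝ) (a : F × F × F) :
    ∑ i, ψ (dot3 a (e i)) * (adjM (coneGraph ψ e)).mulVec f i
      = (∑ s ∈ connSet ψ, ψ (dot3 a s)) * ∑ i, ψ (dot3 a (e i)) * f i := by
  classical
  have h1 : ∀ j, ∑ i, ψ (dot3 a (e i)) * adjM (coneGraph ψ e) i j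
      = (∑ s ∈ connSet ψ, ψ (dot3 a s)) * ψ (dot3 a (e j)) := by
    intro j
    have h2 : ∀ i, ψ (dot3 a (e i)) * adjM (coneGraph ψ e) i j =
        (fun u => if e j + u ∈ connSet ψ then ψ (dot3 a u) else 0) (e i) := by
      intro i
      have : (coneGraph ψ e).Adj i j ↔ e j + e i ∈ connSet ψ := by
        rw [SimpleGraph.adj_comm]; rfl
      simp [adjM, this]
    simp_rw [h2]
    rw [Equiv.sum_comp e (fun u => if e j + u ∈ connSet ψ then ψ (dot3 a u) else 0),
      ← Equiv.sum_comp (Equiv.addLeft (e j))]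
    simp only [Equiv.coe_addLeft, add_add_cancel_two]
    rw [← Finset.sum_filter, Finset.filter_mem_eq_inter, Finset.univ_inter, Finset.sum_mul]
    refine Finset.sum_congr rfl fun s _ => ?_
    rw [dot3_add_right, AddChar.map_add_eq_mul, mul_comm]
  simp only [Matrix.mulVec, dotProduct, Finset.mul_sum]
  rw [Finset.sum_comm]
  refine Finset.sum_congr rfl fun j _ => ?_
  rw [← mul_assoc, ← h1, Finset.sum_mul]
  exact Finset.sum_congr rfl fun i _ => by ring

/-- An eigenvector with eigenvalue exceeding `3q` in absolute value is constant, and the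
eigenvalue is then the degree. -/
lemma large_eigenvector {n : ℕ} [CharP F 2] (ψ : AddChar F ℝ) (hψ : ψ ≠ 1)
    (e : Fin n ≃ F × F × F) (f : Fin n → ℝ) (hf : f ≠ 0) (μ : ℝ)
    (h : (adjM (coneGraph ψ e)).mulVec f = μ • f) (hμ : 3 * (Fintype.card F : ℝ) < |μ|) :
    (∃ c : ℝ, c ≠ 0 ∧ ∀ i, f i = c) ∧ μ = (connSet ψ).card := by
  have hw : ∀ a, (∑ s ∈ connSet ψ, ψ (dot3 a s)) * ∑ i, ψ (dot3 a (e i)) * f i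
      = μ * ∑ i, ψ (dot3 a (e i)) * f i := by
    intro a
    rw [← fourier_adjM, h, Finset.mul_sum]
    exact Finset.sum_congr rfl fun i _ => by simp only [Pi.smul_apply, smul_eq_mul]; ring
  have hz : ∀ a, a ≠ 0 → ∑ i, ψ (dot3 a (e i)) * f i = 0 := by
    intro a ha
    by_contra hne
    have := mul_right_cancel₀ hne (hw a)
    have hb := abs_sum_connSet_le ψ hψ a ha
    rw [this] at hb
    linarith
  have hc : ∀ i, (Fintype.card (F × F × F) : ℝ) * f i = ∑ j, f j := by
    intro i
    have := const_of_fourier_supported ψ hψ (fun u => f (e.symm u)) (fun a ha => by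
      rw [← hz a ha, ← Equiv.sum_comp e]; simp) (e i)
    rw [← Equiv.sum_comp e] at this
    simpa using this
  have hn : (Fintype.card (F × F × F) : ℝ) ≠ 0 := by
    exact_mod_cast Fintype.card_ne_zero
  have hS : ∑ j, f j ≠ 0 := by
    intro h0
    apply hf
    funext i
    have := hc i
    rw [h0] at this
    simpa [hn] using this
  refine ⟨⟨(∑ j, f j) / Fintype.card (F × F × F), div_ne_zero hS hn, fun i => ?_⟩, ?_⟩
  · rw [← hc i, mul_div_cancel_left₀ _ hn]
  · have h0 := hw 0
    simp only [dot3, Prod.fst_zero, Prod.snd_zero, zero_mul, add_zero, AddChar.map_zero_eq_one,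
      one_mul, Finset.sum_const, nsmul_eq_mul, mul_one] at h0
    exact (mul_right_cancel₀ hS h0).symm

lemma lamOf_coneGraph_le {n : ℕ} [CharP F 2] (ψ : AddChar F ℝ) (hψ : ψ ≠ 1)
    (e : Fin n ≃ F × F × F) (μ : Fin n → ℝ) (hμ : IsDescSpectrum (coneGraph ψ e) μ) :
    lamOf μ ≤ 3 * Fintype.card F := by
  obtain ⟨hanti, σ, rfl⟩ := hμ
  refine Real.sSup_le ?_ (by positivity)
  rintro _ ⟨i, hi, rfl⟩
  by_contra! hlt
  have hA := adjM_isHermitian (coneGraph ψ e)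
  have large : ∀ k, 3 * (Fintype.card F : ℝ) < |eigs (coneGraph ψ e) k| →
      (∃ c : ℝ, c ≠ 0 ∧ ∀ i, hA.eigenvectorBasis k i = c) ∧
        eigs (coneGraph ψ e) k = (connSet ψ).card := by
    intro k hk
    refine large_eigenvector ψ hψ e _ ?_ _ (hA.mulVec_eigenvectorBasis k) hk
    intro h0
    apply hA.eigenvectorBasis.orthonormal.ne_zero k
    ext j
    exact congrFun h0 j
  let z : Fin n := ⟨0, i.pos⟩
  have hzi : z ≠ i := fun h => hi (by rw [← h])
  obtain ⟨⟨c, hc, hci⟩, hid⟩ := large (σ i) hlt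
  -- the largest eigenvalue dominates the degree, hence is large as well
  have hz : 3 * (Fintype.card F : ℝ) < |eigs (coneGraph ψ e) (σ z)| := by
    have hle : eigs (coneGraph ψ e) (σ i) ≤ eigs (coneGraph ψ e) (σ z) :=
      hanti (show z ≤ i from Nat.zero_le _)
    have hpos : (0 : ℝ) ≤ eigs (coneGraph ψ e) (σ i) := by rw [hid]; positivity
    simp only [Function.comp_apply] at hlt
    rw [abs_of_nonneg hpos] at hlt
    exact lt_of_lt_of_le hlt (hle.trans (le_abs_self _))
  obtain ⟨⟨c', hc', hcz⟩, -⟩ := large (σ z) hz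
  have horth := hA.eigenvectorBasis.orthonormal.2 (fun h => hzi (σ.injective h))
  beta_reduce at horth
  rw [PiLp.inner_apply] at horth
  simp only [hci, hcz] at horth
  simp [hc, hc'] at horth
  subst horth
  exact i.elim0

lemma exists_isNDL_coneGraph {n : ℕ} [CharP F 2] (ψ : AddChar F ℝ) (hψ : ψ ≠ 1)
    (e : Fin n ≃ F × F × F) :
    ∃ lam : ℝ, IsNDL (coneGraph ψ e) (connSet ψ).card lam ∧ lam ≤ 3 * Fintype.card F := by
  by_cases h : ∃ μ, IsDescSpectrum (coneGraph ψ e) μ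
  · obtain ⟨μ, hμ⟩ := h
    refine ⟨lamOf μ, ⟨coneGraph_isReg ψ e, fun ν hν => ?_⟩, lamOf_coneGraph_le ψ hψ e μ hμ⟩
    obtain ⟨hm, σ, rfl⟩ := hμ
    obtain ⟨hn, τ, rfl⟩ := hν
    -- both lists are increasing rearrangements for the order dual
    have := Tuple.unique_monotone (f := fun i => OrderDual.toDual (eigs (coneGraph ψ e) i))
      (σ := τ) (τ := σ) (fun i j hij => hn hij) (fun i j hij => hm hij)
    exact congrArg lamOf this
  · exact ⟨0, ⟨coneGraph_isReg ψ e, fun ν hν => (h ⟨ν, hν⟩).elim⟩, by positivity⟩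

end ConeGraph

/-! ### The parameters -/

lemma exists_addChar (k : ℕ) : ∃ ψ : AddChar (GaloisField 2 k) ℝ, ψ ≠ 1 := by
  let χ : AddChar (ZMod 2) ℝ := AddChar.zmodChar 2 (ζ := -1) (by norm_num)
  refine ⟨χ.compAddMonoidHom (Algebra.trace (ZMod 2) (GaloisField 2 k)).toAddMonoidHom, ?_⟩
  obtain ⟨x, hx⟩ := Algebra.trace_surjective (ZMod 2) (GaloisField 2 k) 1
  refine AddChar.ne_one_iff.mpr ⟨x, ?_⟩
  show χ (Algebra.trace (ZMod 2) (GaloisField 2 k) x) ≠ 1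
  rw [hx, AddChar.zmodChar_apply, ZMod.val_one]
  norm_num

/-- There is `c > 0` such that for every `N` there are `n ≥ N`, an integer `d`, a real `λ`
and a triangle-free `(n,d,λ)`-graph with `d ≥ c·n^{2/3}` and `λ ≤ c⁻¹·n^{1/3}`. -/
theorem exists_triangle_free_spectrally_extremal :
    ∃ c : ℝ, 0 < c ∧ ∀ N : ℕ, ∃ n : ℕ, N ≤ n ∧
      ∃ (d : ℕ) (lam : ℝ) (G : SimpleGraph (Fin n)),
        G.CliqueFree 3 ∧ IsNDL G d lam ∧
        c * (n : ℝ) ^ ((2 : ℝ) / 3) ≤ (d : ℝ) ∧ lam ≤ c⁻¹ * (n : ℝ) ^ ((1 : ℝ) / 3) := by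
  classical
  refine ⟨1 / 4, by norm_num, fun N => ?_⟩
  let F := GaloisField 2 (N + 1)
  have : Fintype F := Fintype.ofFinite F
  obtain ⟨ψ, hψ⟩ := exists_addChar (N + 1)
  have hF : Fintype.card F = 2 ^ (N + 1) := by
    rw [Fintype.card_eq_nat_card]; exact GaloisField.card 2 (N + 1) (Nat.succ_ne_zero N)
  have hn : Fintype.card (F × F × F) = Fintype.card F ^ 3 := by
    simp only [Fintype.card_prod]; ring
  let e : Fin (Fintype.card (F × F × F)) ≃ F × F × F := (Fintype.equivFin _).symm
  obtain ⟨lam, hlam, hle⟩ := exists_isNDL_coneGraph ψ hψ e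
  have hq : (0 : ℝ) ≤ Fintype.card F := Nat.cast_nonneg _
  refine ⟨_, ?_, _, lam, coneGraph ψ e, coneGraph_cliqueFree ψ e, hlam, ?_, ?_⟩
  · rw [hn]
    calc N ≤ 2 ^ (N + 1) := (Nat.lt_succ_self N).le.trans Nat.lt_two_pow_self.le
      _ = Fintype.card F := hF.symm
      _ ≤ Fintype.card F ^ 3 := Nat.le_self_pow (by norm_num) _
  · have : ((Fintype.card (F × F × F) : ℕ) : ℝ) ^ ((2 : ℝ) / 3) = (Fintype.card F : ℝ) ^ 2 := by
      rw [hn, Nat.cast_pow, ← Real.rpow_natCast, ← Real.rpow_mul hq, ← Real.rpow_natCast]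
      norm_num
    rw [this]
    have := card_connSet ψ hψ
    linarith
  · have : ((Fintype.card (F × F × F) : ℕ) : ℝ) ^ ((1 : ℝ) / 3) = (Fintype.card F : ℝ) := by
      rw [hn, Nat.cast_pow, ← Real.rpow_natCast, ← Real.rpow_mul hq]
      norm_num
    rw [this]
    linarith
end

section
/- Let n ≥ m ≥ t ≥ s ≥ 1 be integers and α ∈ [0,1], and let G be an n-vertex (α,m)-pseudorandom graph with exp(−αs)·n ≤ m. Then the number of independent sets of size t in G is at most binom(n,s)·binom(m, t−s). -/
/-!
The proof is the Kleitman–Winston argument, organised as an induction on a vertex set `A`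
rather than as an algorithm producing fingerprints. The claim proved by induction is that,
whenever `(1 - α) ^ s * |A| ≤ m`, the set `A` contains at most `C(|A|, s) * C(m, t - s)`
independent sets of size `t` (`card_indepSubsets_le`).

If `|A| ≤ m` or `s = 0`, this already bounds the number of all `t`-subsets of `A`. Otherwise
pseudorandomness and averaging give a vertex `v ∈ A` with at least `α (|A| - 1)` neighbours in `A`
(`exists_large_degree`). Independent sets avoiding `v` lie in `A \ {v}`, and those containing `v`
consist of `v` and an independent set in `A \ ({v} ∪ N(v))`, a set of size at most
`(1 - α) (|A| - 1)`. Applying induction with `(s, t)` and with `(s - 1, t - 1)` respectively, the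
two bounds add up by Pascal's rule. The theorem is the case where `A` is the whole vertex set,
since `1 - α ≤ exp (-α)`.
-/

/-- `I` is an independent set in `G`. -/
def IsIndepFinset {V : Type*} (G : SimpleGraph V) (I : Finset V) : Prop :=
  ∀ u ∈ I, ∀ v ∈ I, ¬ G.Adj u v

open scoped Classical in
/-- The independent sets of size `t` contained in `A`. -/
noncomputable def indepSubsets {V : Type*} (G : SimpleGraph V) (A : Finset V) (t : ℕ) :
    Finset (Finset V) :=
  (A.powersetCard t).filter (IsIndepFinset G)

open scoped Classical in
/-- Averaging: if `A` spans a proportion at least `α` of its pairs, some vertex of `A` is adjacent to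
a proportion at least `α` of the others. -/
lemma exists_large_degree {V : Type*} [Fintype V] (G : SimpleGraph V) (α : ℝ)
    (A : Finset V) (hA : A.Nonempty)
    (h : α * (A.card.choose 2 : ℝ) ≤ (edgesIn G A : ℝ)) :
    ∃ v ∈ A, α * ((A.card : ℝ) - 1) ≤ ((A.filter (G.Adj v)).card : ℝ) := by
  by_contra! hc
  let H : SimpleGraph V :=
    { Adj := fun u v => G.Adj u v ∧ u ∈ A ∧ v ∈ A
      symm := ⟨fun u v ⟨h1, h2, h3⟩ => ⟨h1.symm, h3, h2⟩⟩
      loopless := ⟨fun u hu => G.loopless.irrefl u hu.1⟩ }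
  have hE : edgesIn G A = H.edgeFinset.card := by
    rw [edgesIn, ← Set.ncard_coe_finset]
    congr 1
    ext e
    induction e with
    | h x y => simp [H]
  have hsum := H.sum_degrees_eq_twice_card_edges
  have hdeg : ∀ v, H.degree v = if v ∈ A then (A.filter (G.Adj v)).card else 0 := by
    intro v
    rw [← SimpleGraph.card_neighborFinset_eq_degree]
    split_ifs with hv
    · congr 1
      ext u
      simp [H, hv, and_comm]
    · rw [Finset.card_eq_zero]
      ext u
      simp [H, hv]
  simp only [hdeg] at hsum
  rw [← Finset.sum_filter, Finset.filter_mem_eq_inter, Finset.univ_inter, ← hE] at hsum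
  have hlt := Finset.sum_lt_sum_of_nonempty hA hc
  have hsumR : (∑ v ∈ A, ((A.filter (G.Adj v)).card : ℝ)) = 2 * (edgesIn G A : ℝ) := by
    exact_mod_cast hsum
  rw [hsumR, Finset.sum_const, nsmul_eq_mul] at hlt
  rw [Nat.cast_choose_two] at h
  nlinarith

lemma card_indepSubsets_le_choose {V : Type*} (G : SimpleGraph V) (A : Finset V) (t : ℕ) :
    (indepSubsets G A t).card ≤ A.card.choose t := by
  classical
  rw [← Finset.card_powersetCard]
  exact Finset.card_filter_le _ _

open scoped Classical in
/-- Splitting independent sets according to whether they contain `v`; those that do lose `v` and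
then live among the non-neighbours of `v`. -/
lemma card_indepSubsets_succ_le {V : Type*} (G : SimpleGraph V) (A : Finset V) (t : ℕ) (v : V) :
    (indepSubsets G A (t + 1)).card ≤ (indepSubsets G (A.erase v) (t + 1)).card +
      (indepSubsets G ((A.erase v).filter fun u => ¬ G.Adj v u) t).card := by
  rw [← Finset.card_filter_add_card_filter_not (s := indepSubsets G A (t + 1)) (fun I => v ∉ I)]
  apply Nat.add_le_add
  · apply Finset.card_le_card
    intro I
    simp only [indepSubsets, Finset.mem_filter, Finset.mem_powersetCard]
    rintro ⟨⟨⟨h1, h2⟩, h3⟩, h4⟩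
    exact ⟨⟨Finset.subset_erase.2 ⟨h1, h4⟩, h2⟩, h3⟩
  · apply Finset.card_le_card_of_injOn (fun I => I.erase v)
    · intro I
      simp only [indepSubsets, Finset.coe_filter, Finset.mem_filter, Finset.mem_powersetCard,
        Set.mem_ofPred_eq, not_not]
      rintro ⟨⟨⟨h1, h2⟩, h3⟩, h4⟩
      refine ⟨⟨?_, ?_⟩, ?_⟩
      · intro u hu
        have hu' := Finset.mem_erase.1 hu
        exact Finset.mem_filter.2
          ⟨Finset.mem_erase.2 ⟨hu'.1, h1 hu'.2⟩, h3 v h4 u hu'.2⟩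
      · rw [Finset.card_erase_of_mem h4, h2]; rfl
      · intro a ha b hb
        exact h3 a (Finset.mem_of_mem_erase ha) b (Finset.mem_of_mem_erase hb)
    · intro I hI J hJ hIJ
      simp only [Finset.coe_filter, Set.mem_ofPred_eq, not_not] at hI hJ
      rw [← Finset.insert_erase hI.2, ← Finset.insert_erase hJ.2]
      exact congrArg (insert v) hIJ

lemma choose_le_choose_mul_choose {a m s t : ℕ} (hst : s ≤ t) (ham : a ≤ m) :
    a.choose t ≤ a.choose s * m.choose (t - s) := by
  rcases le_or_gt t a with hta | hta
  · calc a.choose t ≤ a.choose t * t.choose s :=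
          Nat.le_mul_of_pos_right _ (Nat.choose_pos hst)
      _ = a.choose s * (a - s).choose (t - s) := Nat.choose_mul hst
      _ ≤ _ := Nat.mul_le_mul_left _ (Nat.choose_le_choose _ (by omega))
  · simp [Nat.choose_eq_zero_of_lt hta]

/-- The Kleitman–Winston bound inside an arbitrary vertex set `A`. -/
lemma card_indepSubsets_le {V : Type*} [Fintype V] {m : ℕ} {α : ℝ} (hα1 : α ≤ 1)
    (G : SimpleGraph V) (hG : IsPseudorandom G α m) (k : ℕ) :
    ∀ (A : Finset V) (s t : ℕ), A.card = k → s ≤ t → (1 - α) ^ s * (A.card : ℝ) ≤ m →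
      (indepSubsets G A t).card ≤ A.card.choose s * m.choose (t - s) := by
  classical
  induction k using Nat.strong_induction_on with
  | _ k ih =>
  intro A s t hk hst hA
  rcases le_or_gt A.card m with hAm | hAm
  · exact (card_indepSubsets_le_choose G A t).trans (choose_le_choose_mul_choose hst hAm)
  obtain _ | s := s
  · have : A.card ≤ m := by
      rw [pow_zero, one_mul] at hA
      exact_mod_cast hA
    omega
  obtain ⟨t, rfl⟩ : ∃ r, t = r + 1 := ⟨t - 1, by omega⟩
  obtain ⟨v, hv, hdeg⟩ := exists_large_degree G α A (Finset.card_pos.1 (by omega)) (hG A hAm.le)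
  set B := A.erase v with hB
  set C := B.filter fun u => ¬ G.Adj v u with hC
  have hBc : B.card + 1 = A.card := Finset.card_erase_add_one hv
  have hCB : C.card ≤ B.card := Finset.card_filter_le _ _
  have hCc : (A.filter (G.Adj v)).card + C.card = B.card := by
    have hAB : A.filter (G.Adj v) = B.filter (G.Adj v) := by
      rw [hB, Finset.filter_erase, Finset.erase_eq_of_notMem (by simp)]
    rw [hAB, hC, Finset.card_filter_add_card_filter_not]
  have hBR : (B.card : ℝ) + 1 = A.card := by exact_mod_cast hBc
  have hCR : ((A.filter (G.Adj v)).card : ℝ) + C.card = B.card := by exact_mod_cast hCc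
  have h1α : 0 ≤ 1 - α := by linarith
  have hCle : (C.card : ℝ) ≤ (1 - α) * A.card := by nlinarith
  have h1 := ih B.card (by omega) B (s + 1) (t + 1) rfl hst
    ((mul_le_mul_of_nonneg_left (by linarith) (pow_nonneg h1α _)).trans hA)
  have h2 := ih C.card (by omega) C s t rfl (by omega) (by
    refine (mul_le_mul_of_nonneg_left hCle (pow_nonneg h1α s)).trans ?_
    rwa [← mul_assoc, ← pow_succ])
  have hts : t + 1 - (s + 1) = t - s := by omega
  rw [hts] at h1 ⊢
  calc _ ≤ _ := card_indepSubsets_succ_le G A t v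
    _ ≤ B.card.choose (s + 1) * m.choose (t - s) + B.card.choose s * m.choose (t - s) :=
        Nat.add_le_add h1 (h2.trans (Nat.mul_le_mul_right _ (Nat.choose_le_choose _ hCB)))
    _ = A.card.choose (s + 1) * m.choose (t - s) := by
        rw [← hBc, Nat.choose_succ_succ]; ring

/-- If `n ≥ m ≥ t ≥ s ≥ 1`, `α ∈ [0,1]`, and `G` is an `n`-vertex `(α,m)`-pseudorandom
graph with `exp(−αs)·n ≤ m`, then the number of independent sets of size `t` in `G` is at
most `C(n,s)·C(m,t−s)`. -/
theorem count_indep_sets_pseudorandom {n m t s : ℕ} (hs : 1 ≤ s) (hst : s ≤ t)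
    (htm : t ≤ m) (hmn : m ≤ n) {α : ℝ} (hα0 : 0 ≤ α) (hα1 : α ≤ 1)
    (G : SimpleGraph (Fin n)) (hG : IsPseudorandom G α m)
    (h : Real.exp (-(α * s)) * n ≤ m) :
    {I : Finset (Fin n) | I.card = t ∧ IsIndepFinset G I}.ncard
      ≤ n.choose s * m.choose (t - s) := by
  classical
  have heq : {I : Finset (Fin n) | I.card = t ∧ IsIndepFinset G I} =
      (indepSubsets G Finset.univ t : Set (Finset (Fin n))) := by
    ext I
    simp [indepSubsets]
  rw [heq, Set.ncard_coe_finset]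
  have hexp : (1 - α) ^ s ≤ Real.exp (-(α * s)) := by
    calc (1 - α) ^ s ≤ Real.exp (-α) ^ s :=
          pow_le_pow_left₀ (by linarith) (Real.one_sub_le_exp_neg α) s
      _ = Real.exp (-(α * s)) := by
          rw [← Real.exp_nat_mul]
          congr 1
          ring
  have hmain := card_indepSubsets_le hα1 G hG n Finset.univ s t (by simp) hst (by
    rw [Finset.card_univ, Fintype.card_fin]
    exact (mul_le_mul_of_nonneg_right hexp (Nat.cast_nonneg n)).trans h)
  simpa using hmain
end

section
/- Let T denote the 3-uniform hypergraph (generalized triangle) consisting of three triples e,f,g with e ∩ f ∩ g = ∅ and e ∩ f, f ∩ g, e ∩ g all non-empty. There exist absolute constants c₁,c₂ > 0 such that for all integers t ≥ 3, c₁·t^{3/2}/(log t)^{3/4} ≤ r(T,t) ≤ c₂·t^{3/2}. -/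
/-!
**Upper bound.** Let `H` be a `T`-free triple system on `n` points all of whose independent sets
have fewer than `t` points. In the neighbourhood of a vertex `v`, the points of codegree one with
`v` form an independent set, and the triples spanned by the points of codegree at least two are pairwise
disjoint, so at least half of the latter are independent. Hence neighbourhoods have at most `3 t`
points (`nbhd_card_le`). Every triple contains a pair of codegree at most two (`exists_light`), so
`H` has at most `6 t n` triples, and random deletion (`turan`) finds an independent set of order
`n / √t`. Therefore `n = O(t ^ (3 / 2))`.

**Lower bound.** Take the `q ^ 3` points `(x, y, z)` and the `q ^ 3` lines `y = a x - b`,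
`z = b x - c` over a field with `q` elements. This geometry has no triangles (`no_triangle`), so
planting on each line a `T`-free system gives a `T`-free system (`global_tfree`). The planted system
is a tripartite one with of order `q ^ 2` triples, built from the directed edges of the
`D`-dimensional cube, `2 ^ D ≈ q`, and their directions, each direction being taken `≈ q / D` times.
It is `T`-free because the edges of a given direction form an induced matching in the cube. Its
vertices are permuted at random, independently on each line.

A set of `k ≤ D` points of a line contains a triple of the randomly permuted system with probability
of order at least `k ^ 3 / q`, by the second moment method (`avoid_count`, `exists_line_system`). A
set of `2 k q ^ 2` points meets a positive proportion of the lines in at least `k` points, by a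
variance argument using the absence of triangles (`many_rich_lines`). Such a set is thus independent
with probability at most `exp (-c k ^ 3 q ^ 2)`, against `exp (6 k q ^ 2 log q)` candidate sets. For
`k` a large multiple of `√(log q)` the union bound (`exists_global`) leaves a system on `q ^ 3`
points without an independent set of size `2 k q ^ 2`. Choosing `q` prime with `2 k q ^ 2 ≈ t` gives
`r(T,t) > q ^ 3`, of order `t ^ (3 / 2) / (log t) ^ (3 / 4)`.
-/

/-- `H` is `T`-free, where `T` is the generalized triangle: there are no three triples
`e, f, g` of `H` with `e ∩ f ∩ g = ∅` and `e ∩ f`, `f ∩ g`, `e ∩ g` all non-empty. -/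
def GenTriangleFree {n : ℕ} (H : Finset (Finset (Fin n))) : Prop :=
  ¬ ∃ e ∈ H, ∃ f ∈ H, ∃ g ∈ H,
      e ∩ f ∩ g = ∅ ∧ (e ∩ f).Nonempty ∧ (f ∩ g).Nonempty ∧ (e ∩ g).Nonempty

/-- `r(T,t)`: the minimum `n` such that every `T`-free triple system on `n` vertices
contains an independent set of size `t` (a set of `t` vertices containing no triple). -/
noncomputable def ramseyGenTriangle (t : ℕ) : ℕ :=
  sInf {n : ℕ | ∀ H : Finset (Finset (Fin n)), (∀ e ∈ H, e.card = 3) →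
    GenTriangleFree H → ∃ I : Finset (Fin n), I.card = t ∧ ∀ e ∈ H, ¬ e ⊆ I}

/-! ### Independent sets in systems without generalized triangles -/

/-- No generalized triangle in `H`: three members of `H` that pairwise meet have a common point.
This is `GenTriangleFree` over an arbitrary vertex type, with intersections spelled out
pointwise. The three members need not be distinct; if two coincide there is nothing to prove. -/
def TFree {α : Type*} (H : Finset (Finset α)) : Prop :=
  ∀ e ∈ H, ∀ f ∈ H, ∀ g ∈ H, (∃ x ∈ e, x ∈ f) → (∃ x ∈ f, x ∈ g) → (∃ x ∈ e, x ∈ g) →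
    ∃ w ∈ e, w ∈ f ∧ w ∈ g

/-- `I` contains no member of `H`. -/
def Indep {α : Type*} (H : Finset (Finset α)) (I : Finset α) : Prop := ∀ e ∈ H, ¬ e ⊆ I

section Upper

variable {α : Type*} [Fintype α] [DecidableEq α]

/-- The codegree of the pair `x, y`: the number of members of `H` containing both. For `x = y`
this is the degree of `x`. -/
def codeg (H : Finset (Finset α)) (x y : α) : ℕ := (H.filter (fun e => x ∈ e ∧ y ∈ e)).card

/-- The neighbourhood of `v`: the points other than `v` sharing a triple with it. -/
def nbhd (H : Finset (Finset α)) (v : α) : Finset α :=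
  Finset.univ.filter (fun x => x ≠ v ∧ ∃ e ∈ H, v ∈ e ∧ x ∈ e)

/-- The neighbours of `v` of codegree one with `v` form an independent set: inside a triple `g` of
such neighbours, any two of the triples joining `v` to a point of `g` meet on `g`, so they all
coincide with one triple, which would then contain `v` and all of `g`. -/
lemma indep_low {H : Finset (Finset α)} (h3 : ∀ e ∈ H, e.card = 3) (hT : TFree H) (v : α) :
    Indep H ((nbhd H v).filter (fun x => codeg H v x ≤ 1)) := by
  intro g hg hsub
  have key : ∀ x ∈ g, x ≠ v ∧ (∃ e ∈ H, v ∈ e ∧ x ∈ e) ∧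
      ∀ e ∈ H, ∀ f ∈ H, v ∈ e → x ∈ e → v ∈ f → x ∈ f → e = f := by
    intro x hx
    have := hsub hx
    simp only [nbhd, Finset.mem_filter, Finset.mem_univ, true_and] at this
    refine ⟨this.1.1, this.1.2, ?_⟩
    intro e he f hf h1 h2 h3 h4
    exact Finset.card_le_one.1 this.2 e (by simp [he, h1, h2]) f (by simp [hf, h3, h4])
  obtain ⟨x, hx⟩ : g.Nonempty := by rw [← Finset.card_pos, h3 g hg]; norm_num
  obtain ⟨e, he, hve, hxe⟩ := (key x hx).2.1
  -- all the triples through `v` and a point of `g` coincide with `e`, so `e` has four elements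
  have hge : g ⊆ e := by
    intro y hy
    obtain ⟨f, hf, hvf, hyf⟩ := (key y hy).2.1
    obtain ⟨w, hwe, hwf, hwg⟩ := hT e he f hf g hg ⟨v, hve, hvf⟩ ⟨y, hyf, hy⟩ ⟨x, hxe, hx⟩
    rw [(key w hwg).2.2 e he f hf hve hwe hvf hwf]
    exact hyf
  have hvg : v ∉ g := fun h => (key v h).1 rfl
  have := Finset.card_le_card (Finset.insert_subset hve hge)
  rw [Finset.card_insert_of_notMem hvg, h3 g hg, h3 e he] at this
  omega

/-- Triples formed by neighbours of `v` of codegree at least two with `v` are pairwise disjoint: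
a triple `g` through `x` contains the other endpoint of every triple on `v, x`. As there are at least
two such endpoints, `g` is determined by `x`. -/
lemma eq_of_high {H : Finset (Finset α)} (h3 : ∀ e ∈ H, e.card = 3) (hT : TFree H) (v : α)
    {g g' : Finset α} (hg : g ∈ H) (hg' : g' ∈ H)
    (hs : g ⊆ (nbhd H v).filter (fun x => 2 ≤ codeg H v x))
    (hs' : g' ⊆ (nbhd H v).filter (fun x => 2 ≤ codeg H v x)) {x : α} (hx : x ∈ g)
    (hx' : x ∈ g') : g = g' := by
  have key : ∀ g ∈ H, g ⊆ (nbhd H v).filter (fun x => 2 ≤ codeg H v x) → x ∈ g →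
      ∀ e ∈ H, v ∈ e → x ∈ e → e.erase v ⊆ g := by
    intro g hg hs hx e he hve hxe x' hx'
    rw [Finset.mem_erase] at hx'
    by_contra hx'g
    have hmem : ∀ y ∈ g, y ≠ v ∧ 2 ≤ codeg H v y := by
      intro y hy
      have := hs hy
      simp only [nbhd, Finset.mem_filter, Finset.mem_univ, true_and] at this
      exact ⟨this.1.1, this.2⟩
    obtain ⟨y, hy, hyx⟩ := Finset.exists_mem_ne (by rw [h3 g hg]; norm_num) x
    have hxx' : x ≠ x' := fun h => hx'g (h ▸ hx)
    have hxv := (hmem x hx).1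
    have hyv := (hmem y hy).1
    have he3 : e = {v, x, x'} := by
      symm
      apply Finset.eq_of_subset_of_card_le
      · intro a; simp only [Finset.mem_insert, Finset.mem_singleton]
        rintro (rfl | rfl | rfl)
        exacts [hve, hxe, hx'.2]
      · rw [h3 e he, Finset.card_eq_three.2 ⟨v, x, x', hxv.symm, hx'.1.symm, hxx', rfl⟩]
    -- with `e` and `g`, every triple on `v, y` must pass through `x`, so there is only one
    obtain ⟨f, hf, f', hf', hne⟩ := Finset.one_lt_card.1 (hmem y hy).2
    have hall : ∀ f ∈ H.filter (fun e => v ∈ e ∧ y ∈ e), f = {v, x, y} := by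
      intro f hf
      rw [Finset.mem_filter] at hf
      obtain ⟨w, hwe, hwf, hwg⟩ :=
        hT e he f hf.1 g hg ⟨v, hve, hf.2.1⟩ ⟨y, hf.2.2, hy⟩ ⟨x, hxe, hx⟩
      have hwx : w = x := by
        rw [he3] at hwe
        simp only [Finset.mem_insert, Finset.mem_singleton] at hwe
        rcases hwe with rfl | rfl | rfl
        · exact absurd rfl (hmem _ hwg).1
        · rfl
        · exact absurd hwg hx'g
      subst hwx
      symm
      apply Finset.eq_of_subset_of_card_le
      · intro a; simp only [Finset.mem_insert, Finset.mem_singleton]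
        rintro (rfl | rfl | rfl)
        exacts [hf.2.1, hwf, hf.2.2]
      · rw [h3 f hf.1, Finset.card_eq_three.2 ⟨v, w, y, hxv.symm, hyv.symm, hyx.symm, rfl⟩]
    exact hne ((hall f hf).trans (hall f' hf').symm)
  have h2 : 2 ≤ codeg H v x := (Finset.mem_filter.1 (hs hx)).2
  obtain ⟨e, he, e', he', hne⟩ := Finset.one_lt_card.1 h2
  rw [Finset.mem_filter] at he he'
  have hcard : 3 ≤ ((e ∪ e').erase v).card := by
    have h1 : e.card < (e ∪ e').card := by
      apply Finset.card_lt_card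
      refine Finset.ssubset_iff_subset_ne.2 ⟨Finset.subset_union_left, fun h => hne ?_⟩
      symm
      apply Finset.eq_of_subset_of_card_le
      · rw [h]; exact Finset.subset_union_right
      · rw [h3 e he.1, h3 e' he'.1]
    rw [h3 e he.1] at h1
    rw [Finset.card_erase_of_mem (Finset.mem_union_left _ he.2.1)]
    omega
  have fin : ∀ g ∈ H, g ⊆ (nbhd H v).filter (fun x => 2 ≤ codeg H v x) → x ∈ g →
      (e ∪ e').erase v = g := by
    intro g hg hs hx
    apply Finset.eq_of_subset_of_card_le
    · intro a ha
      rw [Finset.mem_erase, Finset.mem_union] at ha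
      rcases ha.2 with h | h
      · exact key g hg hs hx e he.1 he.2.1 he.2.2 (Finset.mem_erase.2 ⟨ha.1, h⟩)
      · exact key g hg hs hx e' he'.1 he'.2.1 he'.2.2 (Finset.mem_erase.2 ⟨ha.1, h⟩)
    · rw [h3 g hg]; exact hcard
  rw [← fin g hg hs hx, fin g' hg' hs' hx']

/-- The neighbourhood splits into the independent part of low codegree and the part `B` of high
codegree. On `B` the triples are pairwise disjoint, so a maximal independent subset `I` of `B` has
at least half of its points: each point outside `I` completes a triple with points of `I`, and
different outside points use different (hence disjoint) triples. -/
lemma nbhd_card_le {H : Finset (Finset α)} (h3 : ∀ e ∈ H, e.card = 3) (hT : TFree H) (v : α)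
    {t : ℕ} (ht : ∀ I, Indep H I → I.card < t) : (nbhd H v).card ≤ 3 * t := by
  classical
  set B := (nbhd H v).filter (fun x => 2 ≤ codeg H v x) with hB
  have hA := ht _ (indep_low h3 hT v)
  have hsplit : (nbhd H v).card =
      ((nbhd H v).filter (fun x => codeg H v x ≤ 1)).card + B.card := by
    rw [hB, ← Finset.card_filter_add_card_filter_not (s := nbhd H v) (fun x => codeg H v x ≤ 1)]
    congr 2
    ext x; simp; intro _; omega
  have hne : (B.powerset.filter (fun I => Indep H I)).Nonempty := by
    refine ⟨∅, ?_⟩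
    simp only [Finset.mem_filter, Finset.mem_powerset, Finset.empty_subset, true_and]
    intro e he hsub
    have := h3 e he
    rw [Finset.subset_empty.1 hsub] at this
    simp at this
  obtain ⟨I, hI, hmax⟩ := Finset.exists_max_image _ Finset.card hne
  simp only [Finset.mem_filter, Finset.mem_powerset] at hI hmax
  have hbad : ∀ b ∈ B \ I, ∃ a ∈ I, ∃ g ∈ H, g ⊆ insert b I ∧ a ∈ g ∧ b ∈ g := by
    intro b hb
    rw [Finset.mem_sdiff] at hb
    have : ¬ Indep H (insert b I) := by
      intro h
      have := hmax (insert b I) ⟨Finset.insert_subset hb.1 hI.1, h⟩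
      rw [Finset.card_insert_of_notMem hb.2] at this
      omega
    unfold Indep at this
    push Not at this
    obtain ⟨g, hg, hgs⟩ := this
    have hbg : b ∈ g := by
      by_contra hbg
      exact hI.2 g hg ((Finset.subset_insert_iff_of_notMem hbg).1 hgs)
    obtain ⟨a, ha, hab⟩ := Finset.exists_mem_ne (by rw [h3 g hg]; norm_num) b
    exact ⟨a, (Finset.mem_insert.1 (hgs ha)).resolve_left hab, g, hg, hgs, ha, hbg⟩
  choose! φ hφ g hg hgs hag hbg using hbad
  have hle : (B \ I).card ≤ I.card := by
    apply Finset.card_le_card_of_injOn φ hφ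
    intro b hb b' hb' heq
    have hb1 := hb
    have hb1' := hb'
    rw [Finset.mem_coe, Finset.mem_sdiff] at hb1 hb1'
    have h := eq_of_high h3 hT v (hg b hb) (hg b' hb')
      ((hgs b hb).trans (Finset.insert_subset hb1.1 hI.1))
      ((hgs b' hb').trans (Finset.insert_subset hb1'.1 hI.1)) (hag b hb)
      (heq ▸ hag b' hb')
    have := hgs b hb (h ▸ hbg b' hb')
    exact ((Finset.mem_insert.1 this).resolve_right hb1'.2).symm
  have := ht I hI.2
  have h5 := Finset.card_sdiff_add_card_eq_card hI.1
  omega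

omit [Fintype α] in
/-- Every triple contains a pair of codegree at most two: if all three pairs had codegree at least
three, one could replace the vertices one at a time and obtain a generalized triangle. -/
lemma exists_light {H : Finset (Finset α)} (h3 : ∀ e ∈ H, e.card = 3) (hT : TFree H)
    {e : Finset α} (he : e ∈ H) : ∃ x ∈ e, ∃ y ∈ e, x ≠ y ∧ codeg H x y ≤ 2 := by
  obtain ⟨v, x, y, hvx, hvy, hxy, rfl⟩ := Finset.card_eq_three.1 (h3 e he)
  by_contra hcon
  push Not at hcon
  have hx : 2 < codeg H v x := hcon v (by simp) x (by simp) hvx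
  have hy : 2 < codeg H v y := hcon v (by simp) y (by simp) hvy
  have hz : 2 < codeg H x y := hcon x (by simp) y (by simp) hxy
  -- a triple through `a, b` avoiding two prescribed points
  have avoid : ∀ a b c d : α, a ≠ b → c ≠ a → c ≠ b → d ≠ a → d ≠ b → 2 < codeg H a b →
      ∃ f ∈ H, a ∈ f ∧ b ∈ f ∧ c ∉ f ∧ d ∉ f := by
    intro a b c d hab hca hcb hda hdb hc
    by_contra hno
    push Not at hno
    have : H.filter (fun e => a ∈ e ∧ b ∈ e) ⊆ {{a, b, c}, {a, b, d}} := by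
      intro f hf
      rw [Finset.mem_filter] at hf
      have h := hno f hf.1 hf.2.1 hf.2.2
      rw [Finset.mem_insert, Finset.mem_singleton]
      by_cases hcf : c ∈ f
      · left
        symm
        apply Finset.eq_of_subset_of_card_le
        · intro w; simp only [Finset.mem_insert, Finset.mem_singleton]
          rintro (rfl | rfl | rfl)
          exacts [hf.2.1, hf.2.2, hcf]
        · rw [h3 f hf.1, Finset.card_eq_three.2 ⟨a, b, c, hab, hca.symm, hcb.symm, rfl⟩]
      · right
        symm
        apply Finset.eq_of_subset_of_card_le
        · intro w; simp only [Finset.mem_insert, Finset.mem_singleton]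
          rintro (rfl | rfl | rfl)
          exacts [hf.2.1, hf.2.2, h hcf]
        · rw [h3 f hf.1, Finset.card_eq_three.2 ⟨a, b, d, hab, hda.symm, hdb.symm, rfl⟩]
    have h1 := Finset.card_le_card this
    have h2 := Finset.card_le_two (a := ({a, b, c} : Finset α)) (b := {a, b, d})
    unfold codeg at hc
    omega
  obtain ⟨g, hg, hxg, hyg, hvg, -⟩ := avoid x y v v hxy hvx hvy hvx hvy hz
  obtain ⟨z, hz⟩ : ∃ z, g = {x, y, z} ∧ x ≠ z ∧ y ≠ z := by
    have hc : ((g.erase x).erase y).card = 1 := by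
      rw [Finset.card_erase_of_mem (by simp [hxy.symm, hyg]), Finset.card_erase_of_mem hxg, h3 g hg]
    obtain ⟨z, hz⟩ := Finset.card_eq_one.1 hc
    have hzz : z ∈ (g.erase x).erase y := by rw [hz]; simp
    simp only [Finset.mem_erase] at hzz
    refine ⟨z, ?_, hzz.2.1.symm, hzz.1.symm⟩
    symm
    apply Finset.eq_of_subset_of_card_le
    · intro w; simp only [Finset.mem_insert, Finset.mem_singleton]
      rintro (rfl | rfl | rfl)
      exacts [hxg, hyg, hzz.2.2]
    · rw [h3 g hg, Finset.card_eq_three.2 ⟨x, y, z, hxy, hzz.2.1.symm, hzz.1.symm, rfl⟩]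
  obtain ⟨hgz, hxz, hyz⟩ := hz
  have hvz : z ≠ v := by rintro rfl; exact hvg (by rw [hgz]; simp)
  obtain ⟨f, hf, hvf, hxf, hyf, hzf⟩ := avoid v x y z hvx hvy.symm hxy.symm hvz hxz.symm hx
  obtain ⟨f', hf', hvf', hyf', hxf', hzf'⟩ := avoid v y x z hvy hvx.symm hxy hvz hyz.symm hy
  obtain ⟨w, h1, h2, h3⟩ := hT f hf f' hf' g hg ⟨v, hvf, hvf'⟩ ⟨y, hyf', hyg⟩ ⟨x, hxf, hxg⟩
  rw [hgz] at h3
  simp only [Finset.mem_insert, Finset.mem_singleton] at h3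
  rcases h3 with rfl | rfl | rfl
  exacts [hxf' h2, hyf h1, hzf h1]

/-- Each vertex lies in at most `3 * t` light pairs (pairs of codegree at most two), and every
triple contains a light pair. -/
lemma card_edges_le {H : Finset (Finset α)} (h3 : ∀ e ∈ H, e.card = 3) (hT : TFree H)
    {t : ℕ} (ht : ∀ I, Indep H I → I.card < t) : H.card ≤ Fintype.card α * (6 * t) := by
  classical
  have hsub : H ⊆ Finset.univ.biUnion (fun x =>
      ((nbhd H x).filter (fun y => codeg H x y ≤ 2)).biUnion
        (fun y => H.filter (fun e => x ∈ e ∧ y ∈ e))) := by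
    intro e he
    obtain ⟨x, hx, y, hy, hxy, hc⟩ := exists_light h3 hT he
    simp only [Finset.mem_biUnion, Finset.mem_univ, true_and, Finset.mem_filter, nbhd]
    exact ⟨x, y, ⟨⟨hxy.symm, e, he, hx, hy⟩, hc⟩, he, hx, hy⟩
  refine (Finset.card_le_card hsub).trans ?_
  refine Finset.card_biUnion_le_card_mul _ _ _ (fun x _ => ?_)
  refine (Finset.card_biUnion_le_card_mul _ _ 2 (fun y hy => (Finset.mem_filter.1 hy).2)).trans ?_
  have h1 := nbhd_card_le h3 hT x ht
  refine (Nat.mul_le_mul_right 2 ((Finset.card_filter_le (nbhd H x) _).trans h1)).trans ?_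
  omega

omit [Fintype α] in
/-- Deleting one point from each triple inside `W` leaves an independent set. -/
lemma exists_indep_delete {H : Finset (Finset α)} (h3 : ∀ e ∈ H, e.card = 3) (W : Finset α) :
    ∃ I, Indep H I ∧ W.card ≤ I.card + (H.filter (fun e => e ⊆ W)).card := by
  classical
  have : ∀ e ∈ H, ∃ x, x ∈ e := fun e he => Finset.card_pos.1 (by rw [h3 e he]; norm_num)
  rcases isEmpty_or_nonempty α with hα | hα
  · exact ⟨∅, fun e he hsub => by simpa [Finset.subset_empty.1 hsub] using h3 e he,
      by simp [Finset.eq_empty_of_isEmpty W]⟩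
  choose! p hp using this
  refine ⟨W \ (H.filter (fun e => e ⊆ W)).image p, ?_, ?_⟩
  · intro e he hsub
    have h1 := hsub (hp e he)
    rw [Finset.mem_sdiff] at h1
    refine h1.2 (Finset.mem_image_of_mem p ?_)
    exact Finset.mem_filter.2 ⟨he, hsub.trans Finset.sdiff_subset⟩
  · have h1 := Finset.le_card_sdiff ((H.filter (fun e => e ⊆ W)).image p) W
    have h2 := Finset.card_image_le (s := H.filter (fun e => e ⊆ W)) (f := p)
    omega

/-- The probability that a uniformly random map to `Fin (k + 1)` vanishes on `E` is
`(k + 1) ^ (-#E)`, with denominators cleared. -/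
lemma card_fun_zero (k : ℕ) (E : Finset α) :
    (Finset.univ.filter (fun f : α → Fin (k + 1) => ∀ x ∈ E, f x = 0)).card * (k + 1) ^ E.card
      = (k + 1) ^ Fintype.card α := by
  have : Finset.univ.filter (fun f : α → Fin (k + 1) => ∀ x ∈ E, f x = 0) =
      Fintype.piFinset (fun x => if x ∈ E then {0} else Finset.univ) := by
    ext f
    simp only [Finset.mem_filter, Finset.mem_univ, true_and, Fintype.mem_piFinset]
    refine forall_congr' fun x => ?_
    by_cases hx : x ∈ E <;> simp [hx]
  rw [this, Fintype.card_piFinset]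
  have h2 : ∀ x : α, (if x ∈ E then ({0} : Finset (Fin (k+1))) else Finset.univ).card =
      if x ∈ E then 1 else (k + 1) := by
    intro x; split_ifs <;> simp
  simp_rw [h2]
  rw [Finset.prod_ite]
  simp only [Finset.prod_const, one_pow, one_mul]
  rw [← pow_add]
  congr 1
  have := Finset.card_filter_add_card_filter_not (s := (Finset.univ : Finset α)) (fun x => x ∈ E)
  rw [Finset.card_univ] at this
  rw [← this, Finset.filter_univ_mem, add_comm]

/-- Random deletion: the zero set of a random map to `Fin (k + 1)` is a random set of density
`1 / (k + 1)`, so some independent set has size at least `n / (k + 1) - #H / (k + 1) ^ 3`. -/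
lemma turan {H : Finset (Finset α)} (h3 : ∀ e ∈ H, e.card = 3) (k : ℕ) :
    ∃ I, Indep H I ∧ Fintype.card α * (k + 1) ^ 2 ≤ I.card * (k + 1) ^ 3 + H.card := by
  classical
  by_contra hcon
  push Not at hcon
  set n := Fintype.card α with hn
  let W : (α → Fin (k + 1)) → Finset α := fun f => Finset.univ.filter (fun x => f x = 0)
  have h1 : ∀ f : α → Fin (k + 1), (W f).card * (k + 1) ^ 3 + H.card <
      n * (k + 1) ^ 2 + (H.filter (fun e => e ⊆ W f)).card * (k + 1) ^ 3 := by
    intro f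
    obtain ⟨I, hI, hW⟩ := exists_indep_delete h3 (W f)
    have := hcon I hI
    have := Nat.mul_le_mul_right ((k + 1) ^ 3) hW
    rw [add_mul] at this
    omega
  have h2 := Finset.sum_lt_sum_of_nonempty (s := (Finset.univ : Finset (α → Fin (k + 1))))
    Finset.univ_nonempty (fun f _ => h1 f)
  simp only [Finset.sum_add_distrib, ← Finset.sum_mul, Finset.sum_const, Finset.card_univ,
    Fintype.card_fun, Fintype.card_fin, smul_eq_mul] at h2
  have h4 : (∑ f : α → Fin (k + 1), (W f).card) * (k + 1) = n * (k + 1) ^ n := by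
    simp only [W, Finset.card_filter]
    rw [Finset.sum_comm, Finset.sum_mul, hn, ← Finset.card_univ, ← smul_eq_mul, ← Finset.sum_const]
    refine Finset.sum_congr rfl fun x _ => ?_
    rw [← Finset.card_filter]
    have := card_fun_zero k ({x} : Finset α)
    simpa [Finset.card_univ] using this
  have h5 : (∑ f : α → Fin (k + 1), (H.filter (fun e => e ⊆ W f)).card) * (k + 1) ^ 3 =
      H.card * (k + 1) ^ n := by
    simp only [Finset.card_filter]
    rw [Finset.sum_comm, Finset.sum_mul, ← smul_eq_mul, ← Finset.sum_const]
    refine Finset.sum_congr rfl fun e he => ?_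
    rw [← Finset.card_filter]
    have := card_fun_zero k e
    rw [h3 e he] at this
    rw [hn, ← this]
    congr 2
    ext f
    simp [W, Finset.subset_iff]
  rw [h5] at h2
  have h6 : (∑ f : α → Fin (k + 1), (W f).card) * (k + 1) ^ 3 = n * (k + 1) ^ n * (k + 1) ^ 2 := by
    rw [← h4]; ring
  rw [h6] at h2
  nlinarith [h2]

/-- If all independent sets have fewer than `t` points, the edge bound and random deletion with
density `1 / (k + 1)`, where `(k + 1) ^ 2 ≥ 12 * t`, bound the number of vertices. -/
lemma upper_nat {H : Finset (Finset α)} (h3 : ∀ e ∈ H, e.card = 3) (hT : TFree H)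
    {t : ℕ} (ht : ∀ I, Indep H I → I.card < t) (k : ℕ) (hk : 12 * t ≤ (k + 1) ^ 2) :
    Fintype.card α ≤ 2 * t * (k + 1) := by
  obtain ⟨I, hI, h⟩ := turan h3 k
  have h1 := ht I hI
  have h2 := card_edges_le h3 hT ht
  set n := Fintype.card α
  have h4 : n * (k + 1) ^ 2 ≤ t * (k + 1) ^ 3 + n * (6 * t) := by
    have := Nat.mul_le_mul_right ((k + 1) ^ 3) h1.le
    omega
  have h5 : n * (12 * t) ≤ n * (k + 1) ^ 2 := Nat.mul_le_mul_left _ hk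
  have h6 : n * (k + 1) ^ 2 ≤ (2 * t * (k + 1)) * (k + 1) ^ 2 := by
    have : (2 * t * (k + 1)) * (k + 1) ^ 2 = 2 * (t * (k + 1) ^ 3) := by ring
    rw [this]
    have : n * (12 * t) = 2 * (n * (6 * t)) := by ring
    omega
  exact Nat.le_of_mul_le_mul_right h6 (by positivity)

end Upper

/-! ### Random permutations and the second moment -/

section Perm

variable {F : Type*} [Fintype F] [DecidableEq F]

/-- The number of permutations mapping `E` into `A`. -/
def sendCount (A E : Finset F) : ℕ :=
  (Finset.univ.filter (fun σ : Equiv.Perm F => ∀ x ∈ E, σ x ∈ A)).card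

lemma sendCount_eq_of_card_eq (A : Finset F) {E E' : Finset F} (h : E.card = E'.card) :
    sendCount A E = sendCount A E' := by
  have e : {x // x ∈ E} ≃ {x // x ∈ E'} := Finset.equivOfCardEq h
  let τ : Equiv.Perm F := e.extendSubtype
  have hτ : ∀ x ∈ E, τ x ∈ E' := fun x hx => e.extendSubtype_mem x hx
  have hτ' : ∀ y ∈ E', τ.symm y ∈ E := by
    intro y hy
    by_contra hn
    exact (e.extendSubtype_not_mem _ hn) (by simpa [τ] using hy)
  unfold sendCount
  refine Finset.card_bij' (fun σ _ => τ.symm.trans σ) (fun σ _ => τ.trans σ) ?_ ?_ ?_ ?_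
  · intro σ hσ
    simp only [Finset.mem_filter, Finset.mem_univ, true_and] at hσ ⊢
    exact fun y hy => hσ _ (hτ' y hy)
  · intro σ hσ
    simp only [Finset.mem_filter, Finset.mem_univ, true_and] at hσ ⊢
    exact fun y hy => hσ _ (hτ y hy)
  · intro σ _; ext x; simp
  · intro σ _; ext x; simp

/-- Double counting of pairs `(σ, E')` with `#E' = #E` and `σ E' ⊆ A`. -/
lemma sendCount_mul_choose (A E : Finset F) :
    sendCount A E * (Fintype.card F).choose E.card =
      (Fintype.card F).factorial * A.card.choose E.card := by
  have h1 : ∑ E' ∈ Finset.powersetCard E.card Finset.univ, sendCount A E' =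
      sendCount A E * (Fintype.card F).choose E.card := by
    rw [Finset.sum_congr rfl (g := fun _ => sendCount A E) fun E' hE' =>
      sendCount_eq_of_card_eq A (Finset.mem_powersetCard.1 hE').2]
    rw [Finset.sum_const, Finset.card_powersetCard, Finset.card_univ, smul_eq_mul, mul_comm]
  rw [← h1]
  simp only [sendCount, Finset.card_filter]
  rw [Finset.sum_comm]
  have h2 : ∀ σ : Equiv.Perm F, ∑ E' ∈ Finset.powersetCard E.card Finset.univ,
      (if ∀ x ∈ E', σ x ∈ A then 1 else 0) = A.card.choose E.card := by
    intro σ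
    rw [← Finset.card_filter]
    have : (Finset.powersetCard E.card Finset.univ).filter (fun E' => ∀ x ∈ E', σ x ∈ A) =
        Finset.powersetCard E.card (A.map σ.symm.toEmbedding) := by
      ext E'
      simp only [Finset.mem_filter, Finset.mem_powersetCard, Finset.subset_iff,
        Finset.mem_map_equiv, Equiv.symm_symm, Finset.mem_univ, implies_true, true_and]
      tauto
    rw [this, Finset.card_powersetCard, Finset.card_map]
  simp only [h2, Finset.sum_const, Finset.card_univ, Fintype.card_perm, smul_eq_mul]

lemma sendCount_mul_desc (A E : Finset F) :
    sendCount A E * (Fintype.card F).descFactorial E.card =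
      (Fintype.card F).factorial * A.card.descFactorial E.card := by
  rw [Nat.descFactorial_eq_factorial_mul_choose, Nat.descFactorial_eq_factorial_mul_choose]
  have := sendCount_mul_choose A E
  calc _ = E.card.factorial * (sendCount A E * (Fintype.card F).choose E.card) := by ring
    _ = _ := by rw [this]; ring

lemma desc_ratio {k q : ℕ} (hkq : k ≤ q) (j : ℕ) :
    k.descFactorial j * q ^ j ≤ k ^ j * q.descFactorial j := by
  induction j with
  | zero => simp
  | succ j ih =>
    rw [Nat.descFactorial_succ, Nat.descFactorial_succ, pow_succ, pow_succ]
    have h : (k - j) * q ≤ k * (q - j) := by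
      rw [Nat.sub_mul, Nat.mul_sub]
      have : k * j ≤ j * q := by rw [mul_comm]; exact Nat.mul_le_mul_left j hkq
      omega
    calc (k - j) * k.descFactorial j * (q ^ j * q)
        = ((k - j) * q) * (k.descFactorial j * q ^ j) := by ring
      _ ≤ (k * (q - j)) * (k ^ j * q.descFactorial j) := Nat.mul_le_mul h ih
      _ = _ := by ring

/-- A random permutation maps `E` into `A` with probability at most `(#A / #F) ^ #E`. -/
lemma sendCount_le (A E : Finset F) :
    (sendCount A E : ℝ) ≤
      (Fintype.card F).factorial * ((A.card : ℝ) / Fintype.card F) ^ E.card := by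
  have h1 := sendCount_mul_desc A E
  have h2 := desc_ratio (Finset.card_le_univ A) E.card
  have hE : E.card ≤ Fintype.card F := Finset.card_le_univ E
  set q := Fintype.card F
  have hd : 0 < q.descFactorial E.card := Nat.descFactorial_pos.2 hE
  rcases Nat.eq_zero_or_pos q with hq | hq
  · have : E.card = 0 := by omega
    rw [this] at h1 ⊢
    simp only [Nat.descFactorial_zero, mul_one] at h1
    simp [h1]
  rw [div_pow, ← mul_div_assoc, le_div_iff₀ (by positivity)]
  have h3 : sendCount A E * q ^ E.card * q.descFactorial E.card ≤
      q.factorial * A.card ^ E.card * q.descFactorial E.card := by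
    calc _ = (sendCount A E * q.descFactorial E.card) * q ^ E.card := by ring
      _ = q.factorial * (A.card.descFactorial E.card * q ^ E.card) := by rw [h1]; ring
      _ ≤ q.factorial * (A.card ^ E.card * q.descFactorial E.card) := Nat.mul_le_mul_left _ h2
      _ = _ := by ring
  exact_mod_cast Nat.le_of_mul_le_mul_right h3 hd

/-- For triples, and `A` of size at least four, the bound of `sendCount_le` is sharp up to
a factor `4`. -/
lemma le_sendCount (A E : Finset F) (hE : E.card = 3) (hA : 4 ≤ A.card) :
    (Fintype.card F).factorial * ((A.card : ℝ) / Fintype.card F) ^ 3 / 4 ≤ (sendCount A E : ℝ) := by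
  have h1 := sendCount_mul_desc A E
  rw [hE] at h1
  have hq : A.card ≤ Fintype.card F := Finset.card_le_univ A
  set q := Fintype.card F
  set k := A.card
  have h2 : q.descFactorial 3 ≤ q ^ 3 := Nat.descFactorial_le_pow q 3
  have h3 : k ^ 3 ≤ 4 * k.descFactorial 3 := by
    have : k.descFactorial 3 = (k - 2) * ((k - 1) * k) := by simp [Nat.descFactorial_succ]
    rw [this]
    have a1 : k ≤ 2 * (k - 2) := by omega
    have a2 : k ≤ 2 * (k - 1) := by omega
    calc k ^ 3 = k * (k * k) := by ring
      _ ≤ (2 * (k - 2)) * ((2 * (k - 1)) * k) := Nat.mul_le_mul a1 (Nat.mul_le_mul_right k a2)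
      _ = _ := by ring
  have h4 : q.factorial * k ^ 3 ≤ sendCount A E * 4 * q ^ 3 := by
    calc q.factorial * k ^ 3 ≤ q.factorial * (4 * k.descFactorial 3) := Nat.mul_le_mul_left _ h3
      _ = (sendCount A E * q.descFactorial 3) * 4 := by rw [h1]; ring
      _ ≤ (sendCount A E * q ^ 3) * 4 := by gcongr
      _ = _ := by ring
  have hq0 : (0 : ℝ) < (q : ℝ) ^ 3 := by
    have : 0 < q := by omega
    positivity
  rw [div_pow, ← mul_div_assoc, div_div, div_le_iff₀ (by positivity)]
  have h5 : (q.factorial : ℝ) * (k : ℝ) ^ 3 ≤ sendCount A E * 4 * (q : ℝ) ^ 3 := by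
    exact_mod_cast h4
  linarith

variable {L : Type*} [DecidableEq L]

/-- Second moment bound: the images of the members of `H` under a random permutation all fail to lie
in `A` with probability at most `1 - c * #H * (#A / #F) ^ 3`. The number `X` of members landing in
`A` has mean of order `μ = #H * (#A / #F) ^ 3 ≤ 1`. The bounds `w` and `d` on the number of members
sharing two, respectively one, points with a given one make the second moment at most a constant
times `μ`, whence `X ≠ 0` with probability at least a constant times `μ` by Cauchy-Schwarz. -/
lemma avoid_count (φ : L ↪ F) (H : Finset (Finset L)) (h3 : ∀ e ∈ H, e.card = 3) (A : Finset F)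
    (hA : 4 ≤ A.card) (w d : ℕ)
    (hw : ∀ e ∈ H, (H.filter (fun f => 2 ≤ (e ∩ f).card)).card ≤ w)
    (hd : ∀ e ∈ H, (H.filter (fun f => 1 ≤ (e ∩ f).card)).card ≤ d)
    (hwk : w * A.card ≤ Fintype.card F) (hdk : d * A.card ^ 2 ≤ Fintype.card F ^ 2)
    (hHk : H.card * A.card ^ 3 ≤ Fintype.card F ^ 3) :
    ((Finset.univ.filter (fun σ : Equiv.Perm F => ∀ e ∈ H, ¬ ∀ x ∈ e, σ (φ x) ∈ A)).card : ℝ) ≤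
      (Fintype.card F).factorial *
        (1 - H.card * ((A.card : ℝ) / Fintype.card F) ^ 3 / 64) := by
  have hqk : A.card ≤ Fintype.card F := Finset.card_le_univ A
  have hperm : Fintype.card (Equiv.Perm F) = (Fintype.card F).factorial := Fintype.card_perm
  set q := Fintype.card F with hq
  set k := A.card with hk
  set r : ℝ := (k : ℝ) / q with hr
  have hq0 : (0 : ℝ) < q := by exact_mod_cast (by omega : 0 < q)
  have hk0 : (0 : ℝ) < k := by exact_mod_cast (by omega : 0 < k)
  have hr0 : 0 < r := by positivity
  have hr1 : r ≤ 1 := by rw [hr, div_le_one hq0]; exact_mod_cast hqk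
  -- the indicator that `e` lands in `A`
  let hit : Finset L → Equiv.Perm F → ℝ := fun e σ => if ∀ x ∈ e, σ (φ x) ∈ A then 1 else 0
  have hitsum : ∀ e, ∑ σ, hit e σ = sendCount A (e.map φ) := by
    intro e
    simp only [hit, sendCount]
    rw [Finset.sum_boole]
    congr 2
    ext σ
    simp
  let X : Equiv.Perm F → ℝ := fun σ => ∑ e ∈ H, hit e σ
  have hX1 : q.factorial * (H.card * r ^ 3 / 4) ≤ ∑ σ, X σ := by
    simp only [X]
    rw [Finset.sum_comm]
    simp only [hitsum]
    calc q.factorial * (H.card * r ^ 3 / 4) = ∑ e ∈ H, q.factorial * r ^ 3 / 4 := by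
          rw [Finset.sum_const, nsmul_eq_mul]; ring
      _ ≤ _ := Finset.sum_le_sum fun e he =>
          le_sendCount A (e.map φ) (by rw [Finset.card_map, h3 e he]) hA
  have hpair : ∀ e ∈ H, ∀ f ∈ H, ∑ σ, hit e σ * hit f σ ≤ q.factorial *
      ((if e = f then r ^ 3 else 0) + (if 2 ≤ (e ∩ f).card then r ^ 4 else 0) +
        (if 1 ≤ (e ∩ f).card then r ^ 5 else 0) + r ^ 6) := by
    intro e he f hf
    have h1 : ∀ σ, hit e σ * hit f σ = hit (e ∪ f) σ := by
      intro σ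
      simp only [hit, Finset.forall_mem_union]
      split_ifs <;> simp_all
    simp only [h1, hitsum]
    refine (sendCount_le A _).trans ?_
    rw [Finset.card_map, ← hq, ← hk, ← hr]
    refine mul_le_mul_of_nonneg_left ?_ (by positivity)
    have h2 := Finset.card_union_add_card_inter e f
    rw [h3 e he, h3 f hf] at h2
    have p3 : 0 ≤ r ^ 3 := by positivity
    have p4 : 0 ≤ r ^ 4 := by positivity
    have p5 : 0 ≤ r ^ 5 := by positivity
    have p6 : 0 ≤ r ^ 6 := by positivity
    have h9 := Finset.card_le_card (Finset.inter_subset_left (s₁ := e) (s₂ := f))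
    rw [h3 e he] at h9
    have hcases : (e ∩ f).card = 0 ∨ (e ∩ f).card = 1 ∨ (e ∩ f).card = 2 ∨ (e ∩ f).card = 3 := by
      omega
    rcases hcases with h | h | h | h
    · have : (e ∪ f).card = 6 := by omega
      rw [this, h]
      split_ifs <;> first | omega | linarith
    · have : (e ∪ f).card = 5 := by omega
      rw [this, h]
      split_ifs <;> first | omega | linarith
    · have : (e ∪ f).card = 4 := by omega
      rw [this, h]
      split_ifs <;> first | omega | linarith
    · have h4 : (e ∪ f).card = 3 := by omega
      have h5 : e = f := by
        have a1 : e ∩ f = e := Finset.eq_of_subset_of_card_le Finset.inter_subset_left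
          (by rw [h3 e he, h])
        have a2 : e ∩ f = f := Finset.eq_of_subset_of_card_le Finset.inter_subset_right
          (by rw [h3 f hf, h])
        rw [← a1, a2]
      rw [h4, if_pos h5]
      split_ifs <;> linarith
  have hrow : ∀ e ∈ H, ∑ f ∈ H, ((if e = f then r ^ 3 else 0) +
      (if 2 ≤ (e ∩ f).card then r ^ 4 else 0) +
        (if 1 ≤ (e ∩ f).card then r ^ 5 else 0) + r ^ 6) ≤ 4 * r ^ 3 := by
    intro e he
    simp only [Finset.sum_add_distrib, Finset.sum_ite_eq, he, if_true, ← Finset.sum_filter,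
      Finset.sum_const, nsmul_eq_mul]
    have e4 : ((H.filter (fun f => 2 ≤ (e ∩ f).card)).card : ℝ) * r ≤ 1 := by
      have : ((H.filter (fun f => 2 ≤ (e ∩ f).card)).card : ℝ) ≤ w := by exact_mod_cast hw e he
      refine (mul_le_mul_of_nonneg_right this hr0.le).trans ?_
      rw [hr, ← mul_div_assoc, div_le_one hq0]
      exact_mod_cast hwk
    have e5 : ((H.filter (fun f => 1 ≤ (e ∩ f).card)).card : ℝ) * r ^ 2 ≤ 1 := by
      have : ((H.filter (fun f => 1 ≤ (e ∩ f).card)).card : ℝ) ≤ d := by exact_mod_cast hd e he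
      refine (mul_le_mul_of_nonneg_right this (by positivity)).trans ?_
      rw [hr, div_pow, ← mul_div_assoc, div_le_one (by positivity)]
      exact_mod_cast hdk
    have e6 : (H.card : ℝ) * r ^ 3 ≤ 1 := by
      rw [hr, div_pow, ← mul_div_assoc, div_le_one (by positivity)]
      exact_mod_cast hHk
    have p3 : 0 ≤ r ^ 3 := by positivity
    nlinarith [mul_le_mul_of_nonneg_right e4 p3, mul_le_mul_of_nonneg_right e5 p3,
      mul_le_mul_of_nonneg_right e6 p3]
  have hX2 : ∑ σ, X σ ^ 2 ≤ q.factorial * (H.card * (4 * r ^ 3)) := by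
    calc ∑ σ, X σ ^ 2 = ∑ e ∈ H, ∑ f ∈ H, ∑ σ, hit e σ * hit f σ := by
          simp only [X, sq, Finset.sum_mul_sum]
          rw [Finset.sum_comm]
          refine Finset.sum_congr rfl fun e _ => ?_
          rw [Finset.sum_comm]
      _ ≤ ∑ e ∈ H, q.factorial * (4 * r ^ 3) := by
          refine Finset.sum_le_sum fun e he => ?_
          refine (Finset.sum_le_sum fun f hf => hpair e he f hf).trans ?_
          rw [← Finset.mul_sum]
          exact mul_le_mul_of_nonneg_left (hrow e he) (by positivity)
      _ = _ := by rw [Finset.sum_const, nsmul_eq_mul]; ring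
  -- Cauchy-Schwarz off the zero set `Z` of `X`
  set Z := Finset.univ.filter (fun σ : Equiv.Perm F => ∀ e ∈ H, ¬ ∀ x ∈ e, σ (φ x) ∈ A) with hZ
  have hXZ : ∀ σ ∈ Z, X σ = 0 := by
    intro σ hσ
    refine Finset.sum_eq_zero fun e he => if_neg ?_
    exact (Finset.mem_filter.1 hσ).2 e he
  have hsum : ∑ σ ∈ Zᶜ, X σ = ∑ σ, X σ := by
    rw [← Finset.sum_add_sum_compl Z, Finset.sum_eq_zero hXZ, zero_add]
  have hCS : (∑ σ, X σ) ^ 2 ≤ (Zᶜ.card : ℝ) * ∑ σ, X σ ^ 2 := by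
    rw [← hsum]
    refine (sq_sum_le_card_mul_sum_sq (s := Zᶜ)).trans ?_
    refine mul_le_mul_of_nonneg_left ?_ (by positivity)
    exact Finset.sum_le_sum_of_subset_of_nonneg (Finset.subset_univ _) fun p _ _ => sq_nonneg _
  have hZc : (Z.card : ℝ) = q.factorial - Zᶜ.card := by
    have := Finset.card_add_card_compl Z
    rw [hperm] at this
    have h : (Z.card : ℝ) + Zᶜ.card = q.factorial := by exact_mod_cast this
    linarith
  rcases Finset.eq_empty_or_nonempty H with hH | hH
  · rw [hZc, hH]; simp
  have hH0 : (0 : ℝ) < H.card := by exact_mod_cast hH.card_pos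
  have hf0 : (0 : ℝ) < q.factorial := by exact_mod_cast Nat.factorial_pos q
  have h7 : (q.factorial * (H.card * r ^ 3 / 4)) ^ 2 ≤
      (Zᶜ.card : ℝ) * (q.factorial * (H.card * (4 * r ^ 3))) :=
    (pow_le_pow_left₀ (by positivity) hX1 2).trans
      (hCS.trans (mul_le_mul_of_nonneg_left hX2 (by positivity)))
  have h8 : (q.factorial : ℝ) * (H.card * r ^ 3 / 64) ≤ Zᶜ.card := by
    have hp : 0 < q.factorial * (H.card * (4 * r ^ 3)) := by positivity
    refine le_of_mul_le_mul_right ?_ hp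
    calc _ = (q.factorial * (H.card * r ^ 3 / 4)) ^ 2 := by ring
      _ ≤ _ := h7
  rw [hZc]
  linarith

end Perm

/-! ### The cube system -/

section Cube

/-- Vertices of the cube system: two copies of the `D`-dimensional cube and `w` copies of each of
its `D` directions. -/
abbrev CubeVert (D w : ℕ) : Type := (Fin D → Fin 2) ⊕ (Fin D → Fin 2) ⊕ (Fin D × Fin w)

variable {D w : ℕ}

/-- The triple of the cube point `x = z.1`, the copy `z.2 = (i, j)` of the direction `i`, and the
point obtained from `x` by setting coordinate `i` to one. -/
def cubeEdge (z : (Fin D → Fin 2) × Fin D × Fin w) : Finset (CubeVert D w) :=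
  {Sum.inl z.1, Sum.inr (Sum.inl (Function.update z.1 z.2.1 1)), Sum.inr (Sum.inr z.2)}

/-- The indices with `x i = 0`, for which `cubeEdge` corresponds to an upward edge of the cube. -/
def cubeIdx (D w : ℕ) : Finset ((Fin D → Fin 2) × Fin D × Fin w) :=
  Finset.univ.filter (fun z => z.1 z.2.1 = 0)

/-- The cube system: the upward edges of the cube, each extended by the
`w` copies of its direction. -/
def cubeSystem (D w : ℕ) : Finset (Finset (CubeVert D w)) := (cubeIdx D w).image cubeEdge

lemma mem_cubeIdx {z : (Fin D → Fin 2) × Fin D × Fin w} : z ∈ cubeIdx D w ↔ z.1 z.2.1 = 0 := by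
  simp [cubeIdx]

lemma cubeEdge_card (z : (Fin D → Fin 2) × Fin D × Fin w) : (cubeEdge z).card = 3 :=
  Finset.card_eq_three.2 ⟨_, _, _, by simp, by simp, by simp, rfl⟩

lemma inl_mem {z : (Fin D → Fin 2) × Fin D × Fin w} {x} :
    (Sum.inl x : CubeVert D w) ∈ cubeEdge z ↔ x = z.1 := by simp [cubeEdge]

lemma inm_mem {z : (Fin D → Fin 2) × Fin D × Fin w} {x} :
    (Sum.inr (Sum.inl x) : CubeVert D w) ∈ cubeEdge z ↔ x = Function.update z.1 z.2.1 1 := by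
  simp [cubeEdge]

lemma inr_mem {z : (Fin D → Fin 2) × Fin D × Fin w} {y} :
    (Sum.inr (Sum.inr y) : CubeVert D w) ∈ cubeEdge z ↔ y = z.2 := by simp [cubeEdge]

lemma cubeEdge_inj : Function.Injective (cubeEdge (D := D) (w := w)) := by
  intro z z' h
  have h1 : (Sum.inl z.1 : CubeVert D w) ∈ cubeEdge z' := h ▸ inl_mem.2 rfl
  have h2 : (Sum.inr (Sum.inr z.2) : CubeVert D w) ∈ cubeEdge z' := h ▸ inr_mem.2 rfl
  exact Prod.ext (inl_mem.1 h1) (inr_mem.1 h2)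

lemma share_iff {z z' : (Fin D → Fin 2) × Fin D × Fin w} :
    (∃ a ∈ cubeEdge z, a ∈ cubeEdge z') ↔ z.1 = z'.1 ∨
      Function.update z.1 z.2.1 1 = Function.update z'.1 z'.2.1 1 ∨ z.2 = z'.2 := by
  constructor
  · rintro ⟨a | a | a, h, h'⟩
    · exact Or.inl ((inl_mem.1 h).symm.trans (inl_mem.1 h'))
    · exact Or.inr (Or.inl ((inm_mem.1 h).symm.trans (inm_mem.1 h')))
    · exact Or.inr (Or.inr ((inr_mem.1 h).symm.trans (inr_mem.1 h')))
  · rintro (h | h | h)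
    · exact ⟨_, inl_mem.2 rfl, inl_mem.2 h⟩
    · exact ⟨_, inm_mem.2 rfl, inm_mem.2 h⟩
    · exact ⟨_, inr_mem.2 rfl, inr_mem.2 h⟩

/-- The edges of a given direction form an induced matching. If `z₁, z₂` share the lower endpoint,
`z₂, z₃` the upper one, and `z₁, z₃` the direction, then `z₁, z₂` also share the upper endpoint:
otherwise the upper endpoint common to `z₂, z₃` would have both the value zero and the value one in
the repeated direction. -/
lemma induced_matching {z₁ z₂ z₃ : (Fin D → Fin 2) × Fin D × Fin w} (h1 : z₁ ∈ cubeIdx D w)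
    (hL : z₁.1 = z₂.1)
    (hR : Function.update z₂.1 z₂.2.1 1 = Function.update z₃.1 z₃.2.1 1) (hY : z₁.2 = z₃.2) :
    Function.update z₁.1 z₁.2.1 1 = Function.update z₂.1 z₂.2.1 1 := by
  rw [mem_cubeIdx] at h1
  have h2 : z₁.2.1 = z₂.2.1 := by
    by_contra hne
    have := congrFun hR z₁.2.1
    rw [Function.update_of_ne hne, ← hL, h1, hY, Function.update_self] at this
    exact absurd this (by decide)
  rw [hL, h2]

/-- The system is tripartite, so three pairwise meeting triples without a common point would meet
once in each part, which `induced_matching` excludes. -/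
lemma cube_tfree (D w : ℕ) : TFree (cubeSystem D w) := by
  intro e he f hf g hg hef hfg heg
  obtain ⟨z₁, h1, rfl⟩ := Finset.mem_image.1 he
  obtain ⟨z₂, h2, rfl⟩ := Finset.mem_image.1 hf
  obtain ⟨z₃, h3, rfl⟩ := Finset.mem_image.1 hg
  rw [share_iff] at hef hfg heg
  suffices h : (z₁.1 = z₂.1 ∧ z₁.1 = z₃.1) ∨
      (Function.update z₁.1 z₁.2.1 1 = Function.update z₂.1 z₂.2.1 1 ∧
        Function.update z₁.1 z₁.2.1 1 = Function.update z₃.1 z₃.2.1 1) ∨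
      (z₁.2 = z₂.2 ∧ z₁.2 = z₃.2) by
    rcases h with h | h | h
    · exact ⟨_, inl_mem.2 rfl, inl_mem.2 h.1, inl_mem.2 h.2⟩
    · exact ⟨_, inm_mem.2 rfl, inm_mem.2 h.1, inm_mem.2 h.2⟩
    · exact ⟨_, inr_mem.2 rfl, inr_mem.2 h.1, inr_mem.2 h.2⟩
  have a1 := @induced_matching D w z₁ z₂ z₃ h1
  have a2 := @induced_matching D w z₁ z₃ z₂ h1
  have a3 := @induced_matching D w z₂ z₁ z₃ h2
  have a4 := @induced_matching D w z₂ z₃ z₁ h2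
  have a5 := @induced_matching D w z₃ z₁ z₂ h3
  have a6 := @induced_matching D w z₃ z₂ z₁ h3
  generalize Function.update z₁.1 z₁.2.1 1 = u1 at *
  generalize Function.update z₂.1 z₂.2.1 1 = u2 at *
  generalize Function.update z₃.1 z₃.2.1 1 = u3 at *
  grind

lemma cube_three (D w : ℕ) : ∀ e ∈ cubeSystem D w, e.card = 3 := by
  intro e he
  obtain ⟨z, -, rfl⟩ := Finset.mem_image.1 he
  exact cubeEdge_card z

lemma cube_card (D w : ℕ) : 2 * (cubeSystem D w).card = 2 ^ D * (D * w) := by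
  rw [cubeSystem, Finset.card_image_of_injective _ cubeEdge_inj, cubeIdx, Finset.card_filter,
    Fintype.sum_prod_type, Finset.sum_comm, Finset.mul_sum]
  have : ∀ y : Fin D × Fin w, 2 * ∑ x : Fin D → Fin 2, (if x y.1 = 0 then 1 else 0) = 2 ^ D := by
    intro y
    rw [← Finset.card_filter]
    have := card_fun_zero 1 ({y.1} : Finset (Fin D))
    simp only [Finset.mem_singleton, forall_eq, Finset.card_singleton, Fintype.card_fin] at this
    rw [mul_comm]
    simpa using this
  simp only [this, Finset.sum_const, Finset.card_univ, Fintype.card_prod, Fintype.card_fin,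
    smul_eq_mul]
  ring

lemma eq_of_update_eq {x x' : Fin D → Fin 2} {i : Fin D} (h : x i = 0) (h' : x' i = 0)
    (hu : Function.update x i 1 = Function.update x' i 1) : x = x' := by
  ext1 j
  by_cases hj : j = i
  · rw [hj, h, h']
  · have := congrFun hu j
    rwa [Function.update_of_ne hj, Function.update_of_ne hj] at this

/-- Two triples sharing two points agree on the edge of the cube and differ only in the copy. -/
lemma cube_codeg {e : Finset (CubeVert D w)} (he : e ∈ cubeSystem D w) :
    ((cubeSystem D w).filter (fun f => 2 ≤ (e ∩ f).card)).card ≤ w := by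
  obtain ⟨z, hz, rfl⟩ := Finset.mem_image.1 he
  have hsub : (cubeSystem D w).filter (fun f => 2 ≤ (cubeEdge z ∩ f).card) ⊆
      Finset.univ.image (fun j : Fin w => cubeEdge (z.1, z.2.1, j)) := by
    intro f hf
    rw [Finset.mem_filter] at hf
    obtain ⟨z', hz', rfl⟩ := Finset.mem_image.1 hf.1
    rw [mem_cubeIdx] at hz hz'
    suffices h : z.1 = z'.1 ∧ z.2.1 = z'.2.1 by
      refine Finset.mem_image.2 ⟨z'.2.2, Finset.mem_univ _, ?_⟩
      rw [h.1, h.2]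
    obtain ⟨a, ha, b, hb, hab⟩ := Finset.one_lt_card.1 hf.2
    rw [Finset.mem_inter] at ha hb
    have hR : z.1 = z'.1 → Function.update z.1 z.2.1 1 = Function.update z'.1 z'.2.1 1 →
        z.2.1 = z'.2.1 := by
      intro h1 h2
      by_contra hne
      have := congrFun h2 z.2.1
      rw [Function.update_self, Function.update_of_ne hne, ← h1, hz] at this
      exact absurd this (by decide)
    have hY : z.2.1 = z'.2.1 → Function.update z.1 z.2.1 1 = Function.update z'.1 z'.2.1 1 →
        z.1 = z'.1 := by
      intro h1 h2
      rw [← h1] at h2 hz'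
      exact eq_of_update_eq hz hz' h2
    rcases a with a | a | a <;> rcases b with b | b | b <;>
      simp only [inl_mem, inm_mem, inr_mem] at ha hb
    · exact absurd (by rw [ha.1, hb.1]) hab
    · have h1 := ha.1.symm.trans ha.2
      exact ⟨h1, hR h1 (hb.1.symm.trans hb.2)⟩
    · exact ⟨ha.1.symm.trans ha.2, congrArg Prod.fst (hb.1.symm.trans hb.2)⟩
    · have h1 := hb.1.symm.trans hb.2
      exact ⟨h1, hR h1 (ha.1.symm.trans ha.2)⟩
    · exact absurd (by rw [ha.1, hb.1]) hab
    · have h1 := congrArg Prod.fst (hb.1.symm.trans hb.2)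
      exact ⟨hY h1 (ha.1.symm.trans ha.2), h1⟩
    · exact ⟨hb.1.symm.trans hb.2, congrArg Prod.fst (ha.1.symm.trans ha.2)⟩
    · have h1 := congrArg Prod.fst (ha.1.symm.trans ha.2)
      exact ⟨hY h1 (hb.1.symm.trans hb.2), h1⟩
    · exact absurd (by rw [ha.1, hb.1]) hab
  refine (Finset.card_le_card hsub).trans (Finset.card_image_le.trans ?_)
  simp

/-- A triple meets at most `D * w` triples in each of its two cube points and at most `2 ^ D` in its
direction. -/
lemma cube_deg {e : Finset (CubeVert D w)} (he : e ∈ cubeSystem D w) :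
    ((cubeSystem D w).filter (fun f => 1 ≤ (e ∩ f).card)).card ≤ 2 * (D * w) + 2 ^ D := by
  obtain ⟨z, hz, rfl⟩ := Finset.mem_image.1 he
  have hsub : (cubeSystem D w).filter (fun f => 1 ≤ (cubeEdge z ∩ f).card) ⊆
      (Finset.univ.image (fun y : Fin D × Fin w => cubeEdge (z.1, y)) ∪
      Finset.univ.image (fun y : Fin D × Fin w =>
        cubeEdge (Function.update (Function.update z.1 z.2.1 1) y.1 0, y))) ∪
      Finset.univ.image (fun x : Fin D → Fin 2 => cubeEdge (x, z.2)) := by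
    intro f hf
    rw [Finset.mem_filter] at hf
    obtain ⟨z', hz', rfl⟩ := Finset.mem_image.1 hf.1
    rw [mem_cubeIdx] at hz hz'
    obtain ⟨a, ha⟩ := Finset.card_pos.1 hf.2
    rw [Finset.mem_inter] at ha
    simp only [Finset.mem_union]
    rcases share_iff.1 ⟨a, ha.1, ha.2⟩ with h | h | h
    · left; left
      exact Finset.mem_image.2 ⟨z'.2, Finset.mem_univ _, by rw [h]⟩
    · left; right
      refine Finset.mem_image.2 ⟨z'.2, Finset.mem_univ _, ?_⟩
      rw [h, Function.update_idem, ← hz', Function.update_eq_self]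
    · right
      exact Finset.mem_image.2 ⟨z'.1, Finset.mem_univ _, by rw [h]⟩
  refine (Finset.card_le_card hsub).trans ?_
  refine (Finset.card_union_le _ _).trans ?_
  refine (add_le_add (Finset.card_union_le _ _) le_rfl).trans ?_
  have c1 : ∀ φ : Fin D × Fin w → Finset (CubeVert D w), (Finset.univ.image φ).card ≤ D * w := by
    intro φ; refine Finset.card_image_le.trans ?_; simp
  have c2 : ∀ φ : (Fin D → Fin 2) → Finset (CubeVert D w), (Finset.univ.image φ).card ≤ 2 ^ D := by
    intro φ; refine Finset.card_image_le.trans ?_; simp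
  have := c1 (fun y : Fin D × Fin w => cubeEdge (z.1, y))
  have := c1 (fun y : Fin D × Fin w =>
        cubeEdge (Function.update (Function.update z.1 z.2.1 1) y.1 0, y))
  have := c2 (fun x : Fin D → Fin 2 => cubeEdge (x, z.2))
  omega

/-- Pulling back along `φ` and shrinking the target set only enlarges the set of permutations that
avoid all triples. -/
lemma card_filter_map_le {F L : Type*} [Fintype F] [DecidableEq F] [DecidableEq L] (φ : L ↪ F)
    (H : Finset (Finset L)) {A A' : Finset F} (hA : A' ⊆ A) :
    (Finset.univ.filter (fun σ : Equiv.Perm F =>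
      ∀ e ∈ H.image (fun e => e.map φ), ¬ ∀ x ∈ e, σ x ∈ A)).card ≤
    (Finset.univ.filter (fun σ : Equiv.Perm F =>
      ∀ e ∈ H, ¬ ∀ x ∈ e, σ (φ x) ∈ A')).card := by
  refine Finset.card_le_card fun σ hσ => ?_
  simp only [Finset.mem_filter, Finset.mem_univ, true_and] at hσ ⊢
  intro e he hall
  refine hσ (e.map φ) (Finset.mem_image_of_mem _ he) fun y hy => ?_
  obtain ⟨x, hx, rfl⟩ := Finset.mem_map.1 hy
  exact hA (hall x hx)

/-- The system planted on each line. It is a copy of the cube system with `2 ^ D` and `D * w` both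
of order `q = #F`, so it has of order `q ^ 2` triples while pairs have codegree at most `w`, which is
of order `q / D`. The latter makes `avoid_count` applicable to sets of size `k ≤ D`. -/
lemma exists_line_system {F : Type*} [Fintype F] [DecidableEq F] (D w k : ℕ)
    (hk : 4 ≤ k) (hkD : k ≤ D) (h1 : 4 * 2 ^ D ≤ Fintype.card F)
    (h1' : Fintype.card F ≤ 8 * 2 ^ D)
    (h2 : 2 * (D * w) ≤ Fintype.card F) (h2' : Fintype.card F ≤ 4 * (D * w))
    (hk3 : k ^ 3 ≤ Fintype.card F) :
    ∃ H : Finset (Finset F), (∀ e ∈ H, e.card = 3) ∧ TFree H ∧ ∀ A : Finset F, k ≤ A.card →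
      ((Finset.univ.filter (fun σ : Equiv.Perm F => ∀ e ∈ H, ¬ ∀ x ∈ e, σ x ∈ A)).card : ℝ) ≤
        (Fintype.card F).factorial * (1 - (k : ℝ) ^ 3 / (4096 * Fintype.card F)) := by
  have hcard : Fintype.card (CubeVert D w) ≤ Fintype.card F := by
    simp only [Fintype.card_sum, Fintype.card_fun, Fintype.card_fin, Fintype.card_prod]
    omega
  obtain ⟨φ⟩ := Function.Embedding.nonempty_of_card_le hcard
  refine ⟨(cubeSystem D w).image (fun e => e.map φ), ?_, ?_, ?_⟩
  · intro e he
    obtain ⟨f, hf, rfl⟩ := Finset.mem_image.1 he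
    rw [Finset.card_map, cube_three D w f hf]
  · intro e he f hf g hg hef hfg heg
    obtain ⟨e₀, he₀, rfl⟩ := Finset.mem_image.1 he
    obtain ⟨f₀, hf₀, rfl⟩ := Finset.mem_image.1 hf
    obtain ⟨g₀, hg₀, rfl⟩ := Finset.mem_image.1 hg
    have tr : ∀ e f : Finset (CubeVert D w), (∃ x ∈ e.map φ, x ∈ f.map φ) → ∃ x ∈ e, x ∈ f := by
      rintro e f ⟨x, hx, hx'⟩
      obtain ⟨y, hy, rfl⟩ := Finset.mem_map.1 hx
      exact ⟨y, hy, (Finset.mem_map' φ).1 hx'⟩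
    obtain ⟨x, hx, hx', hx''⟩ := 
      cube_tfree D w _ he₀ _ hf₀ _ hg₀ (tr _ _ hef) (tr _ _ hfg) (tr _ _ heg)
    exact ⟨φ x, (Finset.mem_map' φ).2 hx, (Finset.mem_map' φ).2 hx', (Finset.mem_map' φ).2 hx''⟩
  · intro A hA
    -- it suffices to treat sets of size exactly `k`
    obtain ⟨A', hA', hA'k⟩ := Finset.exists_subset_card_eq hA
    set q := Fintype.card F with hq
    have hc := cube_card D w
    have hHle : (cubeSystem D w).card ≤ q ^ 2 := by nlinarith
    have hHge : q ^ 2 ≤ 64 * (cubeSystem D w).card := by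
      calc q ^ 2 = q * q := sq q
        _ ≤ (8 * 2 ^ D) * (4 * (D * w)) := Nat.mul_le_mul h1' h2'
        _ = 16 * (2 * (2 ^ D * (D * w))) := by ring
        _ = 64 * (cubeSystem D w).card := by rw [← hc]; ring
    have hkk : 4 * k ^ 2 ≤ k ^ 3 := by
      have : k ^ 3 = k * k ^ 2 := by ring
      rw [this]; exact Nat.mul_le_mul_right _ hk
    have hmain := avoid_count φ (cubeSystem D w) (cube_three D w) A' (by omega) w
      (2 * (D * w) + 2 ^ D) (fun e he => cube_codeg he) (fun e he => cube_deg he)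
      (by
        rw [hA'k, ← hq, mul_comm]
        have : k * w ≤ D * w := Nat.mul_le_mul_right w hkD
        omega)
      (by
        rw [hA'k, ← hq, sq q]
        have a1 : 2 * (D * w) + 2 ^ D ≤ 2 * q := by omega
        have a2 : 2 * k ^ 2 ≤ q := by omega
        calc (2 * (D * w) + 2 ^ D) * k ^ 2 ≤ 2 * q * k ^ 2 := Nat.mul_le_mul_right _ a1
          _ = q * (2 * k ^ 2) := by ring
          _ ≤ q * q := Nat.mul_le_mul_left _ a2)
      (by
        rw [hA'k, ← hq]
        calc _ ≤ q ^ 2 * q := Nat.mul_le_mul hHle hk3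
          _ = q ^ 3 := by ring)
    rw [hA'k, ← hq] at hmain
    have hmono := card_filter_map_le φ (cubeSystem D w) hA'
    have hq0 : (0 : ℝ) < q := by
      have : 0 < q := by have := Nat.two_pow_pos D; omega
      exact_mod_cast this
    refine (Nat.cast_le.2 hmono).trans (hmain.trans ?_)
    refine mul_le_mul_of_nonneg_left ?_ (by positivity)
    refine sub_le_sub_left ?_ 1
    have hHr : (q : ℝ) ^ 2 ≤ 64 * (cubeSystem D w).card := by exact_mod_cast hHge
    have : (k : ℝ) ^ 3 / (4096 * q) = (q : ℝ) ^ 2 / 64 * ((k : ℝ) / q) ^ 3 / 64 := by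
      field_simp; norm_num
    rw [this]
    gcongr
    linarith

end Cube

/-! ### A triangle-free point-line geometry -/

section Geometry

variable {F : Type*} [Field F]

/-- Incidence of the point `p = (x, y, z)` with the line `l = (a, b, c)`: `y = a x - b` and
`z = b x - c`. The resulting `q ^ 3` points and `q ^ 3` lines form a subgeometry of a generalized
quadrangle: two points are on at most one line, and there are no triangles. -/
def Inc (p l : F × F × F) : Prop := p.2.1 = l.1 * p.1 - l.2.1 ∧ p.2.2 = l.2.1 * p.1 - l.2.2

instance [DecidableEq F] (p l : F × F × F) : Decidable (Inc p l) := by unfold Inc; infer_instance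

/-- Lines are graphs over the first coordinate. -/
lemma Inc.fst_ne {p p' l : F × F × F} (h : Inc p l) (h' : Inc p' l) (hne : p ≠ p') :
    p.1 ≠ p'.1 := by
  intro h1
  apply hne
  refine Prod.ext h1 (Prod.ext ?_ ?_)
  · rw [h.1, h'.1, h1]
  · rw [h.2, h'.2, h1]

/-- The slope determines a line through a given point. -/
lemma Inc.line_ext {p l l' : F × F × F} (h : Inc p l) (h' : Inc p l') (hk : l.1 = l'.1) :
    l = l' := by
  have h2 : l.2.1 = l'.2.1 := by
    have := h.1.symm.trans h'.1
    rw [hk] at this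
    linear_combination -this
  refine Prod.ext hk (Prod.ext h2 ?_)
  have := h.2.symm.trans h'.2
  rw [h2] at this
  linear_combination -this

lemma Inc.unique {p p' l l' : F × F × F} (h1 : Inc p l) (h2 : Inc p l') (h3 : Inc p' l)
    (h4 : Inc p' l') (hne : p ≠ p') : l = l' := by
  refine h1.line_ext h2 ?_
  have := sub_ne_zero.2 (h1.fst_ne h3 hne)
  apply mul_right_cancel₀ this
  linear_combination (h2.1 - h4.1) - (h1.1 - h3.1)

/-- The geometry has no triangles: two lines of a would-be triangle coincide. -/
lemma no_triangle {x y z l₁ l₂ l₃ : F × F × F} (hx1 : Inc x l₁) (hz1 : Inc z l₁) (hx2 : Inc x l₂)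
    (hy2 : Inc y l₂) (hy3 : Inc y l₃) (hz3 : Inc z l₃) (hxy : x ≠ y) (hyz : y ≠ z) (hxz : x ≠ z) :
    l₁ = l₂ := by
  have dxy := sub_ne_zero.2 (hx2.fst_ne hy2 hxy)
  have dyz := sub_ne_zero.2 (hy3.fst_ne hz3 hyz)
  have dxz := sub_ne_zero.2 (hx1.fst_ne hz1 hxz)
  have e1 : l₁.1 * (x.1 - z.1) = x.2.1 - z.2.1 := by linear_combination -hx1.1 + hz1.1
  have e2 : l₂.1 * (x.1 - y.1) = x.2.1 - y.2.1 := by linear_combination -hx2.1 + hy2.1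
  have e3 : l₃.1 * (y.1 - z.1) = y.2.1 - z.2.1 := by linear_combination -hy3.1 + hz3.1
  have f1 : (l₁.1 * x.1 - x.2.1) * (x.1 - z.1) = x.2.2 - z.2.2 := by
    linear_combination -hx1.2 + hz1.2 - (x.1 - z.1) * hx1.1
  have f2 : (l₂.1 * x.1 - x.2.1) * (x.1 - y.1) = x.2.2 - y.2.2 := by
    linear_combination -hx2.2 + hy2.2 - (x.1 - y.1) * hx2.1
  have f3 : (l₃.1 * y.1 - y.2.1) * (y.1 - z.1) = y.2.2 - z.2.2 := by
    linear_combination -hy3.2 + hz3.2 - (y.1 - z.1) * hy3.1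
  have h32 : l₃.1 = l₂.1 := by
    apply mul_right_cancel₀ dxy
    apply mul_right_cancel₀ dyz
    linear_combination f1 - f2 - f3 - x.1 * (e1 - e2 - e3) - (y.1 - z.1) * e2
  refine hx1.line_ext hx2 ?_
  apply mul_right_cancel₀ dxz
  rw [h32] at e3
  linear_combination e1 - e2 - e3

variable [Fintype F] [DecidableEq F]

/-- The real-valued incidence indicator. -/
def inc (p l : F × F × F) : ℝ := if Inc p l then 1 else 0

omit [Fintype F] in
lemma inc_nonneg (p l : F × F × F) : 0 ≤ inc p l := by unfold inc; split_ifs <;> norm_num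

lemma sum_inc_line (l : F × F × F) : ∑ p, inc p l = Fintype.card F := by
  unfold inc
  rw [Finset.sum_boole]
  have : (Finset.univ.filter (fun p => Inc p l)) =
      Finset.univ.image (fun a : F => ((a, l.1 * a - l.2.1, l.2.1 * a - l.2.2) : F × F × F)) := by
    ext p
    simp only [Finset.mem_filter, Finset.mem_univ, true_and, Finset.mem_image]
    constructor
    · intro h; exact ⟨p.1, Prod.ext rfl (Prod.ext h.1.symm h.2.symm)⟩
    · rintro ⟨a, rfl⟩; exact ⟨rfl, rfl⟩
  rw [this, Finset.card_image_of_injective _ (fun a b h => (Prod.ext_iff.1 h).1), Finset.card_univ]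

lemma sum_inc_point (p : F × F × F) : ∑ l, inc p l = Fintype.card F := by
  unfold inc
  rw [Finset.sum_boole]
  have : (Finset.univ.filter (fun l => Inc p l)) = Finset.univ.image
      (fun k : F => ((k, k * p.1 - p.2.1, (k * p.1 - p.2.1) * p.1 - p.2.2) : F × F × F)) := by
    ext l
    simp only [Finset.mem_filter, Finset.mem_univ, true_and, Finset.mem_image]
    constructor
    · intro h
      refine ⟨l.1, ?_⟩
      have h2 : l.1 * p.1 - p.2.1 = l.2.1 := by linear_combination -h.1
      refine Prod.ext rfl (Prod.ext h2 ?_)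
      simp only [h2]
      linear_combination -h.2
    · rintro ⟨a, rfl⟩
      constructor <;> simp
  rw [this, Finset.card_image_of_injective _ (fun a b h => (Prod.ext_iff.1 h).1), Finset.card_univ]

/-- Absence of triangles gives at most one path `s, l', p, l` from a point `s` to a line `l` not
through `s`. If `l` passes through `s`, there are at most `2 * q` such paths,
all degenerate. -/
lemma sum_paths_le (s l : F × F × F) :
    ∑ p, ∑ l', inc p l * inc p l' * inc s l' ≤ 1 + 2 * Fintype.card F * inc s l := by
  by_cases hs : Inc s l
  · have hb : ∀ p l', inc p l * inc p l' * inc s l' ≤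
        (if l' = l then inc p l else 0) + (if p = s then inc s l' else 0) := by
      intro p l'
      by_cases h1 : Inc p l
      swap
      · simp only [inc, h1, if_false, zero_mul]; split_ifs <;> norm_num
      by_cases h2 : Inc p l'
      swap
      · simp only [inc, h2, if_false, zero_mul, mul_zero]; split_ifs <;> norm_num
      by_cases h3 : Inc s l'
      swap
      · simp only [inc, h3, if_false, mul_zero]; split_ifs <;> norm_num
      by_cases hps : p = s
      · simp only [inc, h3, hps, if_true]; split_ifs <;> norm_num
      · have : l' = l := h2.unique h1 h3 hs hps
        simp [inc, this, h1, hs, hps]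
    calc ∑ p, ∑ l', inc p l * inc p l' * inc s l'
        ≤ ∑ p, ∑ l', ((if l' = l then inc p l else 0) + (if p = s then inc s l' else 0)) :=
          Finset.sum_le_sum fun p _ => Finset.sum_le_sum fun l' _ => hb p l'
      _ = ∑ p, inc p l + ∑ l', inc s l' := by
          simp only [Finset.sum_add_distrib]
          congr 1
          · simp
          · rw [Finset.sum_comm]; simp
      _ ≤ _ := by
          rw [sum_inc_line, sum_inc_point]
          simp only [inc, hs, if_true]
          linarith
  · have : ∑ p, ∑ l', inc p l * inc p l' * inc s l' = ((Finset.univ.filter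
        (fun z : (F × F × F) × (F × F × F) => Inc z.1 l ∧ Inc z.1 z.2 ∧ Inc s z.2)).card : ℝ) := by
      rw [Finset.card_filter, Nat.cast_sum]
      refine Eq.symm ((Fintype.sum_prod_type _).trans ?_)
      refine Finset.sum_congr rfl fun p _ => ?_
      refine Finset.sum_congr rfl fun l' _ => ?_
      unfold inc
      split_ifs <;> simp_all
    rw [this]
    have h1 : (Finset.univ.filter
        (fun z : (F × F × F) × (F × F × F) => Inc z.1 l ∧ Inc z.1 z.2 ∧ Inc s z.2)).card ≤ 1 := by
      rw [Finset.card_le_one]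
      rintro ⟨p, m⟩ h ⟨p', m'⟩ h'
      simp only [Finset.mem_filter, Finset.mem_univ, true_and] at h h'
      have hsp : s ≠ p := fun e => hs (e ▸ h.1)
      have hsp' : s ≠ p' := fun e => hs (e ▸ h'.1)
      have hpp : p = p' := by
        by_contra hne
        have := no_triangle h.1 h'.1 h.2.1 h.2.2 h'.2.2 h'.2.1 hsp.symm hsp' hne
        exact hs (this ▸ h.2.2)
      subst hpp
      rw [h.2.1.unique h'.2.1 h.2.2 h'.2.2 hsp.symm]
    simp only [inc, hs, if_false, mul_zero, add_zero]
    exact_mod_cast h1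

/-- A set `S` of `2 * k * q ^ 2` points, which meets a line in `2 * k` points on average, meets a
positive proportion of the lines in at least `k` points. With `x l` the number of points of `S` on
`l` and `w p` the sum of `x l` over the lines `l` through `p`, the bound on paths controls the
variance of `w`. This gives `∑ x l ^ 2 = ∑ p ∈ S, w p = O(k ^ 2 * q ^ 3)`, and Cauchy-Schwarz
finishes. -/
lemma many_rich_lines (S : Finset (F × F × F)) (k : ℕ) (hk : 0 < k)
    (hS : S.card = 2 * k * Fintype.card F ^ 2) :
    (Fintype.card F : ℝ) ^ 3 / 16 ≤
      (Finset.univ.filter (fun l => k ≤ (S.filter (fun p => Inc p l)).card)).card := by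
  set q : ℝ := (Fintype.card F : ℝ) with hq
  have hq0 : 0 < q := by rw [hq]; exact_mod_cast Fintype.card_pos
  set s : ℝ := (S.card : ℝ) with hs
  have hs' : s = 2 * k * q ^ 2 := by rw [hs, hS]; push_cast; ring
  have hk1 : (1 : ℝ) ≤ k := by exact_mod_cast hk
  have hPcard : ((Finset.univ : Finset (F × F × F)).card : ℝ) = q ^ 3 := by
    rw [Finset.card_univ, Fintype.card_prod, Fintype.card_prod]; push_cast; ring
  let x : F × F × F → ℝ := fun l => ∑ p ∈ S, inc p l
  have hx : ∀ l, x l = (S.filter (fun p => Inc p l)).card := by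
    intro l; simp only [x, inc]; rw [Finset.sum_boole]
  have hx0 : ∀ l, 0 ≤ x l := fun l => Finset.sum_nonneg fun p _ => inc_nonneg p l
  let w : F × F × F → ℝ := fun p => ∑ l, inc p l * x l
  set Y : ℝ := ∑ l, x l ^ 2 with hY
  have sx : ∑ l, x l = q * s := by
    simp only [x]
    rw [Finset.sum_comm]
    simp only [sum_inc_point, Finset.sum_const, nsmul_eq_mul]
    ring
  have swS : ∑ p ∈ S, w p = Y := by
    simp only [w]
    rw [Finset.sum_comm, hY]
    refine Finset.sum_congr rfl fun l _ => ?_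
    rw [← Finset.sum_mul, sq]
  have sw : ∑ p, w p = q ^ 2 * s := by
    simp only [w]
    rw [Finset.sum_comm]
    simp only [← Finset.sum_mul, sum_inc_line]
    rw [← Finset.mul_sum, sx]; ring
  have swl : ∀ l, ∑ p, inc p l * w p ≤ s + 2 * q * x l := by
    intro l
    calc ∑ p, inc p l * w p = ∑ t ∈ S, ∑ p, ∑ l', inc p l * inc p l' * inc t l' := by
          rw [Finset.sum_comm]
          refine Finset.sum_congr rfl fun p _ => ?_
          rw [Finset.sum_comm]
          simp only [w, x, Finset.mul_sum, mul_assoc]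
      _ ≤ ∑ t ∈ S, (1 + 2 * q * inc t l) := Finset.sum_le_sum fun t _ => sum_paths_le t l
      _ = s + 2 * q * x l := by
          rw [Finset.sum_add_distrib, ← Finset.mul_sum]; simp [x, hs]
  have sw2 : ∑ p, w p ^ 2 ≤ q * s ^ 2 + 2 * q * Y := by
    calc ∑ p, w p ^ 2 = ∑ l, x l * ∑ p, inc p l * w p := by
          simp only [Finset.mul_sum]
          rw [Finset.sum_comm]
          refine Finset.sum_congr rfl fun p _ => ?_
          rw [sq]
          nth_rewrite 1 [show w p = ∑ l, inc p l * x l from rfl]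
          rw [Finset.sum_mul]
          refine Finset.sum_congr rfl fun l _ => ?_
          ring
      _ ≤ ∑ l, x l * (s + 2 * q * x l) :=
          Finset.sum_le_sum fun l _ => mul_le_mul_of_nonneg_left (swl l) (hx0 l)
      _ = q * s ^ 2 + 2 * q * Y := by
          have : ∀ l, x l * (s + 2 * q * x l) = s * x l + 2 * q * x l ^ 2 := fun l => by ring
          simp only [this, Finset.sum_add_distrib, ← Finset.mul_sum, sx, ← hY]
          ring
  -- `s / q` is the mean of `w`
  have hvar : ∑ p, (w p - s / q) ^ 2 ≤ 2 * q * Y := by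
    have : ∀ p, (w p - s / q) ^ 2 = w p ^ 2 - (2 * (s / q)) * w p + (s / q) ^ 2 := fun p => by ring
    simp only [this, Finset.sum_add_distrib, Finset.sum_sub_distrib, ← Finset.mul_sum, sw,
      Finset.sum_const, nsmul_eq_mul, hPcard]
    have e : q ^ 3 * (s / q) ^ 2 = q * s ^ 2 := by field_simp
    have e' : 2 * (s / q) * (q ^ 2 * s) = 2 * q * s ^ 2 := by field_simp
    rw [e, e']; linarith
  have hYu : (Y - s ^ 2 / q) ^ 2 ≤ s * (2 * q * Y) := by
    have h1 : Y - s ^ 2 / q = ∑ p ∈ S, (w p - s / q) := by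
      rw [Finset.sum_sub_distrib, swS]; simp [← hs]; ring
    rw [h1]
    refine (sq_sum_le_card_mul_sum_sq (s := S)).trans ?_
    refine mul_le_mul_of_nonneg_left ?_ (by positivity)
    refine le_trans ?_ hvar
    exact Finset.sum_le_sum_of_subset_of_nonneg (Finset.subset_univ S) fun p _ _ => sq_nonneg _
  have hY0 : 0 ≤ Y := Finset.sum_nonneg fun l _ => sq_nonneg _
  have hYle : Y ≤ 16 * k ^ 2 * q ^ 3 := by
    have hu : s ^ 2 / q = 4 * k ^ 2 * q ^ 3 := by rw [hs']; field_simp; ring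
    rw [hu, hs'] at hYu
    have h2 : 2 * (k:ℝ) * q ^ 2 * (2 * q * Y) ≤ 4 * k ^ 2 * q ^ 3 * Y := by
      have : 0 ≤ q ^ 3 * Y := by positivity
      nlinarith [mul_nonneg this (by nlinarith : (0:ℝ) ≤ (k:ℝ) ^ 2 - k)]
    set u : ℝ := 4 * k ^ 2 * q ^ 3 with hu'
    have hu0 : 0 < u := by positivity
    by_contra hlt
    push Not at hlt
    have : 4 * u < Y := by rw [hu']; linarith
    nlinarith
  set G := Finset.univ.filter (fun l => k ≤ (S.filter (fun p => Inc p l)).card) with hG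
  have hGsum : k * q ^ 3 ≤ ∑ l ∈ G, x l := by
    have h1 : ∑ l ∈ Finset.univ.filter (fun l => ¬ k ≤ (S.filter (fun p => Inc p l)).card), x l
        ≤ q ^ 3 * k := by
      refine (Finset.sum_le_card_nsmul _ _ (k : ℝ) ?_).trans ?_
      · intro l hl
        rw [hx]
        exact_mod_cast (not_le.1 (Finset.mem_filter.1 hl).2).le
      · rw [nsmul_eq_mul, ← hPcard]
        gcongr
        exact Finset.filter_subset _ _
    have h2 := Finset.sum_filter_add_sum_filter_not Finset.univ
      (fun l => k ≤ (S.filter (fun p => Inc p l)).card) x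
    rw [sx, hs', ← hG] at h2
    nlinarith
  have hCS : (∑ l ∈ G, x l) ^ 2 ≤ G.card * Y := by
    refine (sq_sum_le_card_mul_sum_sq (s := G)).trans ?_
    refine mul_le_mul_of_nonneg_left ?_ (by positivity)
    exact Finset.sum_le_sum_of_subset_of_nonneg (Finset.subset_univ G) fun p _ _ => sq_nonneg _
  have h1 : (k * q ^ 3) ^ 2 ≤ G.card * (16 * k ^ 2 * q ^ 3) :=
    (pow_le_pow_left₀ (by positivity) hGsum 2).trans
      (hCS.trans (mul_le_mul_of_nonneg_left hYle (by positivity)))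
  have h2 : 0 < (k:ℝ) ^ 2 * q ^ 3 := by positivity
  refine le_of_mul_le_mul_right ?_ h2
  calc q ^ 3 / 16 * (k ^ 2 * q ^ 3) = (k * q ^ 3) ^ 2 / 16 := by ring
    _ ≤ _ := by linarith

end Geometry

/-! ### Random planting on the lines -/

section Global

variable {F : Type*} [Field F]

/-- The parametrization of the line `l` by the first coordinate. -/
def lineMap (l : F × F × F) : F ↪ F × F × F :=
  ⟨fun a => (a, l.1 * a - l.2.1, l.2.1 * a - l.2.2), fun _ _ h => congrArg Prod.fst h⟩

lemma inc_lineMap (l : F × F × F) (a : F) : Inc (lineMap l a) l := ⟨rfl, rfl⟩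

lemma Inc.lineMap_eq {p l : F × F × F} (h : Inc p l) : lineMap l p.1 = p :=
  Prod.ext rfl (Prod.ext h.1.symm h.2.symm)

lemma inc_of_mem_map {l p : F × F × F} {σ : Equiv.Perm F} {e : Finset F}
    (h : p ∈ e.map (σ.toEmbedding.trans (lineMap l))) : Inc p l := by
  obtain ⟨a, _, rfl⟩ := Finset.mem_map.1 h
  exact inc_lineMap l _

variable [Fintype F] [DecidableEq F]

/-- The copies of `H` planted on all the lines, the one on `l` being permuted by `ω l`. -/
def globalSystem (H : Finset (Finset F)) (ω : F × F × F → Equiv.Perm F) :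
    Finset (Finset (F × F × F)) :=
  Finset.univ.biUnion fun l => H.image fun e => e.map ((ω l).toEmbedding.trans (lineMap l))

lemma mem_globalSystem {H : Finset (Finset F)} {ω : F × F × F → Equiv.Perm F}
    {e : Finset (F × F × F)} : e ∈ globalSystem H ω ↔
      ∃ l, ∃ e₀ ∈ H, e₀.map ((ω l).toEmbedding.trans (lineMap l)) = e := by
  simp [globalSystem]

lemma global_three {H : Finset (Finset F)} (h3 : ∀ e ∈ H, e.card = 3)
    (ω : F × F × F → Equiv.Perm F) : ∀ e ∈ globalSystem H ω, e.card = 3 := by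
  intro e he
  obtain ⟨l, e₀, he₀, rfl⟩ := mem_globalSystem.1 he
  rw [Finset.card_map, h3 e₀ he₀]

/-- Three pairwise meeting triples with three distinct meeting points lie on one line, since the
geometry has no triangles, and there `H` is free of generalized triangles. -/
lemma global_tfree {H : Finset (Finset F)} (hT : TFree H) (ω : F × F × F → Equiv.Perm F) :
    TFree (globalSystem H ω) := by
  intro e he f hf g hg hef hfg heg
  obtain ⟨l₁, e₀, he₀, rfl⟩ := mem_globalSystem.1 he
  obtain ⟨l₂, f₀, hf₀, rfl⟩ := mem_globalSystem.1 hf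
  obtain ⟨l₃, g₀, hg₀, rfl⟩ := mem_globalSystem.1 hg
  obtain ⟨x, hxe, hxf⟩ := id hef
  obtain ⟨y, hyf, hyg⟩ := id hfg
  obtain ⟨z, hze, hzg⟩ := id heg
  by_cases hxy : x = y
  · exact ⟨x, hxe, hxf, hxy ▸ hyg⟩
  by_cases hyz : y = z
  · exact ⟨z, hze, hyz ▸ hyf, hzg⟩
  by_cases hxz : x = z
  · exact ⟨x, hxe, hxf, hxz ▸ hzg⟩
  have h12 : l₁ = l₂ := no_triangle (inc_of_mem_map hxe) (inc_of_mem_map hze)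
    (inc_of_mem_map hxf) (inc_of_mem_map hyf) (inc_of_mem_map hyg) (inc_of_mem_map hzg)
    hxy hyz hxz
  subst h12
  have h13 : l₁ = l₃ := (inc_of_mem_map hyf).unique (inc_of_mem_map hyg)
    (inc_of_mem_map hze) (inc_of_mem_map hzg) hyz
  subst h13
  generalize (ω l₁).toEmbedding.trans (lineMap l₁) = φ at *
  have tr : ∀ e f : Finset F, (∃ x ∈ e.map φ, x ∈ f.map φ) → ∃ x ∈ e, x ∈ f := by
    rintro e f ⟨x, hx, hx'⟩
    obtain ⟨y, hy, rfl⟩ := Finset.mem_map.1 hx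
    exact ⟨y, hy, (Finset.mem_map' φ).1 hx'⟩
  obtain ⟨x, hx, hx', hx''⟩ :=
    hT _ he₀ _ hf₀ _ hg₀ (tr _ _ hef) (tr _ _ hfg) (tr _ _ heg)
  exact ⟨φ x, (Finset.mem_map' φ).2 hx, (Finset.mem_map' φ).2 hx', (Finset.mem_map' φ).2 hx''⟩

open Finset in
/-- A set `S` of `2 * k * q ^ 2` points is independent for few choices of `ω`: independence forces
`ω l` to avoid the trace of `S` on `l` for each `l` separately, and for the rich lines each of these
independent events has probability at most `1 - k ^ 3 / (4096 * q)`. -/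
lemma card_bad_le {H : Finset (Finset F)} {k : ℕ} (hk : 0 < k)
    (hH : ∀ A : Finset F, k ≤ A.card →
      ((univ.filter (fun σ : Equiv.Perm F => ∀ e ∈ H, ¬ ∀ x ∈ e, σ x ∈ A)).card : ℝ) ≤
        (Fintype.card F).factorial * (1 - (k : ℝ) ^ 3 / (4096 * Fintype.card F)))
    (S : Finset (F × F × F)) (hS : S.card = 2 * k * Fintype.card F ^ 2)
    (B : Finset (F × F × F → Equiv.Perm F)) (hB : ∀ ω ∈ B, Indep (globalSystem H ω) S) :
    (B.card : ℝ) ≤ ((Fintype.card F).factorial : ℝ) ^ (Fintype.card F ^ 3) *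
      Real.exp (-((k : ℝ) ^ 3 * Fintype.card F ^ 2 / 65536)) := by
  set q := Fintype.card F with hq
  have hq0 : (0 : ℝ) < q := by exact_mod_cast Fintype.card_pos
  set A : F × F × F → Finset F := fun l => univ.filter (fun a => lineMap l a ∈ S) with hA
  have hAc : ∀ l, (A l).card = (S.filter (fun p => Inc p l)).card := by
    intro l
    rw [← Finset.card_map (lineMap l)]
    congr 1
    ext p
    simp only [hA, mem_map, mem_filter, mem_univ, true_and]
    constructor
    · rintro ⟨a, ha, rfl⟩
      exact ⟨ha, inc_lineMap l a⟩
    · rintro ⟨hp, hi⟩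
      exact ⟨p.1, by rwa [hi.lineMap_eq], hi.lineMap_eq⟩
  set R := univ.filter (fun l => k ≤ (S.filter (fun p => Inc p l)).card) with hR
  have hrich : (q : ℝ) ^ 3 / 16 ≤ R.card := many_rich_lines S k hk hS
  set p : ℝ := (k : ℝ) ^ 3 / (4096 * q) with hp
  have hp0 : 0 ≤ p := by positivity
  set N : F × F × F → Finset (Equiv.Perm F) := fun l =>
    univ.filter (fun σ : Equiv.Perm F => ∀ e ∈ H, ¬ ∀ x ∈ e, σ x ∈ A l) with hN
  have hsub : B ⊆ Fintype.piFinset N := by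
    intro ω hω
    rw [Fintype.mem_piFinset]
    intro l
    simp only [hN, mem_filter, mem_univ, true_and]
    intro e he hall
    refine hB ω hω _ (mem_globalSystem.2 ⟨l, e, he, rfl⟩) ?_
    intro y hy
    obtain ⟨x, hx, rfl⟩ := mem_map.1 hy
    have := hall x hx
    simp only [hA, mem_filter, mem_univ, true_and] at this
    exact this
  have hNl : ∀ l, ((N l).card : ℝ) ≤ (q.factorial : ℝ) * Real.exp (if l ∈ R then -p else 0) := by
    intro l
    split_ifs with hl
    · refine (hH (A l) ?_).trans (mul_le_mul_of_nonneg_left ?_ (by positivity))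
      · rw [hAc]; simpa [hR] using hl
      · have := Real.add_one_le_exp (-p); linarith
    · rw [Real.exp_zero, mul_one]
      have : (N l).card ≤ q.factorial := by
        rw [hq, ← Fintype.card_perm]; exact card_le_univ _
      exact_mod_cast this
  calc (B.card : ℝ) ≤ ((Fintype.piFinset N).card : ℝ) := by exact_mod_cast card_le_card hsub
    _ = ∏ l, ((N l).card : ℝ) := by rw [Fintype.card_piFinset]; push_cast; rfl
    _ ≤ ∏ l, ((q.factorial : ℝ) * Real.exp (if l ∈ R then -p else 0)) :=
        prod_le_prod (fun _ _ => by positivity) (fun l _ => hNl l)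
    _ = (q.factorial : ℝ) ^ (q ^ 3) * Real.exp (-(R.card * p)) := by
        rw [prod_mul_distrib, prod_const, ← Real.exp_sum]
        congr 2
        · rw [card_univ, Fintype.card_prod, Fintype.card_prod]; ring
        · rw [← sum_filter]; simp
    _ ≤ _ := by
        refine mul_le_mul_of_nonneg_left (Real.exp_le_exp.2 (neg_le_neg ?_)) (by positivity)
        calc (k : ℝ) ^ 3 * q ^ 2 / 65536 = (q : ℝ) ^ 3 / 16 * p := by
              rw [hp]; field_simp; norm_num
          _ ≤ R.card * p := mul_le_mul_of_nonneg_right hrich hp0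

open Finset in
/-- Union bound over the at most `q ^ (3 * M) = exp (6 * k * q ^ 2 * log q)` sets of
`M = 2 * k * q ^ 2` points. It beats the bound `exp (-k ^ 3 * q ^ 2 / 65536)` of `card_bad_le` as soon as
`k ^ 2 > 6 * 65536 * log q`. -/
lemma exists_global {H : Finset (Finset F)} {k : ℕ} (hk : 0 < k)
    (h3 : ∀ e ∈ H, e.card = 3) (hT : TFree H)
    (hH : ∀ A : Finset F, k ≤ A.card →
      ((univ.filter (fun σ : Equiv.Perm F => ∀ e ∈ H, ¬ ∀ x ∈ e, σ x ∈ A)).card : ℝ) ≤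
        (Fintype.card F).factorial * (1 - (k : ℝ) ^ 3 / (4096 * Fintype.card F)))
    (hlog : 393216 * Real.log (Fintype.card F) < (k : ℝ) ^ 2) :
    ∃ G : Finset (Finset (F × F × F)), (∀ e ∈ G, e.card = 3) ∧ TFree G ∧
      ∀ S : Finset (F × F × F), S.card = 2 * k * Fintype.card F ^ 2 → ¬ Indep G S := by
  classical
  by_contra hcon
  have hall : ∀ ω : F × F × F → Equiv.Perm F, ∃ S : Finset (F × F × F),
      S.card = 2 * k * Fintype.card F ^ 2 ∧ Indep (globalSystem H ω) S := by
    intro ω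
    by_contra hω
    exact hcon ⟨globalSystem H ω, global_three h3 ω, global_tfree hT ω,
      fun S hS hI => hω ⟨S, hS, hI⟩⟩
  set q := Fintype.card F with hq
  have hq0 : (0 : ℝ) < q := by exact_mod_cast Fintype.card_pos
  have hk0 : (0 : ℝ) < k := by exact_mod_cast hk
  set M := 2 * k * q ^ 2 with hM
  set 𝒮 : Finset (Finset (F × F × F)) := powersetCard M univ with h𝒮
  have h1 : (univ : Finset (F × F × F → Equiv.Perm F)) ⊆
      𝒮.biUnion (fun S => univ.filter (fun ω => Indep (globalSystem H ω) S)) := by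
    intro ω _
    obtain ⟨S, hS, hI⟩ := hall ω
    exact mem_biUnion.2 ⟨S, mem_powersetCard.2 ⟨subset_univ _, hS⟩, by simpa using hI⟩
  set Q : ℝ := (q.factorial : ℝ) ^ (q ^ 3) with hQ
  have hQ0 : 0 < Q := by positivity
  set E : ℝ := Real.exp (-((k : ℝ) ^ 3 * q ^ 2 / 65536)) with hE
  have hc3 : Fintype.card (F × F × F) = q ^ 3 := by
    rw [Fintype.card_prod, Fintype.card_prod]; ring
  have h2 : Q ≤ 𝒮.card * (Q * E) := by
    calc Q = ((univ : Finset (F × F × F → Equiv.Perm F)).card : ℝ) := by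
          rw [card_univ, Fintype.card_fun, Fintype.card_perm, hc3]; push_cast; rfl
      _ ≤ ((∑ S ∈ 𝒮, (univ.filter (fun ω => Indep (globalSystem H ω) S)).card : ℕ) : ℝ) := by
          exact_mod_cast (card_le_card h1).trans card_biUnion_le
      _ = ∑ S ∈ 𝒮, ((univ.filter (fun ω => Indep (globalSystem H ω) S)).card : ℝ) := by
          push_cast; rfl
      _ ≤ ∑ S ∈ 𝒮, Q * E := sum_le_sum fun S hS =>
          card_bad_le hk hH S (mem_powersetCard.1 hS).2 _ fun ω hω => by simpa using hω
      _ = _ := by rw [sum_const, nsmul_eq_mul]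
  have h3 : (𝒮.card : ℝ) ≤ Real.exp (M * (3 * Real.log q)) := by
    have : 𝒮.card ≤ (q ^ 3) ^ M := by
      rw [h𝒮, card_powersetCard, card_univ, hc3]; exact Nat.choose_le_pow _ _
    calc (𝒮.card : ℝ) ≤ (((q : ℝ) ^ 3) ^ M) := by exact_mod_cast this
      _ = _ := by
        rw [Real.exp_nat_mul]
        congr 1
        rw [← Real.log_rpow hq0, Real.exp_log (by positivity)]
        norm_cast
  have h4 : Real.exp (M * (3 * Real.log q)) * E < 1 := by
    rw [hE, ← Real.exp_add, ← Real.exp_zero, Real.exp_lt_exp]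
    have : (M : ℝ) = 2 * k * q ^ 2 := by rw [hM]; push_cast; rfl
    rw [this]
    have hpos : (0 : ℝ) < k * q ^ 2 := by positivity
    have := mul_lt_mul_of_pos_left hlog hpos
    nlinarith
  have h5 : (𝒮.card : ℝ) * E < 1 :=
    (mul_le_mul_of_nonneg_right h3 (Real.exp_pos _).le).trans_lt h4
  nlinarith

end Global

/-! ### Bounds on the Ramsey number -/

section Final

lemma GenTriangleFree.tFree {n : ℕ} {H : Finset (Finset (Fin n))} (h : GenTriangleFree H) :
    TFree H := by
  rintro e he f hf g hg ⟨x, hxe, hxf⟩ ⟨y, hyf, hyg⟩ ⟨z, hze, hzg⟩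
  by_contra hcon
  refine h ⟨e, he, f, hf, g, hg, ?_, ⟨x, Finset.mem_inter.2 ⟨hxe, hxf⟩⟩,
    ⟨y, Finset.mem_inter.2 ⟨hyf, hyg⟩⟩, ⟨z, Finset.mem_inter.2 ⟨hze, hzg⟩⟩⟩
  by_contra hne
  obtain ⟨w, hw⟩ := Finset.nonempty_iff_ne_empty.2 hne
  simp only [Finset.mem_inter] at hw
  exact hcon ⟨w, hw.1.1, hw.1.2, hw.2⟩

lemma TFree.genTriangleFree {n : ℕ} {H : Finset (Finset (Fin n))} (h : TFree H) :
    GenTriangleFree H := by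
  rintro ⟨e, he, f, hf, g, hg, hempty, ⟨x, hx⟩, ⟨y, hy⟩, ⟨z, hz⟩⟩
  rw [Finset.mem_inter] at hx hy hz
  obtain ⟨w, hwe, hwf, hwg⟩ := h e he f hf g hg ⟨x, hx⟩ ⟨y, hy⟩ ⟨z, hz⟩
  have : w ∈ e ∩ f ∩ g := Finset.mem_inter.2 ⟨Finset.mem_inter.2 ⟨hwe, hwf⟩, hwg⟩
  rw [hempty] at this
  exact Finset.notMem_empty w this

/-- The set of which `ramseyGenTriangle t` is the infimum. -/
def ramseySet (t : ℕ) : Set ℕ :=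
  {n : ℕ | ∀ H : Finset (Finset (Fin n)), (∀ e ∈ H, e.card = 3) →
    GenTriangleFree H → ∃ I : Finset (Fin n), I.card = t ∧ ∀ e ∈ H, ¬ e ⊆ I}

lemma mem_ramseySet {t k : ℕ} (hk : 12 * t ≤ (k + 1) ^ 2) :
    2 * t * (k + 1) + 1 ∈ ramseySet t := by
  intro H h3 hT
  by_contra hcon
  have := upper_nat (t := t) h3 hT.tFree (fun I hI => by
    by_contra hle
    obtain ⟨J, hJ, hJt⟩ := Finset.exists_subset_card_eq (not_lt.1 hle)
    exact hcon ⟨J, hJt, fun e he hsub => hI e he (hsub.trans hJ)⟩) k hk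
  rw [Fintype.card_fin] at this
  omega

/-- The infimum is attained, the set being nonempty. -/
lemma ramsey_mem (t : ℕ) : ramseyGenTriangle t ∈ ramseySet t :=
  Nat.sInf_mem (s := ramseySet t) ⟨_, mem_ramseySet (k := 12 * t) (by nlinarith)⟩

lemma ramsey_upper {t : ℕ} (ht : 1 ≤ t) :
    (ramseyGenTriangle t : ℝ) ≤ 13 * (t : ℝ) ^ ((3 : ℝ) / 2) := by
  have ht1 : (1 : ℝ) ≤ t := by exact_mod_cast ht
  set s := √(t : ℝ) with hs
  have hss : s * s = t := Real.mul_self_sqrt (by linarith)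
  have hs1 : 1 ≤ s := Real.one_le_sqrt.2 ht1
  have hpow : (t : ℝ) ^ ((3 : ℝ) / 2) = s ^ 3 := by
    rw [hs, Real.sqrt_eq_rpow, ← Real.rpow_natCast, ← Real.rpow_mul (by linarith)]
    norm_num
  set k := ⌈4 * s⌉₊ with hk
  have hk1 : 4 * s ≤ k := Nat.le_ceil _
  have hk2 : (k : ℝ) < 4 * s + 1 := Nat.ceil_lt_add_one (by linarith)
  have hmem : 12 * t ≤ (k + 1) ^ 2 := by
    have : (12 * t : ℝ) ≤ ((k : ℝ) + 1) ^ 2 := by nlinarith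
    exact_mod_cast this
  have hle : ramseyGenTriangle t ≤ 2 * t * (k + 1) + 1 := Nat.sInf_le (mem_ramseySet hmem)
  have hle' : (ramseyGenTriangle t : ℝ) ≤ 2 * t * (k + 1) + 1 := by exact_mod_cast hle
  rw [hpow]
  have h3 : (t : ℝ) * (k + 1) ≤ t * (6 * s) :=
    mul_le_mul_of_nonneg_left (by linarith) (by linarith)
  have h4 : (t : ℝ) * s = s ^ 3 := by rw [← hss]; ring
  have h5 : 1 ≤ s ^ 3 := one_le_pow₀ hs1
  nlinarith

/-- A `T`-free system without independent sets of size `M ≤ t` restricts along any embedding of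
`Fin n`, so no `n ≤ #α` has the Ramsey property. -/
lemma lt_ramsey {α : Type*} [Fintype α] [DecidableEq α] {G : Finset (Finset α)}
    (h3 : ∀ e ∈ G, e.card = 3) (hT : TFree G) {M t : ℕ}
    (hG : ∀ S : Finset α, S.card = M → ¬ Indep G S) (hMt : M ≤ t) :
    Fintype.card α < ramseyGenTriangle t := by
  by_contra hcon
  have hmem := ramsey_mem t
  set n := ramseyGenTriangle t
  obtain ⟨φ⟩ : Nonempty (Fin n ↪ α) :=
    Function.Embedding.nonempty_of_card_le (by rw [Fintype.card_fin]; exact not_lt.1 hcon)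
  obtain ⟨I, hIt, hI⟩ := hmem (Finset.univ.filter fun e => e.map φ ∈ G)
    (fun e he => by
      rw [Finset.mem_filter] at he
      rw [← Finset.card_map φ]; exact h3 _ he.2)
    (TFree.genTriangleFree (by
      intro e he f hf g hg hef hfg heg
      rw [Finset.mem_filter] at he hf hg
      have tr : ∀ e f : Finset (Fin n), (∃ x ∈ e, x ∈ f) → ∃ x ∈ e.map φ, x ∈ f.map φ :=
        fun e f ⟨x, hx, hx'⟩ => ⟨φ x, (Finset.mem_map' φ).2 hx, (Finset.mem_map' φ).2 hx'⟩
      obtain ⟨w, h1, h2, h3⟩ := hT _ he.2 _ hf.2 _ hg.2 (tr _ _ hef) (tr _ _ hfg) (tr _ _ heg)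
      obtain ⟨x, hx, rfl⟩ := Finset.mem_map.1 h1
      exact ⟨x, hx, (Finset.mem_map' φ).1 h2, (Finset.mem_map' φ).1 h3⟩))
  obtain ⟨J, hJ, hJM⟩ := Finset.exists_subset_card_eq (s := I.map φ) (n := M)
    (by rw [Finset.card_map, hIt]; exact hMt)
  refine hG J hJM fun e he hsub => ?_
  have hsub' : e ⊆ I.map φ := hsub.trans hJ
  obtain ⟨e₀, he₀, rfl⟩ := Finset.subset_map_iff.1 hsub'
  exact hI e₀ (by simpa using he) he₀

lemma one_le_ramsey {t : ℕ} (ht : 1 ≤ t) : 1 ≤ ramseyGenTriangle t := by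
  by_contra hcon
  have hmem := ramsey_mem t
  have h0 : ramseyGenTriangle t = 0 := by omega
  rw [h0] at hmem
  obtain ⟨I, hI, -⟩ := hmem ∅ (by simp) (by rintro ⟨e, he, -⟩; simp at he)
  have := Finset.card_le_univ I
  rw [Fintype.card_fin] at this
  omega

lemma cube_le_two_pow {n : ℕ} (hn : 10 ≤ n) : n ^ 3 ≤ 2 ^ n := by
  induction n, hn using Nat.le_induction with
  | base => norm_num
  | succ n hn ih =>
    rw [pow_succ 2 n]
    nlinarith [Nat.mul_le_mul hn hn, Nat.mul_le_mul (Nat.mul_le_mul hn hn) (le_refl n)]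

/-- For large primes `q`, the parameters `k` of order `√(log q)`, `2 ^ D` of order `q` and `w` of
order `q / D` meet all the requirements of the construction. The bound on `log q` ensures
`k ≤ D`. -/
lemma exists_prime_system {q : ℕ} (hq : q.Prime) (hlog : 1004004 ≤ Real.log q) :
    ∃ k : ℕ, (k : ℝ) ≤ 1001 * √(Real.log q) ∧
      ∀ t : ℕ, 2 * k * q ^ 2 ≤ t → q ^ 3 < ramseyGenTriangle t := by
  have : Fact q.Prime := ⟨hq⟩
  have hq0 : q ≠ 0 := hq.ne_zero
  set s := √(Real.log q) with hs
  have hss : s * s = Real.log q := Real.mul_self_sqrt (by linarith)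
  have hs1 : 1002 ≤ s := Real.le_sqrt_of_sq_le (by norm_num; linarith)
  set k := ⌈1000 * s⌉₊ with hk
  have hk1 : 1000 * s ≤ k := Nat.le_ceil _
  have hk2 : (k : ℝ) < 1000 * s + 1 := Nat.ceil_lt_add_one (by linarith)
  have hk1000 : 1000 ≤ k := by
    have : (1000 : ℝ) ≤ k := by linarith
    exact_mod_cast this
  set D := Nat.log 2 q - 2 with hD
  have hlt : q < 2 ^ (Nat.log 2 q + 1) := Nat.lt_pow_succ_log_self (by norm_num) q
  have hge : 2 ^ Nat.log 2 q ≤ q := Nat.pow_log_le_self 2 hq0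
  have hlog2 : Real.log q ≤ Nat.log 2 q + 1 := by
    have h1 : (q : ℝ) ≤ 2 ^ (Nat.log 2 q + 1) := by exact_mod_cast hlt.le
    have h2 := Real.log_le_log (by exact_mod_cast hq.pos) h1
    rw [Real.log_pow] at h2
    push_cast at h2
    have h3 : Real.log 2 ≤ 1 := by linarith [Real.log_two_lt_d9]
    have h4 : ((Nat.log 2 q : ℝ) + 1) * Real.log 2 ≤ (Nat.log 2 q : ℝ) + 1 :=
      mul_le_of_le_one_right (by positivity) h3
    linarith
  have hkD' : k + 2 ≤ Nat.log 2 q := by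
    have : ((k + 2 : ℕ) : ℝ) ≤ (Nat.log 2 q : ℝ) := by push_cast; nlinarith
    exact_mod_cast this
  have hl : Nat.log 2 q = D + 2 := by omega
  have hkD : k ≤ D := by omega
  rw [hl] at hlt hge
  have h1 : 4 * 2 ^ D ≤ q := by rw [pow_add] at hge; omega
  have h1' : q ≤ 8 * 2 ^ D := by
    have : 2 ^ (D + 2 + 1) = 8 * 2 ^ D := by ring
    omega
  set w := q / 2 / D with hw
  have hDpos : 0 < D := by omega
  have hw1 : D * w ≤ q / 2 := Nat.mul_div_le _ _
  have hw2 : q / 2 < D * w + D := Nat.lt_mul_div_succ _ hDpos |>.trans_eq (by ring)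
  have hD2 : D < 2 ^ D := Nat.lt_two_pow_self
  have hk3 : k ^ 3 ≤ q := by
    have : k ^ 3 ≤ D ^ 3 := Nat.pow_le_pow_left hkD 3
    have := cube_le_two_pow (n := D) (by omega)
    omega
  have hcard : Fintype.card (ZMod q) = q := ZMod.card q
  obtain ⟨H, hH3, hHT, hHA⟩ := exists_line_system (F := ZMod q) D w k (by omega) hkD
    (by rw [hcard]; exact h1) (by rw [hcard]; exact h1') (by rw [hcard]; omega)
    (by rw [hcard]; omega) (by rw [hcard]; exact hk3)
  obtain ⟨G, hG3, hGT, hGS⟩ := exists_global (F := ZMod q) (k := k) (by omega) hH3 hHT hHA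
    (by rw [hcard]; nlinarith)
  refine ⟨k, by linarith, fun t ht => ?_⟩
  have := lt_ramsey hG3 hGT hGS (t := t) (by rw [hcard]; exact ht)
  rw [Fintype.card_prod, Fintype.card_prod, hcard] at this
  calc q ^ 3 = q * (q * q) := by ring
    _ < _ := this

/-- For large `t`, Bertrand's postulate gives a prime `q` with `q ^ 2` of order `t / √(log t)` and
`2 * k * q ^ 2 ≤ t`, hence `q ^ 3` of the required order. -/
lemma ramsey_lower {t : ℕ} (ht : 3 ≤ t)
    (hbig : 2002 * (2 * Real.exp 1004004) ^ 2 ≤ √(t : ℝ)) :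
    1 / (8 * 2002 ^ ((3 : ℝ) / 2)) * (t : ℝ) ^ ((3 : ℝ) / 2) / (Real.log t) ^ ((3 : ℝ) / 4) ≤
      ramseyGenTriangle t := by
  have ht0 : (3 : ℝ) ≤ t := by exact_mod_cast ht
  set L := Real.log t with hL
  have hLpos : 0 < L := Real.log_pos (by linarith)
  set z := √(t / (2002 * √L)) with hz
  have hsL : 0 < √L := Real.sqrt_pos.2 hLpos
  have hzz : z * z = t / (2002 * √L) := Real.mul_self_sqrt (by positivity)
  have hE : 1 ≤ Real.exp 1004004 := Real.one_le_exp (by norm_num)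
  have hz2 : 2 * Real.exp 1004004 ≤ z := by
    refine Real.le_sqrt_of_sq_le ?_
    rw [le_div_iff₀ (by positivity)]
    have h1 : √L ≤ √(t : ℝ) := Real.sqrt_le_sqrt ((Real.log_le_sub_one_of_pos (by linarith)).trans
      (by linarith))
    have h2 : √(t : ℝ) * √(t : ℝ) = t := Real.mul_self_sqrt (by linarith)
    calc (2 * Real.exp 1004004) ^ 2 * (2002 * √L)
        = (2002 * (2 * Real.exp 1004004) ^ 2) * √L := by ring
      _ ≤ √(t : ℝ) * √(t : ℝ) := mul_le_mul hbig h1 hsL.le (Real.sqrt_nonneg _)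
      _ = t := h2
  set m := ⌊z / 2⌋₊ with hm
  have hm1 : (m : ℝ) ≤ z / 2 := Nat.floor_le (by linarith)
  have hm2 : z / 2 < m + 1 := Nat.lt_floor_add_one _
  have hm0 : m ≠ 0 := by
    have : 1 ≤ m := Nat.le_floor (by push_cast; linarith)
    omega
  obtain ⟨q, hqp, hmq, hq2⟩ := Nat.exists_prime_lt_and_le_two_mul m hm0
  have hqz : (q : ℝ) ≤ z := by
    have : (q : ℝ) ≤ 2 * m := by exact_mod_cast hq2
    linarith
  have hqz' : z / 2 ≤ q := by
    have : (m : ℝ) + 1 ≤ q := by exact_mod_cast hmq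
    linarith
  have hq0 : (0 : ℝ) < q := by exact_mod_cast hqp.pos
  have hlogq : 1004004 ≤ Real.log q := by
    rw [Real.le_log_iff_exp_le hq0]; linarith
  obtain ⟨k, hk, hkt⟩ := exists_prime_system hqp hlogq
  have hqq : (q : ℝ) ^ 2 ≤ z * z := by nlinarith
  have hMt : 2 * (k : ℝ) * q ^ 2 ≤ t := by
    have hzt : z * z ≤ t := by
      rw [hzz]
      refine div_le_self (by linarith) ?_
      have : 1 ≤ √L := by
        refine Real.one_le_sqrt.2 ?_
        rw [hL, Real.le_log_iff_exp_le (by linarith)]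
        linarith [Real.exp_one_lt_d9]
      linarith
    have hqt : (q : ℝ) ≤ t := by
      have : (1 : ℝ) ≤ q := by exact_mod_cast hqp.one_lt.le
      nlinarith
    have hsl : √(Real.log q) ≤ √L := Real.sqrt_le_sqrt (Real.log_le_log hq0 hqt)
    calc 2 * (k : ℝ) * q ^ 2 ≤ 2 * (1001 * √L) * (z * z) := by gcongr; linarith
      _ = t := by rw [hzz]; field_simp; norm_num
  have hr : q ^ 3 < ramseyGenTriangle t := hkt t (by exact_mod_cast hMt)
  have hz3 : z ^ 3 = (t : ℝ) ^ ((3 : ℝ) / 2) / (2002 ^ ((3 : ℝ) / 2) * L ^ ((3 : ℝ) / 4)) := by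
    rw [hz, Real.sqrt_eq_rpow, ← Real.rpow_natCast, ← Real.rpow_mul (by positivity),
      Real.div_rpow (by linarith) (by positivity), Real.mul_rpow (by norm_num) hsL.le,
      Real.sqrt_eq_rpow, ← Real.rpow_mul hLpos.le]
    norm_num
  calc _ = (z / 2) ^ 3 := by rw [div_pow, hz3]; field_simp; norm_num
    _ ≤ (q : ℝ) ^ 3 := by gcongr
    _ ≤ ramseyGenTriangle t := by exact_mod_cast hr.le

end Final

/-- There are absolute constants `c₁, c₂ > 0` such that for all `t ≥ 3`,
`c₁·t^{3/2}/(log t)^{3/4} ≤ r(T,t) ≤ c₂·t^{3/2}`. -/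
theorem ramsey_generalized_triangle :
    ∃ c₁ c₂ : ℝ, 0 < c₁ ∧ 0 < c₂ ∧ ∀ t : ℕ, 3 ≤ t →
      c₁ * (t : ℝ) ^ ((3 : ℝ) / 2) / (Real.log t) ^ ((3 : ℝ) / 4)
          ≤ (ramseyGenTriangle t : ℝ) ∧
        (ramseyGenTriangle t : ℝ) ≤ c₂ * (t : ℝ) ^ ((3 : ℝ) / 2) := by
  set B : ℝ := 2002 * (2 * Real.exp 1004004) ^ 2 with hB
  have hBpos : 0 < B := by positivity
  refine ⟨min (1 / (8 * 2002 ^ ((3 : ℝ) / 2))) (1 / B ^ 3), 13,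
    lt_min (by positivity) (by positivity), by norm_num, fun t ht => ⟨?_, ramsey_upper (by omega)⟩⟩
  have ht0 : (3 : ℝ) ≤ t := by exact_mod_cast ht
  have hL1 : 1 ≤ Real.log t := by
    rw [Real.le_log_iff_exp_le (by linarith)]
    linarith [Real.exp_one_lt_d9]
  -- for small `t` the trivial bound `1 ≤ r(T,t)` suffices, by the choice of `c₁`
  by_cases hbig : B ≤ √(t : ℝ)
  · refine le_trans ?_ (ramsey_lower ht hbig)
    gcongr
    exact min_le_left _ _
  · have hpow : (t : ℝ) ^ ((3 : ℝ) / 2) = √(t : ℝ) ^ 3 := by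
      rw [Real.sqrt_eq_rpow, ← Real.rpow_natCast, ← Real.rpow_mul (by linarith)]
      norm_num
    have hr : (1 : ℝ) ≤ ramseyGenTriangle t := by exact_mod_cast one_le_ramsey (by omega)
    refine le_trans ?_ hr
    refine (div_le_self (by positivity) (Real.one_le_rpow hL1 (by norm_num))).trans ?_
    calc _ ≤ 1 / B ^ 3 * B ^ 3 := by
          rw [hpow]
          exact mul_le_mul (min_le_right _ _)
            (pow_le_pow_left₀ (Real.sqrt_nonneg _) (not_le.1 hbig).le 3)
            (by positivity) (by positivity)
      _ = 1 := by field_simp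
end
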